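/- arXiv:1211.1811 — 9 statements merged into one kernel-verified Lean document; each statement's English description precedes it below -/
import Mathlib

section
/- (Splitting Lemma / Refined Morse Lemma, corank-one case.) Let U ⊂ ℝⁿ be an open neighborhood of 0 and f : U → ℝ a smooth (C^∞) function such that 0 is an isolated local minimum of f, f(0) = 0, df(0) = 0, and the kernel of the Hessian d²f(0) is one-dimensional. Then there exist an open neighborhood V ⊂ ℝⁿ of 0, a smooth map φ : V → U with φ(0) = 0 which is a diffeomorphism onto an open neighborhood of 0 in U, and a smooth function g : ℝ → ℝ with g ≥ 0 and g(z) = O(z⁴) as z → 0, such that f(φ(x₁,…,xₙ)) = x₁² + ⋯ + x_{n−1}² + g(xₙ) for all (x₁,…,xₙ) ∈ V. -/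
open Set Asymptotics Filter
open scoped ContDiff Topology

theorem contDiff_param_aux {X : Type} [NormedAddCommGroup X] [NormedSpace ℝ X]
    [FiniteDimensional ℝ X] (k : ℕ) : ∀ {Z : Type} [NormedAddCommGroup Z] [NormedSpace ℝ Z]
    (K : X × ℝ → Z) (_ : ContDiff ℝ k K),
    ContDiff ℝ k (fun x => ∫ s in (0:ℝ)..1, K (x, s)) := by
  induction k with
  | zero =>
    intro Z _ _ K hK
    have hc : Continuous K := hK.continuous
    rw [Nat.cast_zero, contDiff_zero]
    exact intervalIntegral.continuous_parametric_intervalIntegral_of_continuous' (f := fun x s => K (x, s)) hc 0 1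
  | succ k ih =>
    intro Z _ _ K hK
    have hc : Continuous K := hK.continuous
    have hd : ∀ p, DifferentiableAt ℝ K p := fun p =>
      (hK.differentiable (by simp)).differentiableAt
    let K' : X × ℝ → (X →L[ℝ] Z) := fun p => (fderiv ℝ K p).comp (ContinuousLinearMap.inl ℝ X ℝ)
    have hK' : ContDiff ℝ k K' := by
      have : ContDiff ℝ k (fderiv ℝ K) := hK.fderiv_right (by simp)
      exact this.clm_comp contDiff_const
    have hder : ∀ x s, HasFDerivAt (fun x => K (x, s)) (K' (x, s)) x := by
      intro x s
      exact (hd (x, s)).hasFDerivAt.comp x (hasFDerivAt_prodMk_left x s)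
    push_cast
    rw [contDiff_succ_iff_hasFDerivAt]
    refine ⟨fun x => ∫ s in (0:ℝ)..1, K' (x, s), by exact_mod_cast ih K' hK', fun x₀ => ?_⟩
    obtain ⟨C, hC⟩ := ((isCompact_closedBall x₀ 1).prod (isCompact_Icc (a := (0:ℝ)) (b := 1))).exists_bound_of_continuousOn hK'.continuous.continuousOn
    refine intervalIntegral.hasFDerivAt_integral_of_dominated_of_fderiv_le
      (F := fun x s => K (x, s)) (F' := fun x s => K' (x, s)) (bound := fun _ => C)
      (Metric.closedBall_mem_nhds x₀ one_pos) ?_ ?_ ?_ ?_ ?_ ?_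
    · exact Eventually.of_forall fun x => (hc.comp (by fun_prop : Continuous fun s : ℝ => (x, s))).aestronglyMeasurable
    · exact (hc.comp (by fun_prop : Continuous fun s : ℝ => (x₀, s))).intervalIntegrable _ _
    · exact (hK'.continuous.comp (by fun_prop : Continuous fun s : ℝ => (x₀, s))).aestronglyMeasurable
    · refine Eventually.of_forall fun s hs x hx => hC (x, s) ⟨hx, ?_⟩
      rw [uIoc_of_le zero_le_one] at hs
      exact ⟨hs.1.le, hs.2⟩
    · exact intervalIntegrable_const
    · exact Eventually.of_forall fun s hs x hx => hder x s

theorem contDiff_param {X : Type} [NormedAddCommGroup X] [NormedSpace ℝ X]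
    [FiniteDimensional ℝ X] {Z : Type} [NormedAddCommGroup Z] [NormedSpace ℝ Z]
    (K : X × ℝ → Z) (hK : ContDiff ℝ ∞ K) :
    ContDiff ℝ ∞ (fun x => ∫ s in (0:ℝ)..1, K (x, s)) := by
  rw [contDiff_infty] at hK ⊢
  exact fun k => contDiff_param_aux k K (hK k)

theorem inv_fun {E : Type} [NormedAddCommGroup E] [NormedSpace ℝ E] [CompleteSpace E]
    (Φ : E → E) (W : Set E) (hW : IsOpen W) (a : E) (ha : a ∈ W) (hΦ : ContDiffOn ℝ ∞ Φ W)
    (e : E ≃L[ℝ] E) (he : HasFDerivAt Φ (e : E →L[ℝ] E) a) :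
    ∃ P : OpenPartialHomeomorph E E, a ∈ P.source ∧ (∀ x, P x = Φ x) ∧ P.source ⊆ W ∧
      ContDiffOn ℝ ∞ P.symm P.target := by
  have hat : ContDiffAt ℝ ∞ Φ a := hΦ.contDiffAt (hW.mem_nhds ha)
  let P₀ := hat.toOpenPartialHomeomorph Φ he (by simp)
  have hfc : ContinuousOn (fderiv ℝ Φ) W := hΦ.continuousOn_fderiv_of_isOpen hW (by simp)
  have hopen : IsOpen (W ∩ (fderiv ℝ Φ) ⁻¹' (range ((↑) : (E ≃L[ℝ] E) → (E →L[ℝ] E)))) :=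
    hfc.isOpen_inter_preimage hW (ContinuousLinearEquiv.isOpen)
  set W' := W ∩ (fderiv ℝ Φ) ⁻¹' (range ((↑) : (E ≃L[ℝ] E) → (E →L[ℝ] E)))
  refine ⟨P₀.restrOpen W' hopen, ?_, fun x => rfl, ?_, ?_⟩
  · rw [OpenPartialHomeomorph.restrOpen_source]
    exact ⟨hat.mem_toOpenPartialHomeomorph_source he (by simp), ha, e, he.fderiv.symm⟩
  · rw [OpenPartialHomeomorph.restrOpen_source]
    exact fun x hx => hx.2.1
  · intro y hy
    have hx := (P₀.restrOpen W' hopen).map_target hy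
    rw [OpenPartialHomeomorph.restrOpen_source] at hx
    obtain ⟨-, hxW, e', he'⟩ := hx
    refine (OpenPartialHomeomorph.contDiffAt_symm _ hy (f₀' := e') ?_ ?_).contDiffWithinAt
    · rw [he']
      exact ((hΦ.contDiffAt (hW.mem_nhds hxW)).differentiableAt (by simp)).hasFDerivAt
    · exact hΦ.contDiffAt (hW.mem_nhds hxW)

theorem taylor4 (k : ℝ → ℝ) (hk : ContDiff ℝ ∞ k) (h0 : k 0 = 0) (h1 : deriv k 0 = 0)
    (hpos : ∀ᶠ t in 𝓝 (0:ℝ), 0 ≤ k t) :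
    0 ≤ deriv (deriv k) 0 ∧ (deriv (deriv k) 0 = 0 → k =O[𝓝 0] (fun z : ℝ => z ^ 4)) := by
  obtain ⟨c3, c4, h⟩ : ∃ c3 c4 : ℝ, (fun t => k t - (deriv (deriv k) 0 / 2 * t ^ 2 + c3 * t ^ 3 + c4 * t ^ 4)) =o[𝓝 0] (fun t : ℝ => t ^ 4) := by
    have := taylor_isLittleO_univ (x₀ := 0) (n := 4) (contDiff_infty.1 hk 4)
    simp only [taylorWithinEval_succ, taylor_within_zero_eval, iteratedDerivWithin_univ, h0, iteratedDeriv_succ, iteratedDeriv_zero, sub_zero, h1] at this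
    refine ⟨deriv (deriv (deriv k)) 0 / 6, deriv (deriv (deriv (deriv k))) 0 / 24, this.congr_left fun t => ?_⟩
    simp [Nat.factorial]
    ring
  have h3 : (fun t => k t - (deriv (deriv k) 0 / 2 * t ^ 2 + c3 * t ^ 3)) =O[𝓝 0] (fun t : ℝ => t ^ 4) := by
    have h' : (fun t : ℝ => c4 * t ^ 4) =O[𝓝 0] (fun t : ℝ => t ^ 4) := (isBigO_refl _ _).const_mul_left _
    exact (h.isBigO.add h').congr_left fun t => by ring
  have hlim : ∀ (m : ℕ) (r : ℝ → ℝ), m < 4 → r =O[𝓝 0] (fun t : ℝ => t ^ 4) → Tendsto (fun t => r t / t ^ m) (𝓝 0) (𝓝 0) := by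
    intro m r hm hr
    exact (hr.trans_isLittleO (isLittleO_pow_pow hm)).tendsto_div_nhds_zero
  constructor
  · have hl := (hlim 2 _ (by norm_num) h3).mono_left (nhdsWithin_le_nhds (s := Ioi 0))
    have hl2 : Tendsto (fun t : ℝ => deriv (deriv k) 0 / 2 + c3 * t) (𝓝[>] 0) (𝓝 (deriv (deriv k) 0 / 2 + c3 * 0)) :=
      (Continuous.tendsto (by fun_prop) 0).mono_left nhdsWithin_le_nhds
    have hl3 := hl.add hl2
    have : 0 ≤ 0 + (deriv (deriv k) 0 / 2 + c3 * 0) := by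
      refine ge_of_tendsto hl3 ?_
      filter_upwards [self_mem_nhdsWithin, nhdsWithin_le_nhds hpos] with t ht hkt
      have ht : 0 < t := ht
      have : (k t - (deriv (deriv k) 0 / 2 * t ^ 2 + c3 * t ^ 3)) / t ^ 2 + (deriv (deriv k) 0 / 2 + c3 * t) = k t / t ^ 2 := by
        field_simp; ring
      rw [this]; positivity
    linarith
  · intro h2
    rw [h2] at h3
    have hl := hlim 3 _ (by norm_num) h3
    have e : ∀ t : ℝ, t ≠ 0 → (k t - (0 / 2 * t ^ 2 + c3 * t ^ 3)) / t ^ 3 = k t / t ^ 3 - c3 := by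
      intro t ht; field_simp; ring
    have a1 : 0 ≤ 0 + c3 := by
      refine ge_of_tendsto ((hl.mono_left (nhdsWithin_le_nhds (s := Ioi 0))).add tendsto_const_nhds) ?_
      filter_upwards [self_mem_nhdsWithin, nhdsWithin_le_nhds hpos] with t ht hkt
      have ht : 0 < t := ht
      rw [e t ht.ne']
      have : 0 ≤ k t / t ^ 3 := by positivity
      linarith
    have a2 : 0 + c3 ≤ 0 := by
      refine le_of_tendsto ((hl.mono_left (nhdsWithin_le_nhds (s := Iio 0))).add tendsto_const_nhds) ?_
      filter_upwards [self_mem_nhdsWithin, nhdsWithin_le_nhds hpos] with t ht hkt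
      have ht : t < 0 := ht
      rw [e t ht.ne]
      have : k t / t ^ 3 ≤ 0 := div_nonpos_of_nonneg_of_nonpos hkt (by
        have := pow_pos (neg_pos.2 ht) 3
        nlinarith)
      linarith
    have : c3 = 0 := by linarith
    subst this
    exact h3.congr_left fun t => by ring

theorem sqrt_local (R : Type) [NormedRing R] [NormedAlgebra ℝ R] [CompleteSpace R] :
    ∃ P : OpenPartialHomeomorph R R,
      1 ∈ P.source ∧ (∀ x, P x = x * x) ∧ ContDiffOn ℝ ∞ P.symm P.target := by
  have hd : HasFDerivAt (fun x : R => x * x)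
      ((ContinuousLinearEquiv.smulLeft (Units.mk0 (2:ℝ) two_ne_zero) : R ≃L[ℝ] R) : R →L[ℝ] R) 1 := by
    have := (hasFDerivAt_id (𝕜 := ℝ) (1 : R)).mul' (hasFDerivAt_id (𝕜 := ℝ) (1 : R))
    refine this.congr_fderiv ?_
    ext x
    simp [two_smul, Units.smul_def]
  obtain ⟨P, h1, h2, h3, h4⟩ := inv_fun (fun x : R => x * x) univ isOpen_univ 1 (mem_univ _)
    (contDiff_id.mul contDiff_id).contDiffOn _ hd
  exact ⟨P, h1, h2, h4⟩

theorem cutoff {X : Type} [NormedAddCommGroup X] [InnerProductSpace ℝ X] [FiniteDimensional ℝ X]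
    (N : Set X) (hN : N ∈ 𝓝 (0 : X)) : ∃ χ : X → ℝ, ContDiff ℝ ∞ χ ∧ (∀ x, 0 ≤ χ x) ∧
      (∀ᶠ x in 𝓝 0, χ x = 1) ∧ (∀ x, x ∉ N → χ x = 0) ∧
      ∀ {Z : Type} [NormedAddCommGroup Z] [NormedSpace ℝ Z] (u : X → Z), IsOpen N →
        ContDiffOn ℝ ∞ u N → ContDiff ℝ ∞ (fun x => χ x • u x) := by
  obtain ⟨ε, hε, hb⟩ := Metric.nhds_basis_closedBall.mem_iff.1 hN
  let χ : ContDiffBump (0 : X) := ⟨ε / 2, ε, by positivity, by linarith⟩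
  have hts : tsupport χ ⊆ N := by rw [χ.tsupport_eq]; exact hb
  refine ⟨χ, χ.contDiff, fun x => χ.nonneg, χ.eventuallyEq_one, ?_, ?_⟩
  · intro x hx
    by_contra h
    exact hx (hts (subset_tsupport _ h))
  · intro Z _ _ u hNo hu
    rw [contDiff_iff_contDiffAt]
    intro x
    by_cases hx : x ∈ tsupport χ
    · exact χ.contDiff.contDiffAt.smul (hu.contDiffAt (hNo.mem_nhds (hts hx)))
    · have : (fun x => χ x • u x) =ᶠ[𝓝 x] fun _ => 0 := by
        filter_upwards [(isClosed_tsupport χ).isOpen_compl.mem_nhds hx] with y hy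
        rw [image_eq_zero_of_notMem_tsupport hy, zero_smul]
      exact contDiffAt_const.congr_of_eventuallyEq this

noncomputable section

variable {Y : Type} [NormedAddCommGroup Y] [InnerProductSpace ℝ Y] [FiniteDimensional ℝ Y]

/-- partial gradient -/
def pgrad (F : Y × ℝ → ℝ) (p : Y × ℝ) : Y :=
  (InnerProductSpace.toDual ℝ Y).symm ((fderiv ℝ F p).comp (ContinuousLinearMap.inl ℝ Y ℝ))

/-- partial Hessian -/
def phess (F : Y × ℝ → ℝ) (p : Y × ℝ) : Y →L[ℝ] Y :=
  (fderiv ℝ (pgrad F) p).comp (ContinuousLinearMap.inl ℝ Y ℝ)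

theorem inner_pgrad (F : Y × ℝ → ℝ) (p : Y × ℝ) (w : Y) :
    inner ℝ (pgrad F p) w = fderiv ℝ F p (w, 0) := by
  simp [pgrad]

theorem contDiff_pgrad {F : Y × ℝ → ℝ} (hF : ContDiff ℝ ∞ F) : ContDiff ℝ ∞ (pgrad F) := by
  have h1 : ContDiff ℝ ∞ (fderiv ℝ F) := hF.fderiv_right (by simp)
  exact (InnerProductSpace.toDual ℝ Y).symm.toContinuousLinearEquiv.contDiff.comp
    (h1.clm_comp contDiff_const)

theorem contDiff_phess {F : Y × ℝ → ℝ} (hF : ContDiff ℝ ∞ F) : ContDiff ℝ ∞ (phess F) := by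
  have h1 : ContDiff ℝ ∞ (fderiv ℝ (pgrad F)) := (contDiff_pgrad hF).fderiv_right (by simp)
  exact h1.clm_comp contDiff_const

theorem inner_fderiv_pgrad {F : Y × ℝ → ℝ} (hF : ContDiff ℝ ∞ F) (p q : Y × ℝ) (w : Y) :
    inner ℝ (fderiv ℝ (pgrad F) p q) w = fderiv ℝ (fderiv ℝ F) p q (w, 0) := by
  have h1 : HasFDerivAt (fderiv ℝ F) (fderiv ℝ (fderiv ℝ F) p) p :=
    ((hF.fderiv_right (m := ∞) (by simp)).differentiable (by simp) p).hasFDerivAt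
  have h2 : HasFDerivAt (pgrad F) (fderiv ℝ (pgrad F) p) p :=
    ((contDiff_pgrad hF).differentiable (by simp) p).hasFDerivAt
  have h3 := h2.inner ℝ (hasFDerivAt_const w p)
  have h4 := h1.clm_apply (hasFDerivAt_const ((w, 0) : Y × ℝ) p)
  simp only [inner_pgrad] at h3
  have := congrArg (fun L => L q) (h3.unique h4)
  simpa using this

/-- the averaged Hessian -/
def avgHess (F : Y × ℝ → ℝ) (h : ℝ → Y) (p : Y × ℝ) : Y →L[ℝ] Y :=
  ∫ s in (0:ℝ)..1, (1 - s) • phess F (h p.2 + s • p.1, p.2)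

theorem contDiff_avgHess {F : Y × ℝ → ℝ} (hF : ContDiff ℝ ∞ F) {h : ℝ → Y} (hh : ContDiff ℝ ∞ h) :
    ContDiff ℝ ∞ (avgHess F h) := by
  have := contDiff_phess hF
  exact contDiff_param (X := Y × ℝ) (fun x => (1 - x.2) • phess F (h x.1.2 + x.2 • x.1.1, x.1.2))
    (by fun_prop)

theorem inner_avgHess {F : Y × ℝ → ℝ} (hF : ContDiff ℝ ∞ F) (h : ℝ → Y) (p : Y × ℝ) (u w : Y) :
    inner ℝ (avgHess F h p u) w = ∫ s in (0:ℝ)..1,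
      (1 - s) * fderiv ℝ (fderiv ℝ F) (h p.2 + s • p.1, p.2) (u, 0) (w, 0) := by
  have hc : Continuous fun s : ℝ => (1 - s) • phess F (h p.2 + s • p.1, p.2) := by
    have := (contDiff_phess hF).continuous
    fun_prop
  let L : (Y →L[ℝ] Y) →L[ℝ] ℝ := (innerSL ℝ w).comp (ContinuousLinearMap.apply ℝ Y u)
  have := L.intervalIntegral_comp_comm (hc.intervalIntegrable (μ := MeasureTheory.volume) 0 1)
  have h2 : inner ℝ (avgHess F h p u) w = L (avgHess F h p) := by
    simp [L, real_inner_comm]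
  rw [h2, avgHess, ← this]
  congr 1
  ext s
  simp only [L, ← inner_fderiv_pgrad hF]
  simp [phess, real_inner_comm]

theorem star_avgHess {F : Y × ℝ → ℝ} (hF : ContDiff ℝ ∞ F) (h : ℝ → Y) (p : Y × ℝ) :
    star (avgHess F h p) = avgHess F h p := by
  refine (ContinuousLinearMap.isSelfAdjoint_iff_isSymmetric.2 ?_).star_eq
  intro u w
  simp only [ContinuousLinearMap.coe_coe]
  rw [inner_avgHess hF, real_inner_comm, inner_avgHess hF]
  congr 1
  ext s
  congr 1
  have : IsSymmSndFDerivAt ℝ F (h p.2 + s • p.1, p.2) :=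
    (contDiff_infty.1 hF 2).contDiffAt.isSymmSndFDerivAt (by simp)
  exact this _ _

theorem taylor_avgHess {F : Y × ℝ → ℝ} (hF : ContDiff ℝ ∞ F) (h : ℝ → Y) (p : Y × ℝ) :
    F (h p.2 + p.1, p.2) = F (h p.2, p.2) + inner ℝ (pgrad F (h p.2, p.2)) p.1 +
      inner ℝ (avgHess F h p p.1) p.1 := by
  obtain ⟨y, t⟩ := p
  simp only
  rw [inner_avgHess hF, inner_pgrad]
  simp only
  have hF1 : ContDiff ℝ ∞ (fderiv ℝ F) := hF.fderiv_right (by simp)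
  have hF2 := hF1.continuous_fderiv (by simp)
  let c : ℝ → Y × ℝ := fun s => (h t + s • y, t)
  have hc : ∀ s, HasDerivAt c (y, 0) s := by
    intro s
    refine HasDerivAt.prodMk ?_ (hasDerivAt_const _ _)
    simpa using ((hasDerivAt_id s).smul_const y).const_add (h t)
  have hcc : Continuous c := by fun_prop
  have hk : ∀ s, HasDerivAt (fun s => F (c s)) (fderiv ℝ F (c s) (y, 0)) s := fun s =>
    ((hF.differentiable (by simp) (c s)).hasFDerivAt).comp_hasDerivAt s (hc s)
  have hk' : ∀ s, HasDerivAt (fun s => fderiv ℝ F (c s) (y, 0))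
      (fderiv ℝ (fderiv ℝ F) (c s) (y, 0) (y, 0)) s := fun s => by
    have := ((hF1.differentiable (by simp) (c s)).hasFDerivAt).comp_hasDerivAt s (hc s)
    simpa using this.clm_apply (hasDerivAt_const s ((y, 0) : Y × ℝ))
  have hm : ∀ s ∈ uIcc (0:ℝ) 1, HasDerivAt (fun s => (1 - s) * fderiv ℝ F (c s) (y, 0) + F (c s))
      ((1 - s) * fderiv ℝ (fderiv ℝ F) (c s) (y, 0) (y, 0)) s := fun s _ => by
    have := (((hasDerivAt_id s).const_sub 1).mul (hk' s)).add (hk s)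
    refine this.congr_deriv ?_
    simp
  have hi := intervalIntegral.integral_eq_sub_of_hasDerivAt hm (by
    refine Continuous.intervalIntegrable ?_ _ _
    fun_prop)
  simp only [c] at hi
  rw [hi]
  simp
  ring

end

theorem core_crit {Y : Type} [NormedAddCommGroup Y] [InnerProductSpace ℝ Y] [FiniteDimensional ℝ Y]
    (F : Y × ℝ → ℝ) (hF : ContDiff ℝ ∞ F) (hd : fderiv ℝ F 0 = 0)
    (hH : ∀ q w, fderiv ℝ (fderiv ℝ F) 0 q (w, 0) = 2 * inner ℝ q.1 w) :
    ∃ h : ℝ → Y, ContDiff ℝ ∞ h ∧ h 0 = 0 ∧ ∀ᶠ t in 𝓝 (0:ℝ), pgrad F (h t, t) = 0 := by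
  have hγ := contDiff_pgrad hF
  have hγ0 : pgrad F 0 = 0 := by simp [pgrad, hd]
  have hγ1 : HasFDerivAt (pgrad F) ((2:ℝ) • ContinuousLinearMap.fst ℝ Y ℝ) 0 := by
    refine ((hγ.differentiable (by simp) 0).hasFDerivAt).congr_fderiv ?_
    refine ContinuousLinearMap.ext fun q => ext_inner_right ℝ fun w => ?_
    rw [inner_fderiv_pgrad hF, hH]
    simp [real_inner_smul_left]
  obtain ⟨P, h1, h2, -, h4⟩ := inv_fun (fun p : Y × ℝ => ((1/2:ℝ) • pgrad F p, p.2)) univ isOpen_univ 0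
    (mem_univ _) (by fun_prop) (ContinuousLinearEquiv.refl ℝ (Y × ℝ)) (by
      have := (hγ1.const_smul (1/2:ℝ)).prodMk (hasFDerivAt_snd (𝕜 := ℝ) (E := Y) (F := ℝ) (p := 0))
      refine this.congr_fderiv ?_
      refine ContinuousLinearMap.ext fun q => ?_
      simp [smul_smul])
  have hP0 : P 0 = 0 := by rw [h2, hγ0]; simp
  have hS0 : P.symm 0 = 0 := by
    have := P.left_inv h1
    rwa [hP0] at this
  have ht0 : (0 : Y × ℝ) ∈ P.target := by rw [← hP0]; exact P.map_source h1
  have hci : Continuous fun t : ℝ => ((0:Y), t) := by fun_prop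
  have hNo : IsOpen ((fun t : ℝ => ((0:Y), t)) ⁻¹' P.target) := P.open_target.preimage hci
  have hN0 : (fun t : ℝ => ((0:Y), t)) ⁻¹' P.target ∈ 𝓝 (0:ℝ) := hNo.mem_nhds ht0
  obtain ⟨χ, -, -, hχ1, -, hχ⟩ := cutoff _ hN0
  have hsm : ContDiffOn ℝ ∞ (fun t : ℝ => (P.symm (0, t)).1) ((fun t : ℝ => ((0:Y), t)) ⁻¹' P.target) :=
    contDiff_fst.comp_contDiffOn (h4.comp (by fun_prop) (fun t ht => ht))
  refine ⟨_, hχ _ hNo hsm, ?_, ?_⟩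
  · change χ 0 • (P.symm 0).1 = 0
    rw [hS0]; simp
  · filter_upwards [hχ1, hN0] with t ht1 ht2
    have e := P.right_inv ht2
    rw [h2] at e
    have e1 : (1/2:ℝ) • pgrad F (P.symm (0, t)) = 0 := congrArg Prod.fst e
    have e2 : (P.symm (0, t)).2 = t := congrArg Prod.snd e
    have e3 : pgrad F (P.symm (0, t)) = 0 := by simpa using e1
    rw [ht1, one_smul]
    convert e3 using 2
    exact Prod.ext rfl e2.symm

theorem core_sqrt {Y : Type} [NormedAddCommGroup Y] [InnerProductSpace ℝ Y] [FiniteDimensional ℝ Y]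
    {X : Type} [NormedAddCommGroup X] [NormedSpace ℝ X]
    (M : X → (Y →L[ℝ] Y)) (hM : ContDiff ℝ ∞ M) (hs : ∀ p, star (M p) = M p) (h0 : M 0 = 1) :
    ∃ (Q : X → (Y →L[ℝ] Y)) (W : Set X), IsOpen W ∧ 0 ∈ W ∧ ContDiffOn ℝ ∞ Q W ∧ Q 0 = 1 ∧
      ∀ p ∈ W, ∀ y, inner ℝ (M p y) y = ‖Q p y‖ ^ 2 := by
  obtain ⟨P, h1, h2, h4⟩ := sqrt_local (Y →L[ℝ] Y)
  have hP1 : P 1 = 1 := by rw [h2, one_mul]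
  have hQ0 : P.symm (M 0) = 1 := by rw [h0, ← hP1, P.left_inv h1, hP1]
  have ht : M 0 ∈ P.target := by rw [h0, ← hP1]; exact P.map_source h1
  have hW0 : IsOpen (M ⁻¹' P.target) := P.open_target.preimage hM.continuous
  have hQ : ContDiffOn ℝ ∞ (fun p => P.symm (M p)) (M ⁻¹' P.target) :=
    h4.comp hM.contDiffOn (fun p hp => hp)
  have hsQ : ContinuousOn (fun p => star (P.symm (M p))) (M ⁻¹' P.target) :=
    hQ.continuousOn.star
  refine ⟨fun p => P.symm (M p), M ⁻¹' P.target ∩ (fun p => star (P.symm (M p))) ⁻¹' P.source,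
    hsQ.isOpen_inter_preimage hW0 P.open_source, ⟨ht, ?_⟩, hQ.mono inter_subset_left, hQ0, ?_⟩
  · change star (P.symm (M 0)) ∈ P.source
    rw [hQ0, star_one]; exact h1
  · rintro p ⟨hp1, hp2⟩ y
    have hp1 : M p ∈ P.target := hp1
    have hp2 : star (P.symm (M p)) ∈ P.source := hp2
    have e : P.symm (M p) * P.symm (M p) = M p := by rw [← h2, P.right_inv hp1]
    have hsa : star (P.symm (M p)) = P.symm (M p) := by
      apply P.injOn hp2 (P.map_target hp1)
      rw [h2, h2, ← star_mul, e, hs]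
    rw [← real_inner_self_eq_norm_sq]
    conv_lhs => rw [← e]
    have := ContinuousLinearMap.adjoint_inner_left (P.symm (M p)) y (P.symm (M p) y)
    rw [← ContinuousLinearMap.star_eq_adjoint, hsa] at this
    exact this

theorem core {Y : Type} [NormedAddCommGroup Y] [InnerProductSpace ℝ Y] [FiniteDimensional ℝ Y]
    (F : Y × ℝ → ℝ) (hF : ContDiff ℝ ∞ F) (hd : fderiv ℝ F 0 = 0)
    (hH : ∀ q w, fderiv ℝ (fderiv ℝ F) 0 q (w, 0) = 2 * inner ℝ q.1 w)
    (hpos : ∀ᶠ p in 𝓝 0, 0 ≤ F p) (h4 : (fun t => F (0, t)) =O[𝓝 0] (fun t : ℝ => t ^ 4))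
    (N : Set (Y × ℝ)) (hN : N ∈ 𝓝 0) :
    ∃ (P : OpenPartialHomeomorph (Y × ℝ) (Y × ℝ)) (g : ℝ → ℝ), 0 ∈ P.source ∧ P 0 = 0 ∧
      P.source ⊆ N ∧ ContDiffOn ℝ ∞ P P.source ∧ ContDiffOn ℝ ∞ P.symm P.target ∧
      ContDiff ℝ ∞ g ∧ (∀ z, 0 ≤ g z) ∧ g =O[𝓝 0] (fun t : ℝ => t ^ 4) ∧
      ∀ p ∈ P.source, F p = ‖(P p).1‖ ^ 2 + g (P p).2 := by
  obtain ⟨h, hh, hh0, hcrit⟩ := core_crit F hF hd hH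
  have hM0 : avgHess F h 0 = 1 := by
    refine ContinuousLinearMap.ext fun u => ext_inner_right ℝ fun w => ?_
    rw [inner_avgHess hF]
    have : ∀ s : ℝ, (h (0 : Y × ℝ).2 + s • (0 : Y × ℝ).1, (0 : Y × ℝ).2) = (0 : Y × ℝ) := by
      intro s; simp [hh0]
    simp only [this, hH]
    rw [intervalIntegral.integral_mul_const, intervalIntegral.integral_sub (by simp) (by simp)]
    simp
    ring
  obtain ⟨Q, W, hW, h0W, hQ, hQ0, hQW⟩ := core_sqrt (avgHess F h) (contDiff_avgHess hF hh)
    (star_avgHess hF h) hM0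
  -- the shift
  let Sh : (Y × ℝ) ≃ₜ (Y × ℝ) :=
    { toFun := fun p => (p.1 - h p.2, p.2)
      invFun := fun p => (h p.2 + p.1, p.2)
      left_inv := fun p => by simp
      right_inv := fun p => by simp
      continuous_toFun := by have := hh.continuous; fun_prop
      continuous_invFun := by have := hh.continuous; fun_prop }
  have hShc : ContDiff ℝ ∞ Sh := by
    change ContDiff ℝ ∞ (fun p : Y × ℝ => (p.1 - h p.2, p.2)); fun_prop
  have hShsc : ContDiff ℝ ∞ Sh.symm := by
    change ContDiff ℝ ∞ (fun p : Y × ℝ => (h p.2 + p.1, p.2)); fun_prop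
  have hSh0 : Sh 0 = 0 := by
    change ((0:Y) - h 0, (0:ℝ)) = 0; simp [hh0]
  have hShs0 : Sh.symm 0 = 0 := by rw [← hSh0, Sh.symm_apply_apply, hSh0]
  -- g
  have hg0pos : ∀ᶠ t in 𝓝 (0:ℝ), 0 ≤ F (h t, t) := by
    have : Tendsto (fun t : ℝ => (h t, t)) (𝓝 0) (𝓝 (0 : Y × ℝ)) := by
      have hc : Continuous fun t : ℝ => (h t, t) := by have := hh.continuous; fun_prop
      have := hc.tendsto 0
      rwa [hh0] at this
    exact this.eventually hpos
  obtain ⟨χ, hχc, hχ0, hχ1, hχs, -⟩ := cutoff _ hg0pos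
  -- good set
  have hgood : ∀ᶠ p in 𝓝 (0 : Y × ℝ), χ p.2 = 1 ∧ pgrad F (h p.2, p.2) = 0 ∧ Sh.symm p ∈ N := by
    have t2 : Tendsto (fun p : Y × ℝ => p.2) (𝓝 0) (𝓝 0) := continuous_snd.tendsto 0
    have t3 : Tendsto Sh.symm (𝓝 0) (𝓝 0) := by
      have := Sh.symm.continuous.tendsto 0
      rwa [hShs0] at this
    exact (t2.eventually hχ1).and ((t2.eventually hcrit).and (t3 hN))
  obtain ⟨W2, hW2, hW2o, h0W2⟩ := eventually_nhds_iff.1 hgood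
  have hder : HasFDerivAt (fun p : Y × ℝ => (Q p p.1, p.2))
      ((ContinuousLinearEquiv.refl ℝ (Y × ℝ) : (Y × ℝ) ≃L[ℝ] (Y × ℝ)) : (Y × ℝ) →L[ℝ] (Y × ℝ)) 0 := by
    have hQd := ((hQ.contDiffAt (hW.mem_nhds h0W)).differentiableAt (by simp)).hasFDerivAt
    have := (hQd.clm_apply (hasFDerivAt_fst (𝕜 := ℝ) (E := Y) (F := ℝ) (p := 0))).prodMk
      (hasFDerivAt_snd (𝕜 := ℝ) (E := Y) (F := ℝ) (p := 0))
    refine this.congr_fderiv ?_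
    refine ContinuousLinearMap.ext fun q => ?_
    simp [hQ0]
  obtain ⟨P, p1, p2, p3, p4⟩ := inv_fun (fun p : Y × ℝ => (Q p p.1, p.2)) (W ∩ W2) (hW.inter hW2o) 0
    ⟨h0W, h0W2⟩ ((((hQ.mono inter_subset_left)).clm_apply contDiff_fst.contDiffOn).prodMk
      contDiff_snd.contDiffOn) _ hder
  have hPc : ContDiffOn ℝ ∞ P P.source := by
    refine ContDiffOn.congr (f := fun p : Y × ℝ => (Q p p.1, p.2)) ?_ (fun x _ => p2 x)
    exact (((hQ.mono (p3.trans inter_subset_left))).clm_apply contDiff_fst.contDiffOn).prodMk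
      contDiff_snd.contDiffOn
  have hmain : ∀ p, Sh p ∈ P.source →
      F p = ‖(P (Sh p)).1‖ ^ 2 + χ (P (Sh p)).2 * F (h (P (Sh p)).2, (P (Sh p)).2) := by
    intro p hp
    have hpW := p3 hp
    obtain ⟨a1, a2, a3⟩ := hW2 _ hpW.2
    have := taylor_avgHess hF h (Sh p)
    rw [a2, inner_zero_left, add_zero, hQW _ hpW.1] at this
    have e : (h (Sh p).2 + (Sh p).1, (Sh p).2) = p := Sh.symm_apply_apply p
    rw [e] at this
    rw [p2, a1, one_mul, this, add_comm]
  have hsrc : (0 : Y × ℝ) ∈ (Sh.transOpenPartialHomeomorph P).source := by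
    change Sh 0 ∈ P.source
    rw [hSh0]; exact p1
  refine ⟨Sh.transOpenPartialHomeomorph P, fun t => χ t * F (h t, t), hsrc, ?_, ?_, ?_, ?_, ?_, ?_, ?_, ?_⟩
  · change P (Sh 0) = 0
    rw [hSh0, p2]; simp
  · intro p hp
    have := (hW2 _ (p3 hp).2).2.2
    have e : Sh.symm (Sh p) = p := Sh.symm_apply_apply p
    rw [← e]; exact this
  · exact hPc.comp hShc.contDiffOn (fun p hp => hp)
  · exact hShsc.comp_contDiffOn p4
  · fun_prop
  · intro z
    by_cases hz : 0 ≤ F (h z, z)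
    · exact mul_nonneg (hχ0 z) hz
    · simp [hχs z hz]
  · have t2 : Tendsto (fun t : ℝ => ((0:Y), t)) (𝓝 0) (𝓝 0) := by
      have hc : Continuous fun t : ℝ => ((0:Y), t) := by fun_prop
      exact hc.tendsto 0
    have := t2.eventually ((Sh.transOpenPartialHomeomorph P).open_source.mem_nhds hsrc)
    refine IsBigO.trans (IsBigO.of_bound 1 ?_) h4
    filter_upwards [this, hχ1, hg0pos] with t ht hχt hgt
    have e := hmain (0, t) ht
    rw [p2] at e
    have e2 : (Sh ((0:Y), t)).2 = t := rfl
    rw [e2] at e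
    simp only at e
    have := mul_nonneg (hχ0 t) hgt
    rw [one_mul, Real.norm_of_nonneg this, e]
    refine le_trans ?_ (le_abs_self _)
    have := sq_nonneg ‖(Q (Sh (0, t))) (Sh (0, t)).1‖
    linarith
  · exact fun p hp => hmain p hp


theorem exists_split (n : ℕ) :
    ∃ C : EuclideanSpace ℝ (Fin (n + 1)) ≃L[ℝ] (EuclideanSpace ℝ (Fin n) × ℝ),
      (∀ x i, (C x).1 i = x (Fin.castSucc i)) ∧ (∀ x, (C x).2 = x (Fin.last n)) := by
  let C : EuclideanSpace ℝ (Fin (n + 1)) ≃ₗ[ℝ] (EuclideanSpace ℝ (Fin n) × ℝ) :=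
    { toFun := fun x => (WithLp.toLp 2 (fun i => x (Fin.castSucc i)), x (Fin.last n))
      invFun := fun q => WithLp.toLp 2 (Fin.snoc (α := fun _ => ℝ) (fun i => q.1 i) q.2)
      map_add' := fun x y => rfl
      map_smul' := fun c x => rfl
      left_inv := fun x => by
        ext i
        refine Fin.lastCases ?_ (fun j => ?_) i <;> simp
      right_inv := fun q => by
        refine Prod.ext ?_ ?_
        · ext i; simp
        · simp }
  exact ⟨C.toContinuousLinearEquiv, fun x i => rfl, fun x => rfl⟩

theorem exists_frame {n : ℕ}
    (B : EuclideanSpace ℝ (Fin (n + 1)) →L[ℝ] EuclideanSpace ℝ (Fin (n + 1)) →L[ℝ] ℝ)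
    (hs : ∀ u w, B u w = B w u) (hp : ∀ u, 0 ≤ B u u)
    (hker : ∃ v : EuclideanSpace ℝ (Fin (n + 1)), v ≠ 0 ∧
      ∀ u : EuclideanSpace ℝ (Fin (n + 1)), ((∀ w, B u w = 0) ↔ ∃ c : ℝ, u = c • v)) :
    ∃ A : (EuclideanSpace ℝ (Fin n) × ℝ) ≃L[ℝ] EuclideanSpace ℝ (Fin (n + 1)),
      ∀ q w, B (A q) (A w) = 2 * inner ℝ q.1 w.1 := by
  obtain ⟨v, hv, hk⟩ := hker
  let Bl : LinearMap.BilinForm ℝ (EuclideanSpace ℝ (Fin (n + 1))) :=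
    LinearMap.mk₂ ℝ (fun u w => B u w) (by simp) (by simp) (by simp) (by simp)
  have hBl : LinearMap.IsSymm Bl := ⟨fun u w => hs u w⟩
  obtain ⟨b₀, hb₀⟩ := LinearMap.BilinForm.exists_orthogonal_basis hBl
  have hfr : Module.finrank ℝ (EuclideanSpace ℝ (Fin (n + 1))) = n + 1 := by simp
  let b₁ := b₀.reindex (finCongr hfr)
  have hb₁ : ∀ i j, i ≠ j → B (b₁ i) (b₁ j) = 0 := by
    intro i j hij
    simp only [b₁, Module.Basis.reindex_apply]
    exact hb₀ (fun h => hij ((finCongr hfr).symm.injective h))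
  -- a basis vector that spans the kernel
  have hcomb : ∀ (b : Module.Basis (Fin (n + 1)) ℝ (EuclideanSpace ℝ (Fin (n + 1))))
      (_ : ∀ i j, i ≠ j → B (b i) (b j) = 0) (u : EuclideanSpace ℝ (Fin (n + 1))) (j : Fin (n + 1)),
      B u (b j) = b.repr u j * B (b j) (b j) := by
    intro b hb u j
    conv_lhs => rw [← b.sum_repr u]
    simp only [map_sum, map_smul, _root_.sum_apply, _root_.smul_apply,
      smul_eq_mul]
    rw [Finset.sum_eq_single j]
    · intro i _ hij
      rw [hb i j hij, mul_zero]
    · simp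
  have hz : ∀ (b : Module.Basis (Fin (n + 1)) ℝ (EuclideanSpace ℝ (Fin (n + 1))))
      (_ : ∀ i j, i ≠ j → B (b i) (b j) = 0) (j : Fin (n + 1)),
      B (b j) (b j) = 0 → ∀ w, B (b j) w = 0 := by
    intro b hb j hj w
    rw [hs, hcomb b hb, hj, mul_zero]
  obtain ⟨i₀, hi₀⟩ : ∃ i₀, b₁.repr v i₀ ≠ 0 := by
    by_contra h
    push Not at h
    exact hv (b₁.repr.map_eq_zero_iff.1 (Finsupp.ext h))
  have hi₀' : B (b₁ i₀) (b₁ i₀) = 0 := by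
    have := hcomb b₁ hb₁ v i₀
    rw [(hk v).2 ⟨1, by simp⟩] at this
    rcases mul_eq_zero.1 this.symm with h | h
    · exact absurd h hi₀
    · exact h
  let b := b₁.reindex (Equiv.swap i₀ (Fin.last n))
  have hb : ∀ i j, i ≠ j → B (b i) (b j) = 0 := by
    intro i j hij
    simp only [b, Module.Basis.reindex_apply]
    exact hb₁ _ _ (fun h => hij ((Equiv.swap i₀ (Fin.last n)).symm.injective h))
  have hbl : B (b (Fin.last n)) (b (Fin.last n)) = 0 := by
    simpa [b] using hi₀'
  have hbc : ∀ i : Fin n, 0 < B (b i.castSucc) (b i.castSucc) := by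
    intro i
    refine lt_of_le_of_ne (hp _) (fun h => ?_)
    obtain ⟨c, hc⟩ := (hk _).1 (hz b hb _ h.symm)
    obtain ⟨d, hd⟩ := (hk _).1 (hz b hb _ hbl)
    have hd0 : d ≠ 0 := by
      rintro rfl
      rw [zero_smul] at hd
      exact b.ne_zero _ hd
    have e : b i.castSucc = (c / d) • b (Fin.last n) := by
      rw [hd, smul_smul, div_mul_cancel₀ _ hd0, hc]
    have e2 := congrArg (fun u => b.repr u i.castSucc) e
    simp at e2
  let r : Fin (n + 1) → ℝ := Fin.snoc (α := fun _ => ℝ)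
    (fun i => Real.sqrt (2 / B (b i.castSucc) (b i.castSucc))) 1
  have hr : ∀ i, IsUnit (r i) := by
    intro i
    rw [isUnit_iff_ne_zero]
    refine Fin.lastCases ?_ (fun j => ?_) i
    · simp [r]
    · have := hbc j
      simp only [r, Fin.snoc_castSucc]
      positivity
  let c := b.isUnitSMul hr
  have hc : ∀ i j, i ≠ j → B (c i) (c j) = 0 := by
    intro i j hij
    simp [c, Module.Basis.isUnitSMul_apply, hb i j hij]
  have hcl : B (c (Fin.last n)) (c (Fin.last n)) = 0 := by
    simp [c, Module.Basis.isUnitSMul_apply, hbl]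
  have hcc : ∀ i : Fin n, B (c i.castSucc) (c i.castSucc) = 2 := by
    intro i
    have h1 := hbc i
    simp only [c, Module.Basis.isUnitSMul_apply, map_smul, _root_.smul_apply,
      smul_eq_mul, r, Fin.snoc_castSucc]
    rw [← mul_assoc, Real.mul_self_sqrt (by positivity)]
    field_simp
  obtain ⟨C, hC1, hC2⟩ := exists_split n
  let A : (EuclideanSpace ℝ (Fin n) × ℝ) ≃ₗ[ℝ] EuclideanSpace ℝ (Fin (n + 1)) :=
    (C.symm.toLinearEquiv.trans (WithLp.linearEquiv 2 ℝ (Fin (n + 1) → ℝ))).trans c.equivFun.symm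
  refine ⟨A.toContinuousLinearEquiv, fun q w => ?_⟩
  have hrep : ∀ q i, c.repr (A q) i = (C.symm q) i := by
    intro q i
    rw [← c.equivFun_apply]
    exact congrFun (c.equivFun.apply_symm_apply _) i
  have hexp : B (A q) (A w) = ∑ j, (c.repr (A q) j * c.repr (A w) j) * B (c j) (c j) := by
    conv_lhs => rw [← c.sum_repr (A w)]
    simp only [map_sum, map_smul, smul_eq_mul]
    refine Finset.sum_congr rfl fun j _ => ?_
    rw [hcomb c hc]
    ring
  change B (A q) (A w) = _
  rw [hexp, Fin.sum_univ_castSucc, hcl]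
  simp only [hrep, hcc, ← hC1, ContinuousLinearEquiv.apply_symm_apply]
  rw [PiLp.inner_apply, Finset.mul_sum]
  simp
  refine Finset.sum_congr rfl fun j _ => ?_
  ring

theorem deriv2_line {E : Type} [NormedAddCommGroup E] [NormedSpace ℝ E] (f : E → ℝ)
    (hf : ContDiff ℝ ∞ f) (u : E) :
    (∀ t, deriv (fun t : ℝ => f (t • u)) t = fderiv ℝ f (t • u) u) ∧
    deriv (deriv (fun t : ℝ => f (t • u))) 0 = fderiv ℝ (fderiv ℝ f) 0 u u := by
  have hF1 : ContDiff ℝ ∞ (fderiv ℝ f) := hf.fderiv_right (by simp)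
  have hc : ∀ s : ℝ, HasDerivAt (fun t : ℝ => t • u) u s := by
    intro s
    simpa using ((hasDerivAt_id s).smul_const u)
  have hk : ∀ s : ℝ, HasDerivAt (fun s : ℝ => f (s • u)) (fderiv ℝ f (s • u) u) s := fun s =>
    ((hf.differentiable (by simp) (s • u)).hasFDerivAt).comp_hasDerivAt s (hc s)
  have hk' : ∀ s : ℝ, HasDerivAt (fun s : ℝ => fderiv ℝ f (s • u) u)
      (fderiv ℝ (fderiv ℝ f) (s • u) u u) s := fun s => by
    have := ((hF1.differentiable (by simp) (s • u)).hasFDerivAt).comp_hasDerivAt s (hc s)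
    simpa using this.clm_apply (hasDerivAt_const s u)
  refine ⟨fun t => (hk t).deriv, ?_⟩
  rw [funext fun t => (hk t).deriv, (hk' 0).deriv, zero_smul]

theorem fderiv2_comp {E G : Type} [NormedAddCommGroup E] [NormedSpace ℝ E]
    [NormedAddCommGroup G] [NormedSpace ℝ G] (f : E → ℝ)
    (hf : ContDiff ℝ ∞ f) (A : G ≃L[ℝ] E) :
    fderiv ℝ (fun p => f (A p)) 0 = (fderiv ℝ f 0).comp (A : G →L[ℝ] E) ∧
    ∀ q w, fderiv ℝ (fderiv ℝ (fun p => f (A p))) 0 q w = fderiv ℝ (fderiv ℝ f) 0 (A q) (A w) := by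
  have hF1 : ContDiff ℝ ∞ (fderiv ℝ f) := hf.fderiv_right (by simp)
  have h1 : ∀ p, HasFDerivAt (fun p => f (A p)) ((fderiv ℝ f (A p)).comp (A : G →L[ℝ] E)) p :=
    fun p => ((hf.differentiable (by simp) (A p)).hasFDerivAt).comp p A.hasFDerivAt
  refine ⟨by rw [(h1 0).fderiv, map_zero], fun q w => ?_⟩
  rw [funext fun p => (h1 p).fderiv]
  have h2 : HasFDerivAt (fun p => fderiv ℝ f (A p)) ((fderiv ℝ (fderiv ℝ f) (A 0)).comp (A : G →L[ℝ] E)) 0 :=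
    ((hF1.differentiable (by simp) (A 0)).hasFDerivAt).comp 0 A.hasFDerivAt
  have h3 := h2.clm_comp (hasFDerivAt_const (A : G →L[ℝ] E) (0:G))
  rw [h3.fderiv]
  simp

theorem splitting_lemma_corank_one {n : ℕ}
    (U : Set (EuclideanSpace ℝ (Fin (n + 1)))) (hU : IsOpen U) (h0U : (0 : _) ∈ U)
    (f : EuclideanSpace ℝ (Fin (n + 1)) → ℝ) (hf : ContDiffOn ℝ (⊤ : ℕ∞) f U)
    (hmin : ∃ ε > 0, Metric.ball (0 : EuclideanSpace ℝ (Fin (n + 1))) ε ⊆ U ∧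
      ∀ x ∈ Metric.ball (0 : EuclideanSpace ℝ (Fin (n + 1))) ε, x ≠ 0 → f 0 < f x)
    (hf0 : f 0 = 0) (hdf0 : fderiv ℝ f 0 = 0)
    (hker : ∃ v : EuclideanSpace ℝ (Fin (n + 1)), v ≠ 0 ∧
      ∀ u : EuclideanSpace ℝ (Fin (n + 1)),
        ((∀ w, fderiv ℝ (fderiv ℝ f) 0 u w = 0) ↔ ∃ c : ℝ, u = c • v)) :
    ∃ (V : Set (EuclideanSpace ℝ (Fin (n + 1))))
      (φ : EuclideanSpace ℝ (Fin (n + 1)) → EuclideanSpace ℝ (Fin (n + 1)))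
      (ψ : EuclideanSpace ℝ (Fin (n + 1)) → EuclideanSpace ℝ (Fin (n + 1)))
      (g : ℝ → ℝ),
      IsOpen V ∧ (0 : _) ∈ V ∧
      ContDiffOn ℝ (⊤ : ℕ∞) φ V ∧ φ 0 = 0 ∧ Set.InjOn φ V ∧
      φ '' V ⊆ U ∧ IsOpen (φ '' V) ∧
      ContDiffOn ℝ (⊤ : ℕ∞) ψ (φ '' V) ∧ (∀ x ∈ V, ψ (φ x) = x) ∧
      ContDiff ℝ (⊤ : ℕ∞) g ∧ (∀ z : ℝ, 0 ≤ g z) ∧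
      (fun z : ℝ => g z) =O[nhds 0] (fun z : ℝ => z ^ 4) ∧
      ∀ x ∈ V, f (φ x) = (∑ i : Fin n, x (Fin.castSucc i) ^ 2) + g (x (Fin.last n)) := by
  obtain ⟨χ, -, -, hχ1, -, hχ⟩ := cutoff U (hU.mem_nhds h0U)
  have hf1 : ContDiff ℝ ∞ (fun x => χ x • f x) := hχ f hU hf
  have hee : (fun x => χ x • f x) =ᶠ[𝓝 0] f := by
    filter_upwards [hχ1] with x hx
    simp [hx]
  generalize (fun x => χ x • f x) = f₁ at hf1 hee
  have h10 : f₁ 0 = 0 := by rw [hee.eq_of_nhds, hf0]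
  have h1d : fderiv ℝ f₁ 0 = 0 := by rw [hee.fderiv_eq, hdf0]
  have h1H : fderiv ℝ (fderiv ℝ f₁) 0 = fderiv ℝ (fderiv ℝ f) 0 := hee.fderiv.fderiv_eq
  have hpos : ∀ᶠ x in 𝓝 0, 0 ≤ f₁ x := by
    obtain ⟨ε, hε, -, hm⟩ := hmin
    filter_upwards [hee, Metric.ball_mem_nhds _ hε] with x hx hxb
    rw [hx]
    by_cases h : x = 0
    · rw [h, hf0]
    · have := hm x hxb h
      rw [hf0] at this
      exact this.le
  rw [← h1H] at hker
  have hline : ∀ u, 0 ≤ fderiv ℝ (fderiv ℝ f₁) 0 u u ∧ (fderiv ℝ (fderiv ℝ f₁) 0 u u = 0 →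
      (fun t : ℝ => f₁ (t • u)) =O[𝓝 0] (fun z : ℝ => z ^ 4)) := by
    intro u
    obtain ⟨l1, l2⟩ := deriv2_line f₁ hf1 u
    have := taylor4 (fun t : ℝ => f₁ (t • u)) (by fun_prop) (by simp [h10]) (by rw [l1]; simp [h1d]) (by
      have ht : Tendsto (fun t : ℝ => t • u) (𝓝 0) (𝓝 0) := by
        have hc : Continuous fun t : ℝ => t • u := by fun_prop
        simpa using hc.tendsto 0
      exact ht.eventually hpos)
    rwa [l2] at this
  obtain ⟨A, hA⟩ := exists_frame (fderiv ℝ (fderiv ℝ f₁) 0)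
    (fun u w => ((contDiff_infty.1 hf1 2).contDiffAt.isSymmSndFDerivAt (by simp)) u w)
    (fun u => (hline u).1) hker
  obtain ⟨C, hC1, hC2⟩ := exists_split n
  obtain ⟨c1, c2⟩ := fderiv2_comp f₁ hf1 A
  have tA : Tendsto A (𝓝 0) (𝓝 0) := by
    have := A.continuous.tendsto 0
    rwa [map_zero] at this
  obtain ⟨P, g, p1, p2, p3, p4, p5, g1, g2, g3, hP⟩ := core (fun p => f₁ (A p)) (by fun_prop)
    (by rw [c1, h1d]; simp) (fun q w => by rw [c2, hA]) (tA.eventually hpos) (by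
      have := (hline (A (0, 1))).2 (by rw [hA]; simp)
      refine this.congr_left fun t => ?_
      rw [← map_smul]; simp) _ (tA.eventually (hee.and (hU.mem_nhds h0U)))
  have himg : (fun x => A (P.symm (C x))) '' (C ⁻¹' P.target) = A.symm ⁻¹' P.source := by
    ext z
    constructor
    · rintro ⟨x, hx, rfl⟩
      simpa using P.map_target hx
    · intro hz
      have hz : A.symm z ∈ P.source := hz
      refine ⟨C.symm (P (A.symm z)), ?_, ?_⟩
      · simpa using P.map_source hz
      · simp [P.left_inv hz]
  have hinv : ∀ x ∈ C ⁻¹' P.target, C.symm (P (A.symm (A (P.symm (C x))))) = x := by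
    intro x hx
    have hx : C x ∈ P.target := hx
    simp [P.right_inv hx]
  have hs0 : P.symm 0 = 0 := by
    have := P.left_inv p1
    rwa [p2] at this
  refine ⟨C ⁻¹' P.target, fun x => A (P.symm (C x)), fun z => C.symm (P (A.symm z)), g,
    P.open_target.preimage C.continuous, ?_, ?_, ?_, ?_, ?_, ?_, ?_, hinv, g1, g2, g3, ?_⟩
  · have := P.map_source p1
    rw [p2] at this
    simpa using this
  · exact A.contDiff.comp_contDiffOn (p5.comp C.contDiff.contDiffOn fun x hx => hx)
  · simp [hs0]
  · exact LeftInvOn.injOn (f₁' := fun z => C.symm (P (A.symm z))) hinv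
  · rw [himg]
    intro z hz
    have : A (A.symm z) ∈ U := (p3 hz).2
    rwa [A.apply_symm_apply] at this
  · rw [himg]
    exact P.open_source.preimage A.symm.continuous
  · rw [himg]
    exact C.symm.contDiff.comp_contDiffOn (p4.comp A.symm.contDiff.contDiffOn fun x hx => hx)
  · intro x hx
    have hx : C x ∈ P.target := hx
    have hxs := P.map_target hx
    have e := hP _ hxs
    rw [P.right_inv hx, EuclideanSpace.real_norm_sq_eq, hC2] at e
    simp only [hC1] at e
    rw [← e]
    exact (p3 hxs).1.symm
end

section
/- Let U ⊂ ℝ² be an open neighborhood of (0,0), let f : U → ℝ be smooth, and let f(x,y) = Σ_{i+j ≤ n−1} a_{ij} x^i y^j + O((x²+y²)^{n/2}) be its Taylor expansion at (0,0). Define F(0) := (π/2) f(0,0) and, for y > 0 small, F(y) := ∫₀^y f(x,y)/√(y²−x²) dx. Then F coincides on [0,ε) with the smooth function G(y) := ∫₀¹ f(ty,y)/√(1−t²) dt (in particular F is smooth on [0,ε)), and F(y) = b₀ + b₁ y + ⋯ + b_{n−1} y^{n−1} + O(yⁿ) as y → 0⁺, where b_k = Σ_{j=0}^{k} a_{j,k−j}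 ∫₀¹ u^j/√(1−u²) du. -/
open Set Asymptotics Filter Real intervalIntegral

lemma abel_hasDeriv_arcsin (x : ℝ) (hx : x ∈ Ioo (0:ℝ) 1) :
    HasDerivAt arcsin ((Real.sqrt (1 - x ^ 2))⁻¹) x := by
  have := Real.hasDerivAt_arcsin (x := x) (by linarith [hx.1]) (by linarith [hx.2])
  simpa using this

lemma abel_w_int :
    IntervalIntegrable (fun t : ℝ => (Real.sqrt (1 - t ^ 2))⁻¹) MeasureTheory.volume 0 1 := by
  apply intervalIntegrable_deriv_of_nonneg (g := arcsin) Real.continuous_arcsin.continuousOn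
  · intro x hx
    simp at hx
    exact abel_hasDeriv_arcsin x hx
  · intro x hx; positivity

lemma abel_w_val : ∫ t in (0:ℝ)..1, (Real.sqrt (1 - t ^ 2))⁻¹ = π / 2 := by
  rw [integral_eq_sub_of_hasDerivAt_of_le zero_le_one Real.continuous_arcsin.continuousOn
    abel_hasDeriv_arcsin abel_w_int]
  simp

lemma abel_slice_cont {V : Set (ℝ × ℝ)} {e : ℝ}
    (hVe : Icc (0:ℝ) 1 ×ˢ Ioo (-e) e ⊆ V) {g : ℝ × ℝ → ℝ} (hg : ContinuousOn g V)
    {y : ℝ} (hy : y ∈ Ioo (-e) e) : ContinuousOn (fun t => g (t, y)) (uIcc (0:ℝ) 1) := by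
  rw [uIcc_of_le zero_le_one]
  exact hg.comp (by fun_prop) (fun t ht => hVe ⟨ht, hy⟩)

lemma abel_hasDeriv {V : Set (ℝ × ℝ)} (hV : IsOpen V) {e : ℝ}
    (hVe : Icc (0:ℝ) 1 ×ˢ Ioo (-e) e ⊆ V) {w : ℝ → ℝ}
    (hw : IntervalIntegrable w MeasureTheory.volume 0 1) {g : ℝ × ℝ → ℝ}
    (hg : ContDiffOn ℝ (⊤ : ℕ∞) g V) {y : ℝ} (hy : y ∈ Ioo (-e) e) :
    HasDerivAt (fun y => ∫ t in (0:ℝ)..1, g (t, y) * w t)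
      (∫ t in (0:ℝ)..1, (fderiv ℝ g (t, y) (0, 1)) * w t) y := by
  have hg' : ContinuousOn (fun p => fderiv ℝ g p (0, 1)) V :=
    (hg.continuousOn_fderiv_of_isOpen hV (by norm_num)).clm_apply continuousOn_const
  obtain ⟨d, hd, hdy⟩ := Metric.nhds_basis_closedBall.mem_iff.1 (isOpen_Ioo.mem_nhds hy)
  have hK : IsCompact (Icc (0:ℝ) 1 ×ˢ Metric.closedBall y d) :=
    isCompact_Icc.prod (isCompact_closedBall y d)
  obtain ⟨C, hC⟩ := hK.exists_bound_of_continuousOn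
    (hg'.mono ((prod_mono_right hdy).trans hVe))
  have hball : Metric.ball y d ⊆ Ioo (-e) e := Metric.ball_subset_closedBall.trans hdy
  have hInt : ∀ z ∈ Ioo (-e) e,
      IntervalIntegrable (fun t => g (t, z) * w t) MeasureTheory.volume 0 1 := fun z hz =>
    hw.continuousOn_mul (abel_slice_cont hVe hg.continuousOn hz)
  refine (hasDerivAt_integral_of_dominated_loc_of_deriv_le
    (F' := fun y t => (fderiv ℝ g (t, y) (0, 1)) * w t)
    (bound := fun t => C * |w t|)
    (Metric.ball_mem_nhds y hd) ?_ (hInt y hy) ?_ ?_ (hw.abs.const_mul C) ?_).2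
  · filter_upwards [Metric.ball_mem_nhds y hd] with z hz
    exact (intervalIntegrable_iff.1 (hInt z (hball hz))).aestronglyMeasurable
  · exact (intervalIntegrable_iff.1
      (hw.continuousOn_mul (abel_slice_cont hVe hg' hy))).aestronglyMeasurable
  · refine Filter.Eventually.of_forall fun t ht z hz => ?_
    rw [uIoc_of_le zero_le_one] at ht
    rw [norm_mul, Real.norm_eq_abs (w t)]
    exact mul_le_mul_of_nonneg_right
      (hC (t, z) ⟨Ioc_subset_Icc_self ht, Metric.ball_subset_closedBall hz⟩) (abs_nonneg _)
  · refine Filter.Eventually.of_forall fun t ht z hz => ?_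
    rw [uIoc_of_le zero_le_one] at ht
    have hmem : (t, z) ∈ V := hVe ⟨Ioc_subset_Icc_self ht, hball hz⟩
    have h1 : HasFDerivAt g (fderiv ℝ g (t, z)) (t, z) :=
      ((hg.contDiffAt (hV.mem_nhds hmem)).differentiableAt (by norm_num)).hasFDerivAt
    have h2 : HasDerivAt (fun z : ℝ => (t, z)) ((0:ℝ), (1:ℝ)) z :=
      (hasDerivAt_const z t).prodMk (hasDerivAt_id z)
    exact (h1.comp_hasDerivAt z h2).mul_const (w t)

lemma abel_contDiff {V : Set (ℝ × ℝ)} (hV : IsOpen V) {e : ℝ}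
    (hVe : Icc (0:ℝ) 1 ×ˢ Ioo (-e) e ⊆ V) {w : ℝ → ℝ}
    (hw : IntervalIntegrable w MeasureTheory.volume 0 1) (m : ℕ) : ∀ {g : ℝ × ℝ → ℝ}
    (_ : ContDiffOn ℝ (⊤ : ℕ∞) g V),
    ContDiffOn ℝ m (fun y => ∫ t in (0:ℝ)..1, g (t, y) * w t) (Ioo (-e) e) := by
  induction m with
  | zero =>
    intro g hg
    rw [Nat.cast_zero, contDiffOn_zero]
    exact fun y hy => (abel_hasDeriv hV hVe hw hg hy).continuousAt.continuousWithinAt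
  | succ m ih =>
    intro g hg
    rw [Nat.cast_add, Nat.cast_one, contDiffOn_succ_iff_deriv_of_isOpen isOpen_Ioo]
    refine ⟨fun y hy => (abel_hasDeriv hV hVe hw hg hy).differentiableAt.differentiableWithinAt,
      by simp, ?_⟩
    have hg' : ContDiffOn ℝ (⊤ : ℕ∞) (fun p => fderiv ℝ g p (0, 1)) V :=
      (hg.fderiv_of_isOpen hV (by norm_num)).clm_apply contDiffOn_const
    exact (ih hg').congr fun y hy => (abel_hasDeriv hV hVe hw hg hy).deriv

lemma abel_int_sum (S : Finset ℕ) (h : ℕ → ℝ → ℝ)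
    (hh : ∀ k ∈ S, IntervalIntegrable (h k) MeasureTheory.volume 0 1) :
    IntervalIntegrable (fun t => ∑ k ∈ S, h k t) MeasureTheory.volume 0 1 := by
  have := IntervalIntegrable.sum S hh
  have e : (fun t => ∑ k ∈ S, h k t) = ∑ k ∈ S, h k := by
    ext t
    simp
  rw [e]
  exact this

lemma abel_sum (n : ℕ) (h : ℕ → ℕ → ℝ) :
    ∑ ij ∈ (Finset.range n ×ˢ Finset.range n).filter (fun ij => ij.1 + ij.2 < n), h ij.1 ij.2
      = ∑ k ∈ Finset.range n, ∑ j ∈ Finset.range (k + 1), h j (k - j) := by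
  rw [Finset.sum_sigma']
  refine Finset.sum_bij' (fun p _ => ⟨p.1 + p.2, p.1⟩) (fun q _ => (q.2, q.1 - q.2))
    ?_ ?_ ?_ ?_ ?_
  · rintro ⟨i, j⟩ hp; simp at hp ⊢; omega
  · rintro ⟨i, j⟩ hp; simp at hp ⊢; omega
  · rintro ⟨i, j⟩ hp; simp
  · rintro ⟨i, j⟩ hp; simp at hp ⊢; omega
  · rintro ⟨i, j⟩ hp; simp

/-- If `f` is smooth near `(0,0)` with Taylor expansion
`f(x,y) = Σ_{i+j ≤ n−1} a_{ij} x^i y^j + O((x²+y²)^{n/2})`, then the function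
`F(y) = ∫₀^y f(x,y)/√(y²−x²) dx` (with `F(0) = (π/2) f(0,0)`) coincides near `0⁺` with the
smooth function `G(y) = ∫₀¹ f(ty,y)/√(1−t²) dt`, and
`F(y) = b₀ + b₁ y + ⋯ + b_{n−1} y^{n−1} + O(yⁿ)` as `y → 0⁺`, where
`b_k = Σ_{j=0}^k a_{j,k−j} ∫₀¹ u^j/√(1−u²) du`. -/
theorem abel_type_integral_expansion
    (U : Set (ℝ × ℝ)) (hU : IsOpen U) (h0U : ((0 : ℝ), (0 : ℝ)) ∈ U)
    (f : ℝ × ℝ → ℝ) (hf : ContDiffOn ℝ (⊤ : ℕ∞) f U)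
    (n : ℕ) (hn : 1 ≤ n) (a : ℕ → ℕ → ℝ)
    (hTaylor : (fun p : ℝ × ℝ =>
        f p - ∑ ij ∈ (Finset.range n ×ˢ Finset.range n).filter (fun ij => ij.1 + ij.2 < n),
          a ij.1 ij.2 * p.1 ^ ij.1 * p.2 ^ ij.2)
      =O[nhds (0, 0)] (fun p : ℝ × ℝ => Real.sqrt (p.1 ^ 2 + p.2 ^ 2) ^ n))
    (F : ℝ → ℝ) (hF0 : F 0 = π / 2 * f (0, 0))
    (ε : ℝ) (hε : 0 < ε)
    (hF : ∀ y ∈ Ioo (0 : ℝ) ε, F y = ∫ x in (0:ℝ)..y, f (x, y) / Real.sqrt (y ^ 2 - x ^ 2)) :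
    ∃ ε' > 0, ε' ≤ ε ∧
      ContDiffOn ℝ (⊤ : ℕ∞) (fun y : ℝ => ∫ t in (0:ℝ)..1, f (t * y, y) / Real.sqrt (1 - t ^ 2))
        (Ioo (-ε') ε') ∧
      Set.EqOn F (fun y : ℝ => ∫ t in (0:ℝ)..1, f (t * y, y) / Real.sqrt (1 - t ^ 2))
        (Ico 0 ε') ∧
      (fun y : ℝ =>
          F y - ∑ k ∈ Finset.range n,
            (∑ j ∈ Finset.range (k + 1),
              a j (k - j) * ∫ u in (0:ℝ)..1, u ^ j / Real.sqrt (1 - u ^ 2)) * y ^ k)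
        =O[nhdsWithin 0 (Ioi 0)] (fun y : ℝ => y ^ n) := by
  set w : ℝ → ℝ := fun t => (Real.sqrt (1 - t ^ 2))⁻¹ with hwdef
  have hw : IntervalIntegrable w MeasureTheory.volume 0 1 := abel_w_int
  simp only [div_eq_mul_inv (_ : ℝ) (Real.sqrt (1 - _ ^ 2))]
  obtain ⟨r, hr, hrU⟩ := Metric.isOpen_iff.1 hU _ h0U
  have hc : Continuous (fun p : ℝ × ℝ => (p.1 * p.2, p.2)) := by fun_prop
  have hcs : ContDiff ℝ (⊤ : ℕ∞) (fun p : ℝ × ℝ => (p.1 * p.2, p.2)) := by fun_prop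
  set V : Set (ℝ × ℝ) := (fun p : ℝ × ℝ => (p.1 * p.2, p.2)) ⁻¹' U with hVdef
  have hV : IsOpen V := hU.preimage hc
  have habs : ∀ t ∈ Icc (0:ℝ) 1, ∀ y : ℝ, |t * y| ≤ |y| := fun t ht y => by
    rw [abs_mul, abs_of_nonneg ht.1]
    exact mul_le_of_le_one_left (abs_nonneg _) ht.2
  have hnear : ∀ s : ℝ, ∀ t ∈ Icc (0:ℝ) 1, ∀ y ∈ Ioo (-s) s,
      (t * y, y) ∈ Metric.ball ((0:ℝ), (0:ℝ)) s := by
    intro s t ht y hy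
    have h1 : |y| < s := abs_lt.2 hy
    rw [Metric.mem_ball, Prod.dist_eq, max_lt_iff]
    simp only [Real.dist_eq, sub_zero]
    exact ⟨(habs t ht y).trans_lt h1, h1⟩
  have hVe : ∀ e ≤ r, Icc (0:ℝ) 1 ×ˢ Ioo (-e) e ⊆ V := by
    rintro e he ⟨t, y⟩ ⟨ht, hy⟩
    exact hrU (Metric.ball_subset_ball he (hnear e t ht y hy))
  set g : ℝ × ℝ → ℝ := fun p => f (p.1 * p.2, p.2) with hgdef
  have hg : ContDiffOn ℝ (⊤ : ℕ∞) g V := hf.comp hcs.contDiffOn (fun p hp => hp)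
  have hEq : ∀ y ∈ Ico (0:ℝ) (min ε r), F y = ∫ t in (0:ℝ)..1, f (t * y, y) * w t := by
    intro y hy
    rcases hy.1.eq_or_lt with h | h
    · subst h
      simp only [mul_zero]
      rw [integral_const_mul, abel_w_val, hF0, mul_comm]
    · rw [hF y ⟨h, hy.2.trans_le (min_le_left _ _)⟩]
      have := smul_integral_comp_mul_right (a := 0) (b := 1)
        (fun x => f (x, y) / Real.sqrt (y ^ 2 - x ^ 2)) y
      rw [zero_mul, one_mul] at this
      rw [← this, smul_eq_mul, ← integral_const_mul]
      refine integral_congr fun t _ => ?_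
      have h2 : Real.sqrt (y ^ 2 - (t * y) ^ 2) = y * Real.sqrt (1 - t ^ 2) := by
        rw [show y ^ 2 - (t * y) ^ 2 = y ^ 2 * (1 - t ^ 2) by ring,
          Real.sqrt_mul (sq_nonneg y), Real.sqrt_sq h.le]
      simp only [h2, hwdef]
      rw [div_eq_mul_inv, mul_inv]
      field_simp
  refine ⟨min ε r, lt_min hε hr, min_le_left _ _, ?_, hEq, ?_⟩
  · rw [contDiffOn_infty]
    exact fun m => abel_contDiff hV (hVe _ (min_le_right _ _)) hw m hg
  obtain ⟨C, hC⟩ := hTaylor.bound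
  obtain ⟨s, hs, hsC⟩ := Metric.eventually_nhds_iff_ball.1 hC
  have hwp : ∀ j : ℕ, IntervalIntegrable (fun t => t ^ j * w t) MeasureTheory.volume 0 1 :=
    fun j => hw.continuousOn_mul (by fun_prop)
  refine IsBigO.of_bound (|C| * Real.sqrt 2 ^ n * ∫ t in (0:ℝ)..1, w t) ?_
  have hpos : 0 < min (min ε r) s := lt_min (lt_min hε hr) hs
  filter_upwards [Ioo_mem_nhdsGT hpos] with y hy
  have hyr : y < min ε r := hy.2.trans_le (min_le_left _ _)
  have hys : y < s := hy.2.trans_le (min_le_right _ _)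
  have hy0 : 0 < y := hy.1
  have hsumint : ∀ k ∈ Finset.range n, IntervalIntegrable
      (fun t => ∑ j ∈ Finset.range (k + 1), a j (k - j) * y ^ k * (t ^ j * w t))
      MeasureTheory.volume 0 1 := fun k _ =>
    abel_int_sum _ _ fun j _ => (hwp j).const_mul _
  have hS : ∑ k ∈ Finset.range n, (∑ j ∈ Finset.range (k + 1),
        a j (k - j) * ∫ u in (0:ℝ)..1, u ^ j * w u) * y ^ k
      = ∫ t in (0:ℝ)..1, ∑ k ∈ Finset.range n, ∑ j ∈ Finset.range (k + 1),
        a j (k - j) * y ^ k * (t ^ j * w t) := by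
    rw [integral_finsetSum hsumint]
    refine Finset.sum_congr rfl fun k _ => ?_
    rw [integral_finsetSum fun j _ => (hwp j).const_mul _, Finset.sum_mul]
    refine Finset.sum_congr rfl fun j _ => ?_
    rw [integral_const_mul]
    ring
  have hyI : y ∈ Ioo (-(min ε r)) (min ε r) := ⟨by linarith, hyr⟩
  have hgint : IntervalIntegrable (fun t => f (t * y, y) * w t) MeasureTheory.volume 0 1 :=
    hw.continuousOn_mul (abel_slice_cont (hVe _ (min_le_right _ _)) hg.continuousOn hyI)
  rw [hEq y ⟨hy0.le, hyr⟩, hS, ← integral_sub hgint (abel_int_sum _ _ hsumint)]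
  have hbd : ∀ t ∈ Ioc (0:ℝ) 1, ‖f (t * y, y) * w t - ∑ k ∈ Finset.range n,
      ∑ j ∈ Finset.range (k + 1), a j (k - j) * y ^ k * (t ^ j * w t)‖
      ≤ |C| * Real.sqrt 2 ^ n * y ^ n * w t := by
    intro t ht
    have htI := Ioc_subset_Icc_self ht
    have hb := hsC (t * y, y) (hnear s t htI y ⟨by linarith, hys⟩)
    rw [abel_sum n (fun i j => a i j * (t * y) ^ i * y ^ j)] at hb
    have hre : f (t * y, y) * w t - ∑ k ∈ Finset.range n,
        ∑ j ∈ Finset.range (k + 1), a j (k - j) * y ^ k * (t ^ j * w t)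
        = (f (t * y, y) - ∑ k ∈ Finset.range n,
        ∑ j ∈ Finset.range (k + 1), a j (k - j) * (t * y) ^ j * y ^ (k - j)) * w t := by
      rw [sub_mul, Finset.sum_mul]
      congr 1
      refine Finset.sum_congr rfl fun k _ => ?_
      rw [Finset.sum_mul]
      refine Finset.sum_congr rfl fun j hj => ?_
      have : y ^ k = y ^ j * y ^ (k - j) := by
        rw [← pow_add]; congr 1; simp at hj; omega
      rw [this, mul_pow]; ring
    have hw0 : 0 ≤ w t := by simp only [hwdef]; positivity
    rw [hre, norm_mul, Real.norm_of_nonneg hw0]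
    refine mul_le_mul_of_nonneg_right (hb.trans ?_) hw0
    have hsq : Real.sqrt ((t * y) ^ 2 + y ^ 2) ≤ Real.sqrt 2 * y := by
      rw [← Real.sqrt_sq hy0.le, ← Real.sqrt_mul zero_le_two, Real.sqrt_sq hy0.le]
      apply Real.sqrt_le_sqrt
      have := sq_le_sq.2 (habs t htI y)
      linarith
    rw [norm_pow, Real.norm_of_nonneg (Real.sqrt_nonneg _), mul_assoc, ← mul_pow]
    exact mul_le_mul (le_abs_self C) (pow_le_pow_left₀ (Real.sqrt_nonneg _) hsq n)
      (by positivity) (abs_nonneg _)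
  refine (norm_integral_le_of_norm_le zero_le_one
    (Filter.Eventually.of_forall hbd) (hw.const_mul _)).trans ?_
  rw [integral_const_mul, norm_pow, Real.norm_of_nonneg hy0.le]
  apply le_of_eq
  ring
end

section
/- Let g : (−ε, ε) → ℝ be a smooth function, and define f : (−ε,ε)² → ℝ by f(x,y) = (g(x)−g(y))/(x−y) for x ≠ y and f(x,x) = g'(x). Then f is smooth on (−ε,ε)², and if g(x) = Σ_{k=0}^{n} a_k x^k + O(|x|^{n+1}) as x → 0, then f(x,y) = Σ_{k=1}^{n} a_k Σ_{i+j=k−1} x^i y^j + O((x²+y²)^{n/2}) as (x,y) → (0,0). -/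
open Set Asymptotics Filter

open scoped Convolution in
lemma param_smooth (φ : ℝ → ℝ) (hφ : ContDiff ℝ (⊤ : ℕ∞) φ) :
    ContDiff ℝ (⊤ : ℕ∞) (fun p : ℝ × ℝ => ∫ t in (0:ℝ)..1, φ (p.2 + t * (p.1 - p.2))) := by
  let ρ : ContDiffBump (0:ℝ) := ⟨1, 2, by norm_num, by norm_num⟩
  let w : ℝ → ℝ := (Ioc (0:ℝ) 1).indicator (fun _ => 1)
  let G : ℝ × ℝ → ℝ → ℝ := fun p u => ρ u * φ (p.2 + (-u) * (p.1 - p.2))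
  have hw : MeasureTheory.LocallyIntegrable w MeasureTheory.volume := by
    apply MeasureTheory.Integrable.locallyIntegrable
    apply (MeasureTheory.integrable_indicator_iff measurableSet_Ioc).2
    apply MeasureTheory.integrableOn_const
    · simp
    · simp
  have hG : ContDiffOn ℝ ((⊤ : ℕ∞) : WithTop ℕ∞) (Function.HasUncurry.uncurry G)
      ((univ : Set (ℝ × ℝ)) ×ˢ univ) := by
    apply ContDiff.contDiffOn
    have : (Function.HasUncurry.uncurry G) = fun q : (ℝ × ℝ) × ℝ =>
      ρ q.2 * φ (q.1.2 + (-q.2) * (q.1.1 - q.1.2)) := rfl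
    rw [this]
    apply ContDiff.mul
    · exact ρ.contDiff.comp contDiff_snd
    · apply hφ.comp
      fun_prop
  have key := MeasureTheory.contDiffOn_convolution_right_with_param_comp (μ := MeasureTheory.volume)
    (ContinuousLinearMap.mul ℝ ℝ) (v := fun _ : ℝ × ℝ => (0:ℝ)) contDiffOn_const
    isOpen_univ (isCompact_closedBall (0:ℝ) 2) (g := G) (f := w)
    (by
      intro p x _ hx
      have : ρ x = 0 := ρ.zero_of_le_dist (by
        rw [Metric.mem_closedBall] at hx
        exact (not_le.1 hx).le)
      simp [G, this]) hw hG
  rw [contDiffOn_univ] at key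
  convert key using 2 with p
  rw [MeasureTheory.convolution_def, intervalIntegral.integral_of_le zero_le_one,
    ← MeasureTheory.integral_indicator measurableSet_Ioc]
  congr 1
  ext t
  by_cases ht : t ∈ Ioc (0:ℝ) 1
  · have : ρ (-t) = 1 := ρ.one_of_mem_closedBall (by
      simp [ρ, abs_le]; constructor <;> linarith [ht.1, ht.2])
    simp [w, ht, G, this]
  · simp [w, ht]

lemma dd_smooth (ε : ℝ) (g : ℝ → ℝ) (hg : ContDiffOn ℝ (⊤ : ℕ∞) g (Ioo (-ε) ε))
    (f : ℝ × ℝ → ℝ)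
    (hf_off : ∀ x y : ℝ, x ≠ y → f (x, y) = (g x - g y) / (x - y))
    (hf_diag : ∀ x : ℝ, f (x, x) = deriv g x) :
    ContDiffOn ℝ (⊤ : ℕ∞) f (Ioo (-ε) ε ×ˢ Ioo (-ε) ε) := by
  rintro ⟨x₀, y₀⟩ ⟨hx₀, hy₀⟩
  simp only at hx₀ hy₀
  have hM : max |x₀| |y₀| < ε := max_lt (abs_lt.2 hx₀) (abs_lt.2 hy₀)
  obtain ⟨r, hr, hrε⟩ := exists_between hM
  obtain ⟨R, hrR, hRε⟩ := exists_between hrε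
  have hr0 : 0 < r := lt_of_le_of_lt (le_max_of_le_left (abs_nonneg _)) hr
  let ρ : ContDiffBump (0:ℝ) := ⟨r, R, hr0, hrR⟩
  let G : ℝ → ℝ := fun x => ρ x * g x
  have hG : ContDiff ℝ (⊤ : ℕ∞) G := by
    rw [contDiff_iff_contDiffAt]
    intro x
    by_cases hx : x ∈ Ioo (-ε) ε
    · exact ρ.contDiff.contDiffAt.mul (hg.contDiffAt (Ioo_mem_nhds hx.1 hx.2))
    · have hx' : R < |x| := by
        by_contra h
        exact hx (abs_lt.1 (lt_of_le_of_lt (not_lt.1 h) hRε))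
      have : G =ᶠ[nhds x] fun _ => 0 := by
        filter_upwards [continuous_abs.continuousAt.eventually_const_lt hx'] with z hz
        have : ρ z = 0 := ρ.zero_of_le_dist (by simpa [ρ] using hz.le)
        simp [G, this]
      exact contDiffAt_const.congr_of_eventuallyEq this
  have hGg : ∀ x, |x| < r → G x = g x := by
    intro x hx
    have : ρ x = 1 := ρ.one_of_mem_closedBall (by simpa [ρ] using hx.le)
    simp [G, this]
  have hG' : ContDiff ℝ (⊤ : ℕ∞) (deriv G) := by
    have := (contDiff_infty_iff_deriv (𝕜 := ℝ) (f := G)).1 hG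
    exact this.2
  have hK := param_smooth (deriv G) hG'
  apply ContDiffAt.contDiffWithinAt
  refine hK.contDiffAt.congr_of_eventuallyEq ?_
  have h1 : ∀ᶠ p : ℝ × ℝ in nhds (x₀, y₀), |p.1| < r :=
    (continuous_fst.abs.continuousAt (x := (x₀, y₀))).eventually_lt_const
      (lt_of_le_of_lt (le_max_left _ _) hr)
  have h2 : ∀ᶠ p : ℝ × ℝ in nhds (x₀, y₀), |p.2| < r :=
    (continuous_snd.abs.continuousAt (x := (x₀, y₀))).eventually_lt_const
      (lt_of_le_of_lt (le_max_right _ _) hr)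
  filter_upwards [h1, h2]
  rintro ⟨x, y⟩ hx hy
  simp only at hx hy ⊢
  by_cases hxy : x = y
  · subst hxy
    rw [hf_diag]
    have : G =ᶠ[nhds x] g := by
      filter_upwards [continuous_abs.continuousAt.eventually_lt_const hx] with z hz
      exact hGg z hz
    simp [this.deriv_eq]
  · rw [hf_off x y hxy]
    have hne : x - y ≠ 0 := sub_ne_zero.2 hxy
    rw [div_eq_iff hne, ← intervalIntegral.integral_mul_const]
    have := intervalIntegral.integral_eq_sub_of_hasDerivAt (a := 0) (b := 1)
      (f := fun t : ℝ => G (y + t * (x - y)))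
      (f' := fun t : ℝ => deriv G (y + t * (x - y)) * (x - y)) (by
        intro t _
        have hd : HasDerivAt G (deriv G (y + t * (x - y))) (y + t * (x - y)) :=
          (hG.differentiable (by simp)).differentiableAt.hasDerivAt
        have hi : HasDerivAt (fun t : ℝ => y + t * (x - y)) (x - y) t := by
          simpa using ((hasDerivAt_id t).mul_const (x - y)).const_add y
        exact hd.comp t hi) (by
        apply Continuous.intervalIntegrable
        have := hG'.continuous
        fun_prop)
    rw [this]
    simp [hGg x hx, hGg y hy]

lemma factor (ε : ℝ) (hε : 0 < ε) (h : ℝ → ℝ) (hh : ContDiffOn ℝ (⊤ : ℕ∞) h (Ioo (-ε) ε)) (m : ℕ)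
    (hO : h =O[nhds 0] (fun x : ℝ => |x| ^ m)) :
    ∃ q : ℝ → ℝ, ContDiffOn ℝ (⊤ : ℕ∞) q (Ioo (-ε) ε) ∧ ∀ x, h x = x ^ m * q x := by
  induction m with
  | zero => exact ⟨h, hh, by simp⟩
  | succ m ih =>
    have hO' : h =O[nhds 0] (fun x : ℝ => |x| ^ m) := by
      refine hO.trans ?_
      refine IsBigO.of_bound 1 ?_
      have : ∀ᶠ x : ℝ in nhds 0, |x| < 1 :=
        (continuous_abs.continuousAt (x := (0:ℝ))).eventually_lt_const (by simp)
      filter_upwards [this] with x hx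
      simp only [norm_pow, Real.norm_eq_abs, abs_abs, one_mul]
      exact pow_le_pow_of_le_one (abs_nonneg _) hx.le (Nat.le_succ m)
    obtain ⟨q, hq, hhq⟩ := ih hO'
    have hmem : Ioo (-ε) ε ∈ nhds (0:ℝ) := Ioo_mem_nhds (by linarith) hε
    have hqc : ContinuousAt q 0 := hq.continuousOn.continuousAt hmem
    have hq0 : q 0 = 0 := by
      have t1 : Tendsto q (nhdsWithin 0 {0}ᶜ) (nhds (q 0)) := hqc.mono_left nhdsWithin_le_nhds
      have t2 : Tendsto q (nhdsWithin 0 {0}ᶜ) (nhds 0) := by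
        obtain ⟨C, hC⟩ := hO.bound
        refine squeeze_zero_norm' (a := fun x => C * |x|) ?_ ?_
        · filter_upwards [hC.filter_mono nhdsWithin_le_nhds, self_mem_nhdsWithin] with x hx hx0
          have hx0' : 0 < |x| := abs_pos.2 hx0
          rw [hhq x] at hx
          simp only [norm_mul, norm_pow, Real.norm_eq_abs, abs_abs] at hx ⊢
          have hp : 0 < |x| ^ m := pow_pos hx0' m
          rw [pow_succ] at hx
          nlinarith
        · have : Continuous fun x : ℝ => C * |x| := by fun_prop
          simpa using (this.tendsto 0).mono_left (nhdsWithin_le_nhds (s := {0}ᶜ))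
      exact tendsto_nhds_unique t1 t2
    let D : ℝ × ℝ → ℝ := fun p => if p.1 = p.2 then deriv q p.1 else (q p.1 - q p.2) / (p.1 - p.2)
    have hD := dd_smooth ε q hq D (by intro x y hxy; simp [D, hxy]) (by simp [D])
    refine ⟨fun x => D (x, 0), ?_, ?_⟩
    · refine hD.comp (f := fun x : ℝ => (x, (0:ℝ))) (by fun_prop) ?_
      intro x hx
      exact ⟨hx, by constructor <;> simp [hε]⟩
    · intro x
      rw [hhq x, pow_succ, mul_assoc]
      congr 1
      by_cases hx : x = 0
      · simp [hx, hq0]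
      · simp [D, hx, hq0]
        field_simp

lemma deriv_bigO (ε : ℝ) (hε : 0 < ε) (h : ℝ → ℝ) (hh : ContDiffOn ℝ (⊤ : ℕ∞) h (Ioo (-ε) ε)) (n : ℕ)
    (hO : h =O[nhds 0] (fun x : ℝ => |x| ^ (n + 1))) :
    deriv h =O[nhds 0] (fun x : ℝ => |x| ^ n) := by
  obtain ⟨q, hq, hhq⟩ := factor ε hε h hh (n + 1) hO
  have hmem : Ioo (-ε) ε ∈ nhds (0:ℝ) := Ioo_mem_nhds (by linarith) hε
  have hqc : ContinuousAt q 0 := hq.continuousOn.continuousAt hmem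
  have hqc' : ContinuousAt (deriv q) 0 :=
    (hq.continuousOn_deriv_of_isOpen isOpen_Ioo (by simp)).continuousAt hmem
  have he : (fun x => x ^ n * (((n + 1 : ℕ) : ℝ) * q x + x * deriv q x)) =ᶠ[nhds 0] deriv h := by
    filter_upwards [hmem] with x hx
    have hd : HasDerivAt q (deriv q x) x :=
      ((hq.contDiffAt (Ioo_mem_nhds hx.1 hx.2)).differentiableAt (by simp)).hasDerivAt
    have := (hasDerivAt_pow (n + 1) x).mul hd
    have e : h = (fun x => x ^ (n + 1)) * q := funext hhq
    rw [e, this.deriv]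
    simp only [Nat.add_sub_cancel]
    ring
  refine IsBigO.congr' ?_ he EventuallyEq.rfl
  have hc : ContinuousAt (fun x => (((n + 1 : ℕ) : ℝ) * q x + x * deriv q x)) 0 := by fun_prop
  have hb := hc.isBigO_one (F := ℝ)
  have ha : (fun x : ℝ => x ^ n) =O[nhds 0] (fun x : ℝ => |x| ^ n) :=
    IsBigO.of_bound 1 (by simp)
  simpa using ha.mul hb

/-- The first divided difference `f(x,y) = (g(x)−g(y))/(x−y)` (extended to the diagonal by
`g'`) of a smooth function `g` on `(−ε,ε)` is smooth on `(−ε,ε)²`, and if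
`g(x) = Σ_{k=0}^n a_k x^k + O(|x|^{n+1})` then
`f(x,y) = Σ_{k=1}^n a_k Σ_{i+j=k−1} x^i y^j + O((x²+y²)^{n/2})`. -/
theorem divided_difference_smooth_and_expansion
    (ε : ℝ) (hε : 0 < ε) (g : ℝ → ℝ) (hg : ContDiffOn ℝ (⊤ : ℕ∞) g (Ioo (-ε) ε))
    (f : ℝ × ℝ → ℝ)
    (hf_off : ∀ x y : ℝ, x ≠ y → f (x, y) = (g x - g y) / (x - y))
    (hf_diag : ∀ x : ℝ, f (x, x) = deriv g x)
    (n : ℕ) (a : ℕ → ℝ)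
    (hTaylor : (fun x : ℝ => g x - ∑ k ∈ Finset.range (n + 1), a k * x ^ k)
      =O[nhds 0] (fun x : ℝ => |x| ^ (n + 1))) :
    ContDiffOn ℝ (⊤ : ℕ∞) f (Ioo (-ε) ε ×ˢ Ioo (-ε) ε) ∧
      (fun p : ℝ × ℝ =>
          f p - ∑ k ∈ Finset.Icc 1 n,
            a k * ∑ i ∈ Finset.range k, p.1 ^ i * p.2 ^ (k - 1 - i))
        =O[nhds (0, 0)] (fun p : ℝ × ℝ => Real.sqrt (p.1 ^ 2 + p.2 ^ 2) ^ n) := by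
  refine ⟨dd_smooth ε g hg f hf_off hf_diag, ?_⟩
  let P : ℝ → ℝ := fun x => ∑ k ∈ Finset.range (n + 1), a k * x ^ k
  let h : ℝ → ℝ := fun x => g x - P x
  have hP : ContDiff ℝ (⊤ : ℕ∞) P := by fun_prop
  have hh : ContDiffOn ℝ (⊤ : ℕ∞) h (Ioo (-ε) ε) := hg.sub hP.contDiffOn
  obtain ⟨C, hC⟩ := (deriv_bigO ε hε h hh n hTaylor).bound
  obtain ⟨δ, hδ, hball⟩ := Metric.eventually_nhds_iff.1
    (hC.and (Ioo_mem_nhds (show -ε < 0 by linarith) hε))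
  have hS : ∀ F : ℕ → ℝ, F 0 = 0 →
      ∑ k ∈ Finset.range (n + 1), F k = ∑ k ∈ Finset.Icc 1 n, F k := by
    intro F hF
    symm
    apply Finset.sum_subset
    · intro k hk
      simp only [Finset.mem_Icc, Finset.mem_range] at *
      omega
    · intro k hk hk'
      have : k = 0 := by
        simp only [Finset.mem_Icc, Finset.mem_range] at *
        omega
      rw [this, hF]
  have hC' : ∀ z : ℝ, |z| < δ → |deriv h z| ≤ |C| * |z| ^ n := by
    intro z hz
    have := (hball (y := z) (by simpa using hz)).1
    simp only [norm_pow, Real.norm_eq_abs, abs_abs] at this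
    exact this.trans (by gcongr; exact le_abs_self C)
  have hdiff : ∀ z : ℝ, |z| < δ → DifferentiableAt ℝ h z ∧ DifferentiableAt ℝ g z := by
    intro z hz
    have hm := (hball (y := z) (by simpa using hz)).2
    exact ⟨(hh.contDiffAt (Ioo_mem_nhds hm.1 hm.2)).differentiableAt (by simp),
      (hg.contDiffAt (Ioo_mem_nhds hm.1 hm.2)).differentiableAt (by simp)⟩
  refine IsBigO.of_bound |C| ?_
  have h1 : ∀ᶠ p : ℝ × ℝ in nhds (0, 0), |p.1| < δ :=
    (continuous_fst.abs.continuousAt (x := ((0:ℝ), (0:ℝ)))).eventually_lt_const (by simpa)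
  have h2 : ∀ᶠ p : ℝ × ℝ in nhds (0, 0), |p.2| < δ :=
    (continuous_snd.abs.continuousAt (x := ((0:ℝ), (0:ℝ)))).eventually_lt_const (by simpa)
  filter_upwards [h1, h2]
  rintro ⟨x, y⟩ hx hy
  simp only at hx hy ⊢
  rw [norm_pow, Real.norm_of_nonneg (Real.sqrt_nonneg _), Real.norm_eq_abs]
  set N := Real.sqrt (x ^ 2 + y ^ 2) with hN
  have hxN : |x| ≤ N := Real.abs_le_sqrt (by nlinarith [sq_nonneg y])
  have hyN : |y| ≤ N := Real.abs_le_sqrt (by nlinarith [sq_nonneg x])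
  by_cases hxy : x = y
  · subst hxy
    have hPd : HasDerivAt P (∑ k ∈ Finset.range (n + 1), a k * ((k : ℝ) * x ^ (k - 1))) x :=
      HasDerivAt.fun_sum fun k _ => (hasDerivAt_pow k x).const_mul (a k)
    have hd : deriv h x = deriv g x - ∑ k ∈ Finset.range (n + 1), a k * ((k : ℝ) * x ^ (k - 1)) :=
      ((hdiff x hx).2.hasDerivAt.sub hPd).deriv
    have e : f (x, x) - ∑ k ∈ Finset.Icc 1 n,
        a k * ∑ i ∈ Finset.range k, x ^ i * x ^ (k - 1 - i) = deriv h x := by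
      rw [hf_diag, hd, hS _ (by simp)]
      congr 1
      apply Finset.sum_congr rfl
      intro k _
      congr 1
      rw [Finset.sum_congr rfl (g := fun _ => x ^ (k - 1))]
      · simp
      · intro i hi
        rw [← pow_add]
        congr 1
        have := Finset.mem_range.1 hi
        omega
    rw [e]
    exact (hC' x hx).trans (by gcongr)
  · have hne : x - y ≠ 0 := sub_ne_zero.2 hxy
    have e : f (x, y) - ∑ k ∈ Finset.Icc 1 n,
        a k * ∑ i ∈ Finset.range k, x ^ i * y ^ (k - 1 - i) = (h x - h y) / (x - y) := by
      rw [hf_off x y hxy, eq_div_iff hne, sub_mul, div_mul_cancel₀ _ hne, Finset.sum_mul]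
      have : ∑ k ∈ Finset.Icc 1 n,
          (a k * ∑ i ∈ Finset.range k, x ^ i * y ^ (k - 1 - i)) * (x - y) = P x - P y := by
        simp only [P, ← Finset.sum_sub_distrib]
        rw [hS _ (by simp)]
        apply Finset.sum_congr rfl
        intro k _
        rw [mul_assoc, (Commute.all x y).geom_sum₂_mul]
        ring
      rw [this]
      simp only [h]
      ring
    rw [e, abs_div, div_le_iff₀ (abs_pos.2 hne)]
    have hs : ∀ z ∈ uIcc y x, |z| ≤ N ∧ |z| < δ := by
      intro z hz
      have hz' : |z| ≤ max |y| |x| := by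
        rcases mem_uIcc.1 hz with hz | hz
        · exact abs_le_max_abs_abs hz.1 hz.2
        · rw [max_comm]
          exact abs_le_max_abs_abs hz.1 hz.2
      exact ⟨hz'.trans (max_le hyN hxN), hz'.trans_lt (max_lt hy hx)⟩
    have := (convex_uIcc y x).norm_image_sub_le_of_norm_deriv_le (f := h) (C := |C| * N ^ n)
      (fun z hz => (hdiff z (hs z hz).2).1)
      (fun z hz => (hC' z (hs z hz).2).trans (by gcongr; exact (hs z hz).1))
      left_mem_uIcc right_mem_uIcc
    simpa [Real.norm_eq_abs] using this
end

section
/- Let a, b, α > 0 and β ∈ ℝ, let ψ be a smooth real function on a neighborhood of 0 with ψ(0)=b, ψ'(0)=−α, ψ''(0)=2β, and define m(r) := ψ((a−r)²) for r in a neighborhood of a; for each ν < b sufficiently close to b let R(ν) < a be the unique solution near a of m(R)=ν, and define φ(ν) := 2∫_{R(ν)}^{a} ν / (m(r)√(m(r)²−ν²)) dr. Then, as ν → b⁻, φ(ν) = π/√(2αb) + ((6bβ − α²)π / (8√2 · b^{3/2} · α^{5/2}))·(b−ν) + O((b−ν)²). -/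
open Set Asymptotics Filter Real

lemma px_incr {E E' : ℝ → ℝ} {x0 : ℝ} {n : ℕ} (hE : ∀ᶠ x in nhds x0, HasDerivAt E (E' x) x)
    (hE' : E' =O[nhds x0] (fun x => (x - x0) ^ n)) :
    ∃ C, ∃ ε > 0, ∀ r < ε, ∀ x ∈ Metric.closedBall x0 r, ∀ y ∈ Metric.closedBall x0 r,
      |E x - E y| ≤ C * r ^ n * |x - y| := by
  obtain ⟨C, hCpos, hC⟩ := hE'.exists_pos
  obtain ⟨ε, hε, h⟩ := Metric.eventually_nhds_iff.1 (hE.and hC.bound)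
  refine ⟨C, ε, hε, fun r hr x hx y hy => ?_⟩
  have := (convex_closedBall x0 r).norm_image_sub_le_of_norm_hasDerivWithin_le (f := E) (f' := E')
    (C := C * r ^ n) (x := y) (y := x) ?_ ?_ hy hx
  · simpa using this
  · intro z hz
    exact (h (lt_of_le_of_lt hz hr)).1.hasDerivWithinAt
  · intro z hz
    refine (h (lt_of_le_of_lt hz hr)).2.trans ?_
    have : |z - x0| ≤ r := by simpa [Real.dist_eq] using hz
    simp only [norm_pow, Real.norm_eq_abs]
    gcongr

lemma px_taylor {f : ℝ → ℝ} {x0 : ℝ} (hf : ContDiffAt ℝ 2 f x0) :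
    (fun x => f x - f x0 - deriv f x0 * (x - x0)) =O[nhds x0] (fun x => (x - x0) ^ 2) := by
  have hd : ∀ᶠ x in nhds x0, HasDerivAt (fun x => f x - f x0 - deriv f x0 * (x - x0))
      (deriv f x - deriv f x0) x := by
    filter_upwards [hf.eventually (by simp)] with x hx
    have h1 := (hx.differentiableAt (by simp)).hasDerivAt
    have h2 := ((hasDerivAt_id x).sub_const x0).const_mul (deriv f x0)
    refine ((h1.sub_const (f x0)).sub h2).congr_deriv ?_
    simp
  have hd2 : DifferentiableAt ℝ (deriv f) x0 :=
    (hf.derivWithin (m := 1) (by norm_num)).differentiableAt (by simp)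
  have hO : (fun x => deriv f x - deriv f x0) =O[nhds x0] (fun x => (x - x0) ^ 1) := by
    simpa using hd2.isBigO_sub
  obtain ⟨C, ε, hε, h⟩ := px_incr hd hO
  refine IsBigO.of_bound C ?_
  filter_upwards [Metric.ball_mem_nhds x0 hε] with x hx
  have := h |x - x0| (by simpa [Real.dist_eq] using hx) x (by simp [Real.dist_eq]) x0 (by simp)
  simp only [norm_pow, Real.norm_eq_abs]
  simpa [pow_two, mul_assoc] using this

/-- First-order expansion `q = c + q1 + O(w^2)`, `q1 = O(w)`. -/
def PxExp {X : Type*} (l : Filter X) (w q : X → ℝ) (c : ℝ) (q1 : X → ℝ) : Prop :=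
  (fun x => q x - (c + q1 x)) =O[l] (fun x => w x ^ 2) ∧ q1 =O[l] w

variable {X : Type*} {l : Filter X} {w : X → ℝ}

lemma PxExp.diff {q q1 : X → ℝ} {c : ℝ} (h : PxExp l w q c q1) (hw : Tendsto w l (nhds 0)) :
    (fun x => q x - c) =O[l] w := by
  have h1 : (fun x => w x ^ 2) =O[l] w := by
    simpa [pow_two] using (hw.isBigO_one ℝ).mul (isBigO_refl w l)
  refine ((h.1.trans h1).add h.2).congr_left fun x => by ring

lemma PxExp.tendsto {q q1 : X → ℝ} {c : ℝ} (h : PxExp l w q c q1) (hw : Tendsto w l (nhds 0)) :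
    Tendsto q l (nhds c) := by
  have := (h.diff hw).trans_tendsto hw
  simpa using this.add_const c

lemma PxExp.mul {q q1 p p1 : X → ℝ} {c d : ℝ} (h : PxExp l w q c q1) (k : PxExp l w p d p1)
    (hw : Tendsto w l (nhds 0)) :
    PxExp l w (fun x => q x * p x) (c * d) (fun x => c * p1 x + d * q1 x) := by
  refine ⟨?_, (k.2.const_mul_left c).add (h.2.const_mul_left d)⟩
  have h1 := (h.diff hw).mul (k.diff hw)
  have h1' : (fun x => (q x - c) * (p x - d)) =O[l] (fun x => w x ^ 2) := by
    simpa [pow_two] using h1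
  refine (h1'.add ((k.1.const_mul_left c).add (h.1.const_mul_left d))).congr_left fun x => by ring

lemma PxExp.comp {q q1 : X → ℝ} {c : ℝ} {f : ℝ → ℝ} (h : PxExp l w q c q1)
    (hf : ContDiffAt ℝ 2 f c) (hw : Tendsto w l (nhds 0)) :
    PxExp l w (fun x => f (q x)) (f c) (fun x => deriv f c * q1 x) := by
  refine ⟨?_, h.2.const_mul_left _⟩
  have h1 := (px_taylor hf).comp_tendsto (h.tendsto hw)
  have h2 := h1.trans ((h.diff hw).pow 2)
  refine (h2.add (h.1.const_mul_left (deriv f c))).congr_left fun x => ?_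
  simp only [Function.comp]; ring

/-- The base region filter. -/
def pxl : Filter (ℝ × ℝ) := nhdsWithin (0, 0) {p | 0 ≤ p.1 ∧ p.1 < p.2}

lemma pxl_iff {P : ℝ × ℝ → Prop} : (∀ᶠ p in pxl, P p) ↔
    ∃ ε > 0, ∀ u U : ℝ, 0 ≤ u → u < U → U < ε → P (u, U) := by
  unfold pxl
  rw [eventually_nhdsWithin_iff, Metric.eventually_nhds_iff]
  constructor
  · rintro ⟨ε, hε, h⟩
    refine ⟨ε, hε, fun u U h1 h2 h3 => h ?_ ⟨h1, h2⟩⟩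
    simp only [Prod.dist_eq, Real.dist_eq, sub_zero]
    rw [abs_of_nonneg h1, abs_of_pos (by linarith)]
    exact max_lt (by linarith) h3
  · rintro ⟨ε, hε, h⟩
    refine ⟨ε, hε, fun p hp h2 => h p.1 p.2 h2.1 h2.2 ?_⟩
    simp only [Prod.dist_eq, Real.dist_eq, sub_zero] at hp
    exact (le_abs_self _).trans_lt ((le_max_right _ _).trans_lt hp)

lemma px_H (b α : ℝ) (hb : 0 < b) (hα : 0 < α) (β : ℝ)
    (ψ : ℝ → ℝ) (hψ : ContDiffAt ℝ 3 ψ 0)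
    (hψ0 : ψ 0 = b) (hψ1 : deriv ψ 0 = -α) (hψ2 : deriv (deriv ψ) 0 = 2 * β) :
    PxExp pxl (fun p => p.2) (fun p => (ψ p.1 ^ 2 - ψ p.2 ^ 2) / (p.2 - p.1)) (2 * α * b)
        (fun p => -(α ^ 2 + 2 * b * β) * (p.1 + p.2)) ∧
    ∃ c1 c2 : ℝ, 
      c1 / 2 + c2 = (6 * b * β - α ^ 2) / (8 * α * b * √(2 * α * b)) ∧
    PxExp pxl (fun p => p.2) (fun p => ψ p.2 * ((ψ p.1)⁻¹ *
      (√((ψ p.1 ^ 2 - ψ p.2 ^ 2) / (p.2 - p.1)))⁻¹)) (√(2 * α * b))⁻¹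
      (fun p => c1 * p.1 + c2 * p.2) := by
  have hw : Tendsto (fun p : ℝ × ℝ => p.2) pxl (nhds 0) :=
    (continuous_snd.tendsto' (0, 0) 0 rfl).mono_left nhdsWithin_le_nhds
  have hw1 : Tendsto (fun p : ℝ × ℝ => p.1) pxl (nhds 0) :=
    (continuous_fst.tendsto' (0, 0) 0 rfl).mono_left nhdsWithin_le_nhds
  have h12 : (fun p : ℝ × ℝ => p.1) =O[pxl] (fun p => p.2) := by
    refine IsBigO.of_bound 1 (pxl_iff.2 ⟨1, one_pos, fun u U h1 h2 _ => ?_⟩)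
    simp only [Real.norm_eq_abs]
    rw [abs_of_nonneg h1, abs_of_pos (by linarith)]; linarith
  have e1 : PxExp pxl (fun p => p.2) (fun p => p.1) 0 (fun p => p.1) :=
    ⟨by simpa using isBigO_zero _ _, h12⟩
  have e2 : PxExp pxl (fun p => p.2) (fun p => p.2) 0 (fun p => p.2) :=
    ⟨by simpa using isBigO_zero _ _, isBigO_refl _ _⟩
  have hψ' : ContDiffAt ℝ 2 ψ 0 := hψ.of_le (by norm_num)
  have p1 := e1.comp hψ' hw
  have p2 := e2.comp hψ' hw
  rw [hψ0, hψ1] at p1 p2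
  have hdψ : ContDiffAt ℝ 2 (deriv ψ) 0 := hψ.derivWithin (by norm_num)
  have G : PxExp pxl (fun p => p.2) (fun p => (ψ p.1 ^ 2 - ψ p.2 ^ 2) / (p.2 - p.1)) (2 * α * b)
        (fun p => -(α ^ 2 + 2 * b * β) * (p.1 + p.2)) := by
    refine ⟨?_, (h12.add (isBigO_refl _ _)).const_mul_left _⟩
    have hP : ContDiffAt ℝ 2 (fun u => 2 * ψ u * deriv ψ u) 0 :=
      (contDiffAt_const.mul hψ').mul hdψ
    have hPd : deriv (fun u => 2 * ψ u * deriv ψ u) 0 = 2 * (α ^ 2 + 2 * b * β) := by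
      have h1 := (hψ'.differentiableAt (by simp)).hasDerivAt
      have h2 := (hdψ.differentiableAt (by simp)).hasDerivAt
      refine ((h1.const_mul 2).mul h2).deriv.trans ?_
      rw [hψ0, hψ1, hψ2]; ring
    have hT := px_taylor hP
    rw [hPd, hψ0, hψ1] at hT
    have hd : ∀ᶠ x in nhds (0:ℝ), HasDerivAt
        (fun u => ψ u ^ 2 + 2 * α * b * u - (α ^ 2 + 2 * b * β) * u ^ 2)
        (2 * ψ x * deriv ψ x - 2 * b * -α - 2 * (α ^ 2 + 2 * b * β) * (x - 0)) x := by
      filter_upwards [hψ'.eventually (by simp)] with x hx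
      have h1 := (hx.differentiableAt (by simp)).hasDerivAt
      have := ((h1.pow 2).add ((hasDerivAt_id x).const_mul (2 * α * b))).sub
        (((hasDerivAt_id x).pow 2).const_mul (α ^ 2 + 2 * b * β))
      refine this.congr_deriv ?_
      simp; ring
    obtain ⟨C, ε, hε, h⟩ := px_incr hd hT
    refine IsBigO.of_bound C (pxl_iff.2 ⟨ε, hε, fun u U h1 h2 h3 => ?_⟩)
    have h4 := h U h3 u (by simp [abs_of_nonneg h1, h2.le]) U
      (by simp [abs_of_pos (h1.trans_lt h2)])
    have h5 : 0 < U - u := by linarith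
    have h6 : (ψ u ^ 2 - ψ U ^ 2) / (U - u) -
        (2 * α * b + -(α ^ 2 + 2 * b * β) * (u + U)) =
        (ψ u ^ 2 + 2 * α * b * u - (α ^ 2 + 2 * b * β) * u ^ 2 - 
        (ψ U ^ 2 + 2 * α * b * U - (α ^ 2 + 2 * b * β) * U ^ 2)) / (U - u) := by
      field_simp; ring
    simp only [Real.norm_eq_abs]
    rw [h6, abs_div, abs_of_pos h5, div_le_iff₀ h5, abs_of_nonneg (sq_nonneg U)]
    rw [abs_sub_comm u U, abs_of_pos h5] at h4
    exact h4
  refine ⟨G, ?_⟩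
  have hg0 : 0 < 2 * α * b := by positivity
  have hsq : HasDerivAt (fun x => (√x)⁻¹) (-(1 / (2 * √(2 * α * b))) / √(2 * α * b) ^ 2)
      (2 * α * b) :=
    (Real.hasDerivAt_sqrt hg0.ne').inv (Real.sqrt_pos.2 hg0).ne'
  have i1 := G.comp (f := fun x => (√x)⁻¹)
    ((Real.contDiffAt_sqrt hg0.ne').inv (Real.sqrt_pos.2 hg0).ne') hw
  have i2 := p1.comp (f := fun x => x⁻¹) (contDiffAt_inv ℝ hb.ne') hw
  have i3 := p2.mul (i2.mul i1 hw) hw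
  rw [hsq.deriv, deriv_inv, mul_inv_cancel_left₀ hb.ne', Real.sq_sqrt hg0.le] at i3
  set s := √(2 * α * b) with hs
  have hs0 : 0 < s := Real.sqrt_pos.2 hg0
  refine ⟨α / (b * s) + (α ^ 2 + 2 * b * β) / (4 * α * b * s),
    -α / (b * s) + (α ^ 2 + 2 * b * β) / (4 * α * b * s), ?_, ?_⟩
  · field_simp; ring
  · convert i3 using 2 with p
    field_simp
    ring

lemma px_int (a ρ δ K c0 c1 c2 : ℝ) (hρ : 0 < ρ) (ψ : ℝ → ℝ)
    (hψ : ContinuousOn ψ (Ioo (-δ) δ)) (hU : ρ ^ 2 < δ)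
    (hK : ∀ u, 0 ≤ u → u < ρ ^ 2 → |ψ (ρ ^ 2) * ((ψ u)⁻¹ *
      (√((ψ u ^ 2 - ψ (ρ ^ 2) ^ 2) / (ρ ^ 2 - u)))⁻¹) - (c0 + (c1 * u + c2 * ρ ^ 2))| ≤ K) :
    |(∫ r in (a - ρ)..a, ψ (ρ ^ 2) / (ψ ((a - r) ^ 2) *
      √(ψ ((a - r) ^ 2) ^ 2 - ψ (ρ ^ 2) ^ 2))) - π / 2 * (c0 + (c1 / 2 + c2) * ρ ^ 2)|
      ≤ K * (π / 2) := by
  set s : Set ℝ := Ioo 0 (π / 2) with hs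
  have hpi := Real.pi_pos
  have hsin : ∀ θ ∈ s, 0 < sin θ ∧ sin θ < 1 ∧ 0 < cos θ := by
    intro θ hθ
    have hc : 0 < cos θ := cos_pos_of_mem_Ioo ⟨by linarith [hθ.1], hθ.2⟩
    have h0 : 0 < sin θ := sin_pos_of_pos_of_lt_pi hθ.1 (by linarith [hθ.2])
    exact ⟨h0, by nlinarith [sin_sq_add_cos_sq θ], hc⟩
  have himg : (fun θ => a - ρ * sin θ) '' s = Ioo (a - ρ) a := by
    ext r
    constructor
    · rintro ⟨θ, hθ, rfl⟩
      obtain ⟨h0, h1, -⟩ := hsin θ hθ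
      constructor
      · simp only; nlinarith
      · simp only; nlinarith
    · rintro ⟨h1, h2⟩
      have h3 : (a - r) / ρ < 1 := by rw [div_lt_one hρ]; linarith
      have h4 : 0 < (a - r) / ρ := div_pos (by linarith) hρ
      refine ⟨arcsin ((a - r) / ρ), ⟨arcsin_pos.2 h4, arcsin_lt_pi_div_two.2 h3⟩, ?_⟩
      simp only
      rw [sin_arcsin (by linarith) h3.le]
      field_simp; ring
  have hinj : InjOn (fun θ => a - ρ * sin θ) s := by
    intro x hx y hy hxy
    have : sin x = sin y := by
      simp only at hxy
      exact mul_left_cancel₀ hρ.ne' (by linarith)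
    exact injOn_sin ⟨by linarith [hx.1], hx.2.le⟩ ⟨by linarith [hy.1], hy.2.le⟩ this
  have hder : ∀ θ ∈ s, HasDerivWithinAt (fun θ => a - ρ * sin θ) (-(ρ * cos θ)) s θ := by
    intro θ _
    exact (((hasDerivAt_sin θ).const_mul ρ).const_sub a).hasDerivWithinAt
  rw [intervalIntegral.integral_of_le (by linarith), MeasureTheory.integral_Ioc_eq_integral_Ioo,
    ← himg, MeasureTheory.integral_image_eq_integral_abs_deriv_smul measurableSet_Ioo hder hinj]
  set H : ℝ → ℝ := fun θ => ψ (ρ ^ 2) * ((ψ ((ρ * sin θ) ^ 2))⁻¹ *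
      (√((ψ ((ρ * sin θ) ^ 2) ^ 2 - ψ (ρ ^ 2) ^ 2) / (ρ ^ 2 - (ρ * sin θ) ^ 2)))⁻¹) with hH
  set L : ℝ → ℝ := fun θ => c0 + (c1 * (ρ * sin θ) ^ 2 + c2 * ρ ^ 2) with hL
  have hlt : ∀ θ ∈ s, (ρ * sin θ) ^ 2 < ρ ^ 2 := by
    intro θ hθ
    obtain ⟨h0, h1, -⟩ := hsin θ hθ
    have : ρ * sin θ < ρ := by nlinarith
    have : 0 < ρ * sin θ := by positivity
    nlinarith
  have hEq : EqOn (fun x => |(-(ρ * cos x))| • (ψ (ρ ^ 2) / (ψ ((a - (a - ρ * sin x)) ^ 2) *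
      √(ψ ((a - (a - ρ * sin x)) ^ 2) ^ 2 - ψ (ρ ^ 2) ^ 2)))) H s := by
    intro θ hθ
    obtain ⟨h0, h1, h2⟩ := hsin θ hθ
    have hρc : 0 < ρ * cos θ := by positivity
    have e1 : a - (a - ρ * sin θ) = ρ * sin θ := by ring
    have e2 : ρ ^ 2 - (ρ * sin θ) ^ 2 = (ρ * cos θ) ^ 2 := by
      rw [mul_pow, mul_pow, cos_sq']; ring
    simp only [hH, smul_eq_mul]
    rw [e1, e2, abs_neg, abs_of_pos hρc, Real.sqrt_div' _ (sq_nonneg _), Real.sqrt_sq hρc.le,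
      inv_div, div_eq_mul_inv, mul_inv]
    ring
  rw [MeasureTheory.setIntegral_congr_fun measurableSet_Ioo hEq]
  have hb : ∀ θ ∈ s, ‖H θ - L θ‖ ≤ K := fun θ hθ => hK _ (sq_nonneg _) (hlt θ hθ)
  have hLint : MeasureTheory.IntegrableOn L s := by
    have : Continuous L := by fun_prop
    exact (this.integrableOn_Icc (a := 0) (b := π / 2)).mono_set Ioo_subset_Icc_self
  have hψc : ContinuousOn (fun θ => ψ ((ρ * sin θ) ^ 2)) s := by
    refine hψ.comp (by fun_prop) fun θ hθ => ⟨?_, (hlt θ hθ).trans hU⟩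
    nlinarith [sq_nonneg (ρ * sin θ), sq_nonneg ρ]
  have hHm : AEMeasurable H (MeasureTheory.volume.restrict s) := by
    have h1 : AEMeasurable (fun θ => ψ ((ρ * sin θ) ^ 2)) (MeasureTheory.volume.restrict s) :=
      hψc.aemeasurable measurableSet_Ioo
    have h2 : AEMeasurable (fun θ => ρ ^ 2 - (ρ * sin θ) ^ 2) (MeasureTheory.volume.restrict s) :=
      Continuous.aemeasurable (by fun_prop)
    exact (h1.inv.mul ((((h1.pow_const 2).sub_const _).div h2).sqrt.inv)).const_mul _
  have hHL : MeasureTheory.IntegrableOn (fun θ => H θ - L θ) s := by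
    have hfin : MeasureTheory.IsFiniteMeasure (MeasureTheory.volume.restrict s) :=
      ⟨by simp [hs]⟩
    refine MeasureTheory.Integrable.of_bound
      (hHm.aestronglyMeasurable.sub hLint.aestronglyMeasurable) K ?_
    exact (MeasureTheory.ae_restrict_iff' measurableSet_Ioo).2 (Eventually.of_forall hb)
  have hHint : MeasureTheory.IntegrableOn H s := by
    refine (hHL.add hLint).congr_fun (fun θ _ => ?_) measurableSet_Ioo
    simp
  have hLval : ∫ θ in s, L θ = π / 2 * (c0 + (c1 / 2 + c2) * ρ ^ 2) := by
    rw [hs, ← MeasureTheory.integral_Ioc_eq_integral_Ioo,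
      ← intervalIntegral.integral_of_le (by linarith)]
    have : L = fun θ => (c0 + c2 * ρ ^ 2) + (c1 * ρ ^ 2) * sin θ ^ 2 := by
      funext θ; simp only [hL]; ring
    rw [this, intervalIntegral.integral_add (by simp)
      (Continuous.intervalIntegrable (by fun_prop) _ _), intervalIntegral.integral_const_mul,
      integral_sin_sq]
    simp
    ring
  rw [← hLval, ← MeasureTheory.integral_sub hHint hLint]
  have := MeasureTheory.norm_setIntegral_le_of_norm_le_const (μ := MeasureTheory.volume)
    (s := s) (f := fun θ => H θ - L θ) (by simp [hs]) hb
  rw [Real.norm_eq_abs] at this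
  refine this.trans (le_of_eq ?_)
  have hp2 : 0 ≤ π / 2 := by positivity
  simp [hs, MeasureTheory.measureReal_def, hp2]

theorem phi_expansion_in_nu
    (a b α : ℝ) (ha : 0 < a) (hb : 0 < b) (hα : 0 < α) (β : ℝ)
    (ψ : ℝ → ℝ) (δ : ℝ) (hδ : 0 < δ) (hψ : ContDiffOn ℝ (⊤ : ℕ∞) ψ (Ioo (-δ) δ))
    (hψ0 : ψ 0 = b) (hψ1 : deriv ψ 0 = -α) (hψ2 : deriv (deriv ψ) 0 = 2 * β)
    (m : ℝ → ℝ) (hm : ∀ r, m r = ψ ((a - r) ^ 2))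
    (R : ℝ → ℝ)
    (hRlt : ∀ᶠ ν in nhdsWithin b (Iio b), R ν < a)
    (hRm : ∀ᶠ ν in nhdsWithin b (Iio b), m (R ν) = ν)
    (hRtend : Tendsto R (nhdsWithin b (Iio b)) (nhds a))
    (φ : ℝ → ℝ)
    (hφ : ∀ ν, φ ν = 2 * ∫ r in R ν..a, ν / (m r * Real.sqrt (m r ^ 2 - ν ^ 2))) :
    (fun ν => φ ν - (π / Real.sqrt (2 * α * b) +
        (6 * b * β - α ^ 2) * π / (8 * Real.sqrt 2 * b ^ ((3:ℝ)/2) * α ^ ((5:ℝ)/2))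
          * (b - ν)))
      =O[nhdsWithin b (Iio b)] (fun ν => (b - ν) ^ 2) := by
  have hψ3 : ContDiffAt ℝ 3 ψ 0 := by
    refine (hψ.contDiffAt (Ioo_mem_nhds (by linarith) hδ)).of_le ?_
    have h3 : ((3 : ℕ∞) : WithTop ℕ∞) ≤ ((⊤ : ℕ∞) : WithTop ℕ∞) := WithTop.coe_le_coe.2 le_top
    exact h3
  obtain ⟨-, c1, c2, hc, hE⟩ := px_H b α hb hα β ψ hψ3 hψ0 hψ1 hψ2
  set U : ℝ → ℝ := fun ν => (a - R ν) ^ 2 with hUdef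
  have hU0 : Tendsto U (nhdsWithin b (Iio b)) (nhds 0) := by
    have := (hRtend.const_sub a).pow 2
    simpa using this
  set c0 := (√(2 * α * b))⁻¹ with hc0
  -- expansion in `U`
  have hA : (fun ν => φ ν - π * (c0 + (c1 / 2 + c2) * U ν)) =O[nhdsWithin b (Iio b)]
      (fun ν => U ν ^ 2) := by
    obtain ⟨C, hC⟩ := hE.1.bound
    obtain ⟨ε, hε, h⟩ := pxl_iff.1 hC
    refine IsBigO.of_bound (C * π) ?_
    filter_upwards [hRlt, hRm, hU0.eventually_lt_const hε, hU0.eventually_lt_const hδ]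
      with ν h1 h2 h3 h4
    have hν : ψ ((a - R ν) ^ 2) = ν := by rw [← hm, h2]
    have key := px_int a (a - R ν) δ (C * U ν ^ 2) c0 c1 c2 (by linarith) ψ hψ.continuousOn h4
      (fun u hu hu' => by
        have := h u (U ν) hu hu' h3
        simpa only [Real.norm_eq_abs, abs_of_nonneg (sq_nonneg (U ν))] using this)
    rw [hν, sub_sub_cancel] at key
    rw [hφ]
    simp only [hm]
    rw [Real.norm_eq_abs, Real.norm_eq_abs, abs_of_nonneg (sq_nonneg (U ν))]
    rw [abs_le] at key ⊢
    simp only [hUdef] at key ⊢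
    constructor <;> linarith [key.1, key.2]
  have hT := (px_taylor (hψ3.of_le (m := 2) (by norm_num))).comp_tendsto hU0
  have hB : (fun ν => α * U ν - (b - ν)) =O[nhdsWithin b (Iio b)] (fun ν => U ν ^ 2) := by
    refine hT.congr' ?_ (by simp [Function.comp_def])
    filter_upwards [hRm] with ν h2
    have hν : ψ ((a - R ν) ^ 2) = ν := by rw [← hm, h2]
    simp only [Function.comp, hψ0, hψ1, hUdef, hν]; ring
  have hUb : U =O[nhdsWithin b (Iio b)] (fun ν => b - ν) := by
    have hlo : (fun ν => U ν ^ 2) =o[nhdsWithin b (Iio b)] U := by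
      simpa [pow_two] using ((isLittleO_one_iff ℝ).2 hU0).mul_isBigO (isBigO_refl U _)
    have h1 := (hB.trans_isLittleO hlo).def (half_pos hα)
    refine IsBigO.of_bound (2 / α) ?_
    filter_upwards [h1] with ν h
    have hUn : 0 ≤ U ν := sq_nonneg _
    simp only [Real.norm_eq_abs, abs_of_nonneg hUn] at h ⊢
    rw [div_mul_eq_mul_div, le_div_iff₀ hα]
    have h5 := le_abs_self (b - ν)
    have h6 := (abs_le.1 h).2
    linarith
  have hU2 := hUb.pow 2
  refine ((hA.trans hU2).add ((hB.trans hU2).const_mul_left (π * (c1 / 2 + c2) / α))).congr_left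
    fun ν => ?_
  have hcoef : (6 * b * β - α ^ 2) * π / (8 * Real.sqrt 2 * b ^ ((3:ℝ)/2) * α ^ ((5:ℝ)/2)) =
      π * (c1 / 2 + c2) / α := by
    have r1 : b ^ ((3:ℝ)/2) = b * √b := by
      rw [show (3:ℝ)/2 = 1 + 1/2 by norm_num, Real.rpow_add hb, Real.rpow_one, Real.sqrt_eq_rpow]
    have r2 : α ^ ((5:ℝ)/2) = α ^ 2 * √α := by
      rw [show (5:ℝ)/2 = (2:ℕ) + 1/2 by norm_num, Real.rpow_add hα, Real.rpow_natCast,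
        Real.sqrt_eq_rpow]
    have r3 : √(2 * α * b) = √2 * √α * √b := by
      rw [Real.sqrt_mul (by positivity), Real.sqrt_mul (by positivity)]
    rw [hc, r1, r2, r3]
    field_simp
  rw [hcoef, hc0]
  field_simp
  ring
end

section
/- Let a, b, α > 0 and β ∈ ℝ, let ψ be a smooth real function on a neighborhood of 0 with ψ(0)=b, ψ'(0)=−α, ψ''(0)=2β, and define m(r) := ψ((a−r)²) for r near a; for ν < b close to b let R(ν) be the unique solution near a of m(R)=ν and φ(ν) := 2∫_{R(ν)}^{a} ν/(m(r)√(m(r)²−ν²)) dr. Then, as ν → b⁻ (equivalently R(ν) → a⁻), φ(ν) = π/√(2bα) + ((6bβ − α²)π / (8√2 · (bα)^{3/2}))·(a−R(ν))² + O((a−R(ν))⁴). -/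
open Set Asymptotics Filter Real

lemma aux_taylor (f : ℝ → ℝ) (c : ℝ) (hf : ContDiffAt ℝ 2 f 0) (hc : HasDerivAt f c 0) :
    (fun x => f x - f 0 - c * x) =O[nhds 0] (fun x => x ^ 2) := by
  have h1 : ∀ᶠ x in nhds (0:ℝ), DifferentiableAt ℝ f x := by
    filter_upwards [hf.eventually (by simp)] with x hx
    exact hx.differentiableAt (by simp)
  have h2 : DifferentiableAt ℝ (deriv f) 0 := by
    have : ContDiffAt ℝ 1 (deriv f) 0 := hf.derivWithin (by norm_num)
    exact this.differentiableAt (by simp)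
  have h3 := h2.hasDerivAt.isBigO_sub
  obtain ⟨C, hC0, hC⟩ := h3.exists_nonneg
  rw [isBigOWith_iff] at hC
  obtain ⟨ε, hε, hball⟩ := Metric.eventually_nhds_iff.1 (h1.and hC)
  refine IsBigO.of_bound C (Metric.eventually_nhds_iff.2 ⟨ε, hε, ?_⟩)
  intro x hx
  have hmv := (convex_uIcc (0:ℝ) x).norm_image_sub_le_of_norm_hasDerivWithin_le
    (f := fun y => f y - c * y) (f' := fun y => deriv f y - c) (C := C * |x|)
    (fun y hy => by
      have hyx : |y| ≤ |x| := by simpa using Set.abs_sub_left_of_mem_uIcc hy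
      have hd := (hball (y := y) (by simp at hx ⊢; linarith)).1
      exact (hd.hasDerivAt.sub (by simpa using (hasDerivAt_id y).const_mul c)).hasDerivWithinAt)
    (fun y hy => by
      have hyx : |y| ≤ |x| := by simpa using Set.abs_sub_left_of_mem_uIcc hy
      have hd := (hball (y := y) (by simp at hx ⊢; linarith)).2
      rw [hc.deriv] at hd
      refine hd.trans ?_
      simp only [sub_zero, norm_eq_abs]
      gcongr) left_mem_uIcc right_mem_uIcc
  simp only [norm_eq_abs, sub_zero, mul_zero] at hmv ⊢
  rw [abs_pow, pow_two, ← mul_assoc]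
  convert hmv using 2
  ring

lemma aux_diff (F F' : ℝ → ℝ) (p q : ℝ) (hF : ∀ᶠ x in nhds 0, HasDerivAt F (F' x) x)
    (hF' : (fun x => F' x - p - q * x) =O[nhds 0] (fun x => x ^ 2)) :
    (fun z : ℝ × ℝ => (F (z.1 * z.2 ^ 2) - F z.1) / (z.1 * (1 - z.2 ^ 2)) - 
      (-p - q / 2 * z.1 * (1 + z.2 ^ 2)))
    =O[nhdsWithin 0 (Ioi 0) ×ˢ 𝓟 (Ioo 0 1)] (fun z => z.1 ^ 2) := by
  obtain ⟨C, hC0, hC⟩ := hF'.exists_nonneg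
  rw [isBigOWith_iff] at hC
  obtain ⟨ε, hε, hball⟩ := Metric.eventually_nhds_iff.1 (hF.and hC)
  refine IsBigO.of_bound C ?_
  rw [eventually_prod_principal_iff]
  filter_upwards [self_mem_nhdsWithin, mem_nhdsWithin_of_mem_nhds (Iio_mem_nhds hε)] with h h0 hh t ht
  simp only [mem_Ioi, mem_Iio] at h0 hh
  have ht2 : t ^ 2 < 1 := by nlinarith [ht.1, ht.2]
  have ht2' : 0 < t ^ 2 := by have := ht.1; positivity
  have hmv := (convex_Icc (0:ℝ) h).norm_image_sub_le_of_norm_hasDerivWithin_le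
    (f := fun y => F y - p * y - q / 2 * y ^ 2) (f' := fun y => F' y - p - q * y) (C := C * h ^ 2)
    (fun y hy => by
      have hd := (hball (y := y) (by simp [abs_of_nonneg hy.1]; linarith [hy.2])).1
      have h1 : HasDerivAt (fun y : ℝ => p * y) p y := by
        simpa using (hasDerivAt_id y).const_mul p
      have h2 : HasDerivAt (fun y : ℝ => q / 2 * y ^ 2) (q * y) y := by
        have := (hasDerivAt_pow 2 y).const_mul (q / 2)
        exact this.congr_deriv (by norm_num; ring)
      exact ((hd.sub h1).sub h2).hasDerivWithinAt)
    (fun y hy => by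
      have hd := (hball (y := y) (by simp [abs_of_nonneg hy.1]; linarith [hy.2])).2
      refine hd.trans ?_
      have := hy.1
      have := hy.2
      simp only [norm_eq_abs, abs_pow, sq_abs]
      gcongr) (x := h) (y := h * t ^ 2) ⟨h0.le, le_rfl⟩ ⟨by positivity, by nlinarith⟩
  have hpos : 0 < h * (1 - t ^ 2) := mul_pos h0 (by linarith)
  have e1 : ‖h * t ^ 2 - h‖ = h * (1 - t ^ 2) := by
    rw [norm_eq_abs, abs_of_nonpos] <;> nlinarith
  rw [e1] at hmv
  have e2 : (F (h * t ^ 2) - F h) / (h * (1 - t ^ 2)) - (-p - q / 2 * h * (1 + t ^ 2))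
    = (F (h * t ^ 2) - p * (h * t ^ 2) - q / 2 * (h * t ^ 2) ^ 2 - (F h - p * h - q / 2 * h ^ 2)) /
       (h * (1 - t ^ 2)) := by
    have : 1 - t ^ 2 ≠ 0 := by linarith
    field_simp
    ring
  rw [e2, norm_div, div_le_iff₀ (by rw [norm_eq_abs]; positivity)]
  rw [norm_eq_abs (h * _), abs_of_pos hpos, norm_pow, norm_eq_abs h, sq_abs]
  exact hmv

lemma aux_int0 : IntervalIntegrable (fun t : ℝ => 1 / √(1 - t ^ 2)) MeasureTheory.volume 0 1 ∧
    ∫ t in (0:ℝ)..1, 1 / √(1 - t ^ 2) = π / 2 := by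
  have hc : ContinuousOn arcsin (Icc 0 1) := continuous_arcsin.continuousOn
  have hd : ∀ t ∈ Ioo (0:ℝ) 1, HasDerivAt arcsin (1 / √(1 - t ^ 2)) t := fun t ht =>
    hasDerivAt_arcsin (by linarith [ht.1]) (by linarith [ht.2])
  have hi : IntervalIntegrable (fun t : ℝ => 1 / √(1 - t ^ 2)) MeasureTheory.volume 0 1 := by
    apply intervalIntegral.intervalIntegrable_deriv_of_nonneg (g := arcsin)
    · rwa [uIcc_of_le zero_le_one]
    · simpa using hd
    · intro t _; positivity
  refine ⟨hi, ?_⟩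
  rw [intervalIntegral.integral_eq_sub_of_hasDerivAt_of_le zero_le_one hc hd hi]
  simp

lemma aux_int2 : IntervalIntegrable (fun t : ℝ => t ^ 2 * (1 / √(1 - t ^ 2))) MeasureTheory.volume 0 1 ∧
    ∫ t in (0:ℝ)..1, t ^ 2 * (1 / √(1 - t ^ 2)) = π / 4 := by
  have hc : ContinuousOn (fun t => (arcsin t - t * √(1 - t ^ 2)) / 2) (Icc 0 1) := by
    apply Continuous.continuousOn
    have := continuous_arcsin
    fun_prop
  have hd : ∀ t ∈ Ioo (0:ℝ) 1, HasDerivAt (fun t => (arcsin t - t * √(1 - t ^ 2)) / 2)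
      (t ^ 2 * (1 / √(1 - t ^ 2))) t := fun t ht => by
    have h1 := hasDerivAt_arcsin (x := t) (by linarith [ht.1]) (by linarith [ht.2])
    have hp : 0 < 1 - t ^ 2 := by nlinarith [ht.1, ht.2]
    have h2 : HasDerivAt (fun t : ℝ => 1 - t ^ 2) (-(2 * t)) t := by
      simpa using (hasDerivAt_pow 2 t).const_sub 1
    have h3 := (h1.sub ((hasDerivAt_id t).mul (h2.sqrt hp.ne'))).div_const 2
    refine h3.congr_deriv ?_
    have : √(1 - t ^ 2) ≠ 0 := (Real.sqrt_pos.2 hp).ne'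
    have hs := Real.sq_sqrt hp.le
    rw [id_eq]
    field_simp
    rw [hs]
    ring
  have hi : IntervalIntegrable (fun t : ℝ => t ^ 2 * (1 / √(1 - t ^ 2))) MeasureTheory.volume 0 1 := by
    apply intervalIntegral.intervalIntegrable_deriv_of_nonneg (g := fun t => (arcsin t - t * √(1 - t ^ 2)) / 2)
    · rwa [uIcc_of_le zero_le_one]
    · simpa using hd
    · intro t _; positivity
  refine ⟨hi, ?_⟩
  rw [intervalIntegral.integral_eq_sub_of_hasDerivAt_of_le zero_le_one hc hd hi]
  simp
  ring

/-- uniform expansion of the regularised integrand -/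
lemma aux_unif (b α β : ℝ) (hb : 0 < b) (hα : 0 < α) (ψ : ℝ → ℝ) (hψ : ContDiffAt ℝ 3 ψ 0)
    (hψ0 : ψ 0 = b) (hψ1 : deriv ψ 0 = -α) (hψ2 : deriv (deriv ψ) 0 = 2 * β) :
    (fun z : ℝ × ℝ => ψ z.1 * (ψ (z.1 * z.2 ^ 2))⁻¹ * 
        (√((ψ (z.1 * z.2 ^ 2) ^ 2 - ψ z.1 ^ 2) / (z.1 * (1 - z.2 ^ 2))))⁻¹
      - (√(2 * b * α))⁻¹ * (1 + z.1 * (((α ^ 2 + 2 * b * β) / (4 * b * α) - α / b) + 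
          ((α ^ 2 + 2 * b * β) / (4 * b * α) + α / b) * z.2 ^ 2)))
    =O[nhdsWithin 0 (Ioi 0) ×ˢ 𝓟 (Ioo 0 1)] (fun z => z.1 ^ 2) := by
  set l : Filter (ℝ × ℝ) := nhdsWithin 0 (Ioi 0) ×ˢ 𝓟 (Ioo 0 1) with hl
  have hψd : HasDerivAt ψ (-α) 0 := by
    rw [← hψ1]; exact (hψ.differentiableAt (by simp)).hasDerivAt
  have hψ' : ContDiffAt ℝ 2 (deriv ψ) 0 := hψ.derivWithin (by norm_num)
  have hψ'd : HasDerivAt (deriv ψ) (2 * β) 0 := by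
    rw [← hψ2]; exact (hψ'.differentiableAt (by simp)).hasDerivAt
  have hg0 : 0 < 2 * b * α := by positivity
  -- limits
  have t1 : Tendsto (fun z : ℝ × ℝ => z.1) l (nhds 0) :=
    (tendsto_fst (f := nhdsWithin (0:ℝ) (Ioi 0)) (g := 𝓟 (Ioo (0:ℝ) 1))).mono_right nhdsWithin_le_nhds
  have b2 : (fun z : ℝ × ℝ => z.2 ^ 2) =O[l] (fun _ => (1:ℝ)) := by
    refine IsBigO.of_bound 1 ?_
    rw [eventually_prod_principal_iff]
    refine Eventually.of_forall fun h t ht => ?_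
    simp only [norm_pow, norm_eq_abs, sq_abs, abs_one]
    nlinarith [ht.1, ht.2]
  have bx : (fun z : ℝ × ℝ => z.1 * z.2 ^ 2) =O[l] (fun z => z.1) := by
    simpa using (isBigO_refl (fun z : ℝ × ℝ => z.1) l).mul b2
  have t2 : Tendsto (fun z : ℝ × ℝ => z.1 * z.2 ^ 2) l (nhds 0) := bx.trans_tendsto t1
  have h11 : (fun z : ℝ × ℝ => z.1) =O[l] (fun _ => (1:ℝ)) := t1.isBigO_one ℝ
  -- three ingredients
  have A : (fun z : ℝ × ℝ => ψ z.1 - (b - α * z.1)) =O[l] (fun z => z.1 ^ 2) := by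
    have := (aux_taylor ψ _ (hψ.of_le (by norm_num)) hψd).comp_tendsto t1
    refine (this.congr_left fun z => ?_)
    simp [hψ0]; ring
  have B : (fun z : ℝ × ℝ => (ψ (z.1 * z.2 ^ 2))⁻¹ - (1 / b + α / b ^ 2 * (z.1 * z.2 ^ 2))) =O[l]
      (fun z => z.1 ^ 2) := by
    have hne : ψ 0 ≠ 0 := by rw [hψ0]; exact hb.ne'
    have := (aux_taylor (fun x => (ψ x)⁻¹) _ ((hψ.of_le (by norm_num)).inv hne)
      (hψd.inv hne)).comp_tendsto t2
    refine ((this.congr_left fun z => ?_).trans (bx.pow 2))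
    simp [hψ0]; ring
  have G : (fun z : ℝ × ℝ => (ψ (z.1 * z.2 ^ 2) ^ 2 - ψ z.1 ^ 2) / (z.1 * (1 - z.2 ^ 2)) - 
      (2 * b * α - (α ^ 2 + 2 * b * β) * z.1 * (1 + z.2 ^ 2))) =O[l] (fun z => z.1 ^ 2) := by
    have hev : ∀ᶠ x in nhds (0:ℝ), HasDerivAt (fun x => ψ x ^ 2) (2 * ψ x * deriv ψ x) x := by
      filter_upwards [hψ.eventually (by simp)] with x hx
      have h := (hx.differentiableAt (by simp)).hasDerivAt.pow 2
      simp only [Nat.cast_ofNat, Nat.add_one_sub_one, pow_one] at h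
      exact h
    have hc : ContDiffAt ℝ 2 (fun x => 2 * ψ x * deriv ψ x) 0 :=
      (contDiffAt_const.mul (hψ.of_le (by norm_num))).mul hψ'
    have hd := (hψd.const_mul 2).mul hψ'd
    have := aux_diff _ _ _ _ hev (aux_taylor _ _ hc hd)
    refine this.congr_left fun z => ?_
    simp only [hψ0, hψ1]
    ring
  set g : ℝ × ℝ → ℝ := fun z => (ψ (z.1 * z.2 ^ 2) ^ 2 - ψ z.1 ^ 2) / (z.1 * (1 - z.2 ^ 2)) with hg
  have b12 : (fun z : ℝ × ℝ => (α ^ 2 + 2 * b * β) * z.1 * (1 + z.2 ^ 2)) =O[l] (fun z => z.1) := by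
    have h1 : (fun z : ℝ × ℝ => 1 + z.2 ^ 2) =O[l] (fun _ => (1:ℝ)) := (isBigO_refl _ _).add b2
    have h2 := ((isBigO_refl (fun z : ℝ × ℝ => z.1) l).const_mul_left (α ^ 2 + 2 * b * β)).mul h1
    simpa using h2
  have s1 : (fun z : ℝ × ℝ => z.1 ^ 2) =O[l] (fun z => z.1) := by
    simpa [pow_two] using (isBigO_refl (fun z : ℝ × ℝ => z.1) l).mul h11
  have Gsmall : (fun z => g z - 2 * b * α) =O[l] (fun z => z.1) := by
    refine ((G.trans s1).sub b12).congr_left fun z => ?_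
    simp only [hg]; ring
  have tG : Tendsto (fun z => g z - 2 * b * α) l (nhds 0) := Gsmall.trans_tendsto t1
  have S : (fun z => (√(g z))⁻¹ - (√(2 * b * α))⁻¹ * 
      (1 + (α ^ 2 + 2 * b * β) / (4 * b * α) * (z.1 * (1 + z.2 ^ 2)))) =O[l] (fun z => z.1 ^ 2) := by
    have hne : (fun x => 2 * b * α + x) 0 ≠ 0 := by simp [hb.ne', hα.ne']
    have hsq : √(2 * b * α + 0) ≠ 0 := by
      rw [add_zero]; exact (Real.sqrt_pos.2 hg0).ne'
    have hc0 : ContDiffAt ℝ 2 (fun x => 2 * b * α + x) 0 := by fun_prop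
    have hd0 : HasDerivAt (fun x => 2 * b * α + x) 1 0 := by
      simpa using (hasDerivAt_id (0:ℝ)).const_add (2 * b * α)
    have h1 := (aux_taylor (fun x => (√(2 * b * α + x))⁻¹) _ ((hc0.sqrt hne).inv hsq)
      ((hd0.sqrt hne).inv hsq)).comp_tendsto tG
    have h2 := h1.trans (Gsmall.pow 2)
    have h3 := (G.const_mul_left (-(1 / (2 * √(2 * b * α))) / (2 * b * α)))
    refine (h2.add h3).congr_left fun z => ?_
    have hs := Real.sq_sqrt hg0.le
    simp only [Function.comp, add_zero, hs]
    rw [add_sub_cancel]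
    rw [add_zero] at hsq
    change _ + _ * (g z - _) = _
    field_simp
    ring
  -- combination
  have bO : ∀ c : ℝ, (fun z : ℝ × ℝ => c) =O[l] (fun _ => (1:ℝ)) := fun c => isBigO_const_const _ one_ne_zero _
  have bt : (fun z : ℝ × ℝ => z.1 * z.2 ^ 2) =O[l] (fun _ => (1:ℝ)) := bx.trans h11
  have bp : (fun z : ℝ × ℝ => b - α * z.1) =O[l] (fun _ => (1:ℝ)) :=
    (bO b).sub (h11.const_mul_left α)
  have bψ : (fun z : ℝ × ℝ => ψ z.1) =O[l] (fun _ => (1:ℝ)) :=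
    ((A.trans (s1.trans h11)).add bp).congr_left fun z => by ring
  have bq : (fun z : ℝ × ℝ => 1 / b + α / b ^ 2 * (z.1 * z.2 ^ 2)) =O[l] (fun _ => (1:ℝ)) :=
    (bO _).add (bt.const_mul_left _)
  have bκ : (fun z : ℝ × ℝ => (ψ (z.1 * z.2 ^ 2))⁻¹) =O[l] (fun _ => (1:ℝ)) :=
    ((B.trans (s1.trans h11)).add bq).congr_left fun z => by ring
  have br : (fun z : ℝ × ℝ => (√(2 * b * α))⁻¹ * 
      (1 + (α ^ 2 + 2 * b * β) / (4 * b * α) * (z.1 * (1 + z.2 ^ 2)))) =O[l] (fun _ => (1:ℝ)) :=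
    (((bO (√(2 * b * α))⁻¹).add ((h11.add bt).const_mul_left
      ((√(2 * b * α))⁻¹ * ((α ^ 2 + 2 * b * β) / (4 * b * α)))))).congr_left fun z => by ring
  have T1 := (bψ.mul bκ).mul S
  have T2 := (bψ.mul B).mul br
  have T3 := (A.mul bq).mul br
  -- remaining polynomial remainder
  have T4 : (fun z : ℝ × ℝ => z.1 ^ 2 * 
      ((√(2 * b * α))⁻¹ * ((α / b * z.2 ^ 2 - α / b) * ((α ^ 2 + 2 * b * β) / (4 * b * α) * (1 + z.2 ^ 2))
        - α ^ 2 / b ^ 2 * z.2 ^ 2 * (1 + (α ^ 2 + 2 * b * β) / (4 * b * α) * (z.1 * (1 + z.2 ^ 2))))))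
      =O[l] (fun z => z.1 ^ 2 * 1) := by
    refine (isBigO_refl _ _).mul ?_
    have q1 := ((b2.const_mul_left (α / b)).sub (bO (α / b))).mul 
      (((bO 1).add b2).const_mul_left ((α ^ 2 + 2 * b * β) / (4 * b * α)))
    simp only [mul_one] at q1
    -- normalise
    have q2' := (b2.const_mul_left (α ^ 2 / b ^ 2)).mul 
      ((bO 1).add (((h11.mul ((bO 1).add b2)).congr_right (g₂ := fun _ => (1:ℝ)) 
        (fun _ => by norm_num)).const_mul_left ((α ^ 2 + 2 * b * β) / (4 * b * α))))
    simp only [mul_one] at q2'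
    exact (q1.sub q2').const_mul_left _
  simp only [mul_one, one_mul] at T1 T2 T3 T4
  refine (((T1.add T2).add T3).add T4).congr_left fun z => ?_
  have hbne := hb.ne'
  have hαne := hα.ne'
  change _ = ψ z.1 * (ψ (z.1 * z.2 ^ 2))⁻¹ * (√(g z))⁻¹ - _
  generalize (√(g z))⁻¹ = X
  generalize (ψ (z.1 * z.2 ^ 2))⁻¹ = Y
  generalize (√(2 * b * α))⁻¹ = Z
  field_simp
  ring

theorem phi_expansion_in_R
    (a b α : ℝ) (ha : 0 < a) (hb : 0 < b) (hα : 0 < α) (β : ℝ)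
    (ψ : ℝ → ℝ) (δ : ℝ) (hδ : 0 < δ) (hψ : ContDiffOn ℝ (⊤ : ℕ∞) ψ (Ioo (-δ) δ))
    (hψ0 : ψ 0 = b) (hψ1 : deriv ψ 0 = -α) (hψ2 : deriv (deriv ψ) 0 = 2 * β)
    (m : ℝ → ℝ) (hm : ∀ r, m r = ψ ((a - r) ^ 2))
    (R : ℝ → ℝ)
    (hRlt : ∀ᶠ ν in nhdsWithin b (Iio b), R ν < a)
    (hRm : ∀ᶠ ν in nhdsWithin b (Iio b), m (R ν) = ν)
    (hRtend : Tendsto R (nhdsWithin b (Iio b)) (nhds a))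
    (φ : ℝ → ℝ)
    (hφ : ∀ ν, φ ν = 2 * ∫ r in R ν..a, ν / (m r * Real.sqrt (m r ^ 2 - ν ^ 2))) :
    (fun ν => φ ν - (π / Real.sqrt (2 * b * α) +
        (6 * b * β - α ^ 2) * π / (8 * Real.sqrt 2 * (b * α) ^ ((3:ℝ)/2))
          * (a - R ν) ^ 2))
      =O[nhdsWithin b (Iio b)] (fun ν => (a - R ν) ^ 4) := by
  have hψc : ContDiffAt ℝ 3 ψ 0 :=
    (hψ.contDiffAt (Ioo_mem_nhds (by linarith) hδ)).of_le (WithTop.coe_le_coe.2 le_top)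
  have hU := aux_unif b α β hb hα ψ hψc hψ0 hψ1 hψ2
  obtain ⟨C, hC0, hC⟩ := hU.exists_nonneg
  rw [isBigOWith_iff, eventually_prod_principal_iff] at hC
  have hlim : Tendsto (fun ν => (a - R ν) ^ 2) (nhdsWithin b (Iio b)) (nhdsWithin 0 (Ioi 0)) := by
    refine tendsto_nhdsWithin_iff.2 ⟨?_, ?_⟩
    · simpa using (hRtend.const_sub a).pow 2
    · filter_upwards [hRlt] with ν hν
      have : 0 < a - R ν := by linarith
      simp only [mem_Ioi]; positivity
  have hdel := hlim.eventually (mem_nhdsWithin_of_mem_nhds (Iio_mem_nhds hδ))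
  refine IsBigO.of_bound (C * π) ?_
  filter_upwards [hRlt, hRm, hlim.eventually hC, hdel] with ν h1 h2 h3 h4
  rw [hm] at h2
  rw [hφ]
  replace h4 : (a - R ν) ^ 2 < δ := h4
  obtain ⟨s, hs⟩ : ∃ s, s = a - R ν := ⟨_, rfl⟩
  have hs0 : 0 < s := by linarith
  have hR : R ν = a - s * 1 := by linarith
  have key : (∫ r in R ν..a, ν / (m r * √(m r ^ 2 - ν ^ 2))) =
      s * ∫ t in (0:ℝ)..1, ν / (m (a - s * t) * √(m (a - s * t) ^ 2 - ν ^ 2)) := by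
    rw [intervalIntegral.mul_integral_comp_sub_mul (f := fun r => ν / (m r * √(m r ^ 2 - ν ^ 2)))]
    rw [hR]; simp
  rw [key]
  rw [← hs] at h2 h3 h4 ⊢
  clear key hR
  have hmt : ∀ t, m (a - s * t) = ψ (s ^ 2 * t ^ 2) := fun t => by
    rw [hm]; congr 1; ring
  simp only [hmt]
  subst h2
  rw [← intervalIntegral.integral_const_mul]
  set f : ℝ → ℝ := fun t => s * (ψ (s ^ 2) / (ψ (s ^ 2 * t ^ 2) * √(ψ (s ^ 2 * t ^ 2) ^ 2 - ψ (s ^ 2) ^ 2)))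
    with hf
  set k1 := (α ^ 2 + 2 * b * β) / (4 * b * α) - α / b with hk1
  set k2 := (α ^ 2 + 2 * b * β) / (4 * b * α) + α / b with hk2
  set c0 := (√(2 * b * α))⁻¹ with hc0
  set g : ℝ → ℝ := fun t => c0 * (1 + s ^ 2 * k1) * (1 / √(1 - t ^ 2)) +
    c0 * s ^ 2 * k2 * (t ^ 2 * (1 / √(1 - t ^ 2))) with hg
  obtain ⟨i0, v0⟩ := aux_int0
  obtain ⟨i2, v2⟩ := aux_int2
  have hgi : IntervalIntegrable g MeasureTheory.volume 0 1 := (i0.const_mul _).add (i2.const_mul _)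
  have hgv : ∫ t in (0:ℝ)..1, g t = c0 * (1 + s ^ 2 * k1) * (π / 2) + c0 * s ^ 2 * k2 * (π / 4) := by
    rw [hg, intervalIntegral.integral_add (i0.const_mul _) (i2.const_mul _),
      intervalIntegral.integral_const_mul, intervalIntegral.integral_const_mul, v0, v2]
  have hbd : ∀ t ∈ Ioo (0:ℝ) 1, ‖f t - g t‖ ≤ C * s ^ 4 * (1 / √(1 - t ^ 2)) := by
    intro t ht
    have hp : 0 < 1 - t ^ 2 := by nlinarith [ht.1, ht.2]
    have hq : 0 < √(1 - t ^ 2) := Real.sqrt_pos.2 hp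
    have hb := h3 t ht
    have hfe : f t = ψ (s ^ 2) * (ψ (s ^ 2 * t ^ 2))⁻¹ *
        (√((ψ (s ^ 2 * t ^ 2) ^ 2 - ψ (s ^ 2) ^ 2) / (s ^ 2 * (1 - t ^ 2))))⁻¹ * (1 / √(1 - t ^ 2)) := by
      have e : ψ (s ^ 2 * t ^ 2) ^ 2 - ψ (s ^ 2) ^ 2 = (s ^ 2 * (1 - t ^ 2)) *
         ((ψ (s ^ 2 * t ^ 2) ^ 2 - ψ (s ^ 2) ^ 2) / (s ^ 2 * (1 - t ^ 2))) := by
        field_simp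
      simp only [hf]
      rw [e, Real.sqrt_mul (by positivity), Real.sqrt_mul (by positivity), Real.sqrt_sq hs0.le, ← e]
      generalize √((ψ (s ^ 2 * t ^ 2) ^ 2 - ψ (s ^ 2) ^ 2) / (s ^ 2 * (1 - t ^ 2))) = X
      simp only [div_eq_mul_inv, mul_inv]
      field_simp
    have hge : g t = c0 * (1 + s ^ 2 * (k1 + k2 * t ^ 2)) * (1 / √(1 - t ^ 2)) := by
      simp only [hg]; ring
    rw [hfe, hge, ← sub_mul, norm_mul, Real.norm_of_nonneg (by positivity : 0 ≤ 1 / √(1 - t ^ 2))]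
    gcongr
    refine hb.trans_eq ?_
    rw [Real.norm_of_nonneg (by positivity)]
    ring
  have hψm : AEMeasurable (fun t => ψ (s ^ 2 * t ^ 2)) (MeasureTheory.volume.restrict (Ioc (0:ℝ) 1)) := by
    apply ContinuousOn.aemeasurable _ measurableSet_Ioc
    refine hψ.continuousOn.comp (by fun_prop) ?_
    intro t ht
    have h5 : t ^ 2 ≤ 1 := by nlinarith [ht.1, ht.2]
    have h6 : s ^ 2 * t ^ 2 ≤ s ^ 2 * 1 := by gcongr
    exact ⟨by linarith [show 0 ≤ s ^ 2 * t ^ 2 by positivity], by linarith⟩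
  have hfm : AEMeasurable f (MeasureTheory.volume.restrict (Ioc (0:ℝ) 1)) := by
    exact (aemeasurable_const.div (hψm.mul ((hψm.pow_const 2).sub aemeasurable_const).sqrt)).const_mul s
  have hae : ∀ᵐ t ∂(MeasureTheory.volume.restrict (Ioc (0:ℝ) 1)), 
      ‖f t - g t‖ ≤ C * s ^ 4 * (1 / √(1 - t ^ 2)) := by
    rw [← MeasureTheory.restrict_Ioo_eq_restrict_Ioc]
    exact (MeasureTheory.ae_restrict_iff' measurableSet_Ioo).2 (Eventually.of_forall hbd)
  have i0' := i0.const_mul (C * s ^ 4)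
  have hfg : IntervalIntegrable (fun t => f t - g t) MeasureTheory.volume 0 1 := by
    rw [intervalIntegrable_iff_integrableOn_Ioc_of_le zero_le_one] at i0' hgi ⊢
    exact MeasureTheory.Integrable.mono' i0' (hfm.aestronglyMeasurable.sub hgi.1) hae
  have hfi : IntervalIntegrable f MeasureTheory.volume 0 1 := by
    simpa using hfg.add hgi
  have hest : ‖(∫ t in (0:ℝ)..1, f t) - ∫ t in (0:ℝ)..1, g t‖ ≤ C * s ^ 4 * (π / 2) := by
    rw [← intervalIntegral.integral_sub hfi hgi, ← v0, ← intervalIntegral.integral_const_mul]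
    exact intervalIntegral.norm_integral_le_of_norm_le zero_le_one
      ((MeasureTheory.ae_restrict_iff' measurableSet_Ioc).1 hae) i0'
  have hconst : π / √(2 * b * α) + (6 * b * β - α ^ 2) * π / (8 * √2 * (b * α) ^ ((3:ℝ)/2)) * s ^ 2
      = 2 * ∫ t in (0:ℝ)..1, g t := by
    have hpow : (b * α) ^ ((3:ℝ)/2) = (b * α) * √(b * α) := by
      rw [show (3:ℝ)/2 = 1 + 1/2 by norm_num, Real.rpow_add (by positivity), Real.rpow_one,
        Real.sqrt_eq_rpow]
    rw [hgv, hpow, hc0, hk1, hk2, show 2 * b * α = 2 * (b * α) by ring,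
      Real.sqrt_mul (by norm_num)]
    have : √(b * α) ≠ 0 := (Real.sqrt_pos.2 (by positivity)).ne'
    have : √2 ≠ 0 := by positivity
    generalize √(b * α) = X at *
    generalize √2 = Y at *
    field_simp
    ring
  rw [hconst, ← mul_sub, norm_mul, Real.norm_of_nonneg (by positivity : 0 ≤ s ^ 4)]
  rw [Real.norm_of_nonneg (by norm_num : (0:ℝ) ≤ 2)]
  linarith
end

section
/- Let a, b, α > 0 and β ∈ ℝ, let ψ be a smooth real function on a neighborhood of 0 with ψ(0)=b, ψ'(0)=−α, ψ''(0)=2β, and define m(r) := ψ((a−r)²) for r near a; for ν < b close to b let R(ν) be the unique solution near a of m(R)=ν and φ(ν) := 2∫_{R(ν)}^{a} ν/(m(r)√(m(r)²−ν²)) dr. Then lim_{ν→b⁻} φ(ν) = π/√(2αb). -/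
open Set Asymptotics Filter Real


theorem aux_integrable :
    IntervalIntegrable (fun t : ℝ => 1 / Real.sqrt (1 - t ^ 2)) MeasureTheory.volume 0 1 ∧
    ∫ t in (0:ℝ)..1, 1 / Real.sqrt (1 - t ^ 2) = π / 2 := by
  have hd : ∀ x ∈ Ioo (0:ℝ) 1, HasDerivAt arcsin (1 / Real.sqrt (1 - x ^ 2)) x := by
    intro x hx
    exact hasDerivAt_arcsin (by linarith [hx.1]) (by linarith [hx.2])
  have hi : IntervalIntegrable (fun t : ℝ => 1 / Real.sqrt (1 - t ^ 2))
      MeasureTheory.volume 0 1 := by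
    rw [intervalIntegrable_iff_integrableOn_Ioc_of_le zero_le_one]
    apply intervalIntegral.integrableOn_deriv_of_nonneg continuous_arcsin.continuousOn hd
    intro x _
    positivity
  refine ⟨hi, ?_⟩
  rw [intervalIntegral.integral_eq_sub_of_hasDerivAt_of_le zero_le_one
    continuous_arcsin.continuousOn hd hi]
  simp

theorem aux_limit (b α : ℝ) (hb : 0 < b) (hα : 0 < α) (ψ : ℝ → ℝ) (δ : ℝ) (hδ : 0 < δ)
    (hc : ContinuousOn ψ (Ioo (-δ) δ)) (hs : HasStrictDerivAt ψ (-α) 0) (h0 : ψ 0 = b) :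
    Tendsto (fun s : ℝ => ∫ t in (0:ℝ)..1,
      s * (ψ (s ^ 2) / (ψ (s ^ 2 * t ^ 2) *
        Real.sqrt (ψ (s ^ 2 * t ^ 2) ^ 2 - ψ (s ^ 2) ^ 2))))
      (nhdsWithin 0 (Ioi 0)) (nhds (π / 2 / Real.sqrt (2 * α * b))) := by
  have hval : π / 2 / Real.sqrt (2 * α * b) =
      ∫ t in (0:ℝ)..1, 1 / Real.sqrt (2 * α * b) * (1 / Real.sqrt (1 - t ^ 2)) := by
    rw [intervalIntegral.integral_const_mul, aux_integrable.2]; ring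
  rw [hval]
  -- a neighbourhood with uniform control
  have hcont : ContinuousAt ψ 0 := hs.hasDerivAt.continuousAt
  have e1 : ∀ᶠ x in nhds (0:ℝ), b / 2 < ψ x ∧ ψ x < 2 * b := by
    have := hcont.tendsto
    rw [h0] at this
    exact (this.eventually (lt_mem_nhds (by linarith))).and
      (this.eventually (gt_mem_nhds (by linarith)))
  have e2 : ∀ᶠ p : ℝ × ℝ in nhds ((0:ℝ), (0:ℝ)),
      ‖ψ p.1 - ψ p.2 - (p.1 - p.2) * (-α)‖ ≤ α / 2 * ‖p.1 - p.2‖ := by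
    have h := hs.hasStrictFDerivAt.isLittleO.def (c := α / 2) (by linarith)
    simpa using h
  obtain ⟨η₁, hη₁, H1⟩ := Metric.eventually_nhds_iff.1 e1
  obtain ⟨η₂, hη₂, H2⟩ := Metric.eventually_nhds_iff.1 e2
  obtain ⟨η, hη, hηδ, hη1, hη2⟩ : ∃ η > 0, η ≤ δ ∧ η ≤ η₁ ∧ η ≤ η₂ :=
    ⟨min δ (min η₁ η₂), by positivity, by simp, by simp, by simp⟩
  have hsm : ∀ᶠ s : ℝ in nhdsWithin 0 (Ioi 0), 0 < s ∧ s ^ 2 < η := by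
    refine (eventually_mem_nhdsWithin (a := (0:ℝ)) (s := Ioi 0)).and
      (nhdsWithin_le_nhds ?_)
    have : Tendsto (fun s : ℝ => s ^ 2) (nhds 0) (nhds 0) := by
      simpa using (continuous_pow 2 (M := ℝ)).tendsto 0
    exact this.eventually (gt_mem_nhds hη)
  have key : ∀ x, 0 ≤ x → x < η → b / 2 < ψ x ∧ ψ x < 2 * b := by
    intro x h h'
    apply H1
    rw [Real.dist_eq, sub_zero, abs_of_nonneg h]; linarith
  have key2 : ∀ x y, 0 ≤ x → x ≤ y → y < η → α / 2 * (y - x) ≤ ψ x - ψ y := by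
    intro x y hx hxy hy
    have := @H2 (x, y) (by
      rw [Prod.dist_eq, Real.dist_eq, Real.dist_eq]
      simp only [sub_zero]
      rw [abs_of_nonneg hx, abs_of_nonneg (hx.trans hxy)]
      exact max_lt (by linarith) (by linarith))
    simp only [Real.norm_eq_abs] at this
    rw [abs_of_nonpos (show x - y ≤ 0 by linarith)] at this
    have := (abs_le.1 this).1
    nlinarith
  have t2 : ∀ t ∈ Ioc (0:ℝ) 1, t ^ 2 ≤ 1 := fun t ht => pow_le_one₀ ht.1.le ht.2
  apply intervalIntegral.tendsto_integral_filter_of_dominated_convergence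
    (fun t => 4 / Real.sqrt (α / 2 * b) * (1 / Real.sqrt (1 - t ^ 2)))
  · filter_upwards [hsm] with s ⟨hs0, hsη⟩
    rw [uIoc_of_le zero_le_one]
    have hm : AEMeasurable (fun t : ℝ => ψ (s ^ 2 * t ^ 2))
        (MeasureTheory.volume.restrict (Ioc (0:ℝ) 1)) := by
      apply ContinuousOn.aemeasurable _ measurableSet_Ioc
      apply hc.comp (by fun_prop)
      intro t ht
      have := t2 t ht
      have h3 : 0 ≤ s ^ 2 * t ^ 2 := by positivity
      constructor
      · linarith
      · nlinarith [sq_nonneg s]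
    apply AEMeasurable.aestronglyMeasurable
    exact (aemeasurable_const.div (hm.mul ((hm.pow_const 2).sub_const _).sqrt)).const_mul s
  · filter_upwards [hsm] with s ⟨hs0, hsη⟩
    refine Eventually.of_forall fun t ht => ?_
    rw [uIoc_of_le zero_le_one] at ht
    have ht2 := t2 t ht
    rcases ht.2.eq_or_lt with rfl | hlt
    · simp
    have hpos : 0 < 1 - t ^ 2 := by nlinarith [ht.1]
    have hxy : s ^ 2 * t ^ 2 ≤ s ^ 2 := by nlinarith [sq_nonneg s]
    have k1 := key (s ^ 2 * t ^ 2) (by positivity) (by linarith)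
    have k2 := key (s ^ 2) (by positivity) (by linarith)
    have k3 := key2 (s ^ 2 * t ^ 2) (s ^ 2) (by positivity) hxy hsη
    generalize ψ (s ^ 2 * t ^ 2) = M at *
    generalize ψ (s ^ 2) = N at *
    have hMN : s ^ 2 * ((α / 2 * b) * (1 - t ^ 2)) ≤ M ^ 2 - N ^ 2 := by
      have h5 : 0 ≤ α / 2 * (s ^ 2 - s ^ 2 * t ^ 2) := by
        apply mul_nonneg <;> linarith
      nlinarith
    have hsq := Real.sqrt_le_sqrt hMN
    rw [Real.sqrt_mul (by positivity), Real.sqrt_mul (by positivity),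
      Real.sqrt_sq hs0.le] at hsq
    have q1 : 0 < Real.sqrt (α / 2 * b) := Real.sqrt_pos.2 (by positivity)
    have q2 : 0 < Real.sqrt (1 - t ^ 2) := Real.sqrt_pos.2 hpos
    have hN : 0 < N := by linarith
    have hM : 0 < M := by linarith
    rw [Real.norm_of_nonneg (by positivity)]
    calc s * (N / (M * Real.sqrt (M ^ 2 - N ^ 2)))
        ≤ s * ((2 * b) / ((b / 2) * (s * (Real.sqrt (α / 2 * b) * Real.sqrt (1 - t ^ 2))))) := by
          gcongr
          · exact k2.2.le
          · exact k1.1.le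
      _ = _ := by field_simp; norm_num
  · exact aux_integrable.1.const_mul _
  · refine Eventually.of_forall fun t ht => ?_
    rw [uIoc_of_le zero_le_one] at ht
    rcases ht.2.eq_or_lt with rfl | hlt
    · simp
    have hpos : 0 < 1 - t ^ 2 := by nlinarith [ht.1]
    have hz : Tendsto (fun s : ℝ => s ^ 2) (nhdsWithin 0 (Ioi 0)) (nhds 0) := by
      have : Tendsto (fun s : ℝ => s ^ 2) (nhds 0) (nhds 0) := by
        simpa using (continuous_pow 2 (M := ℝ)).tendsto 0
      exact this.mono_left nhdsWithin_le_nhds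
    have hz' : Tendsto (fun s : ℝ => s ^ 2 * t ^ 2) (nhdsWithin 0 (Ioi 0)) (nhds 0) := by
      simpa using hz.mul_const (t ^ 2)
    have hN : Tendsto (fun s : ℝ => ψ (s ^ 2)) (nhdsWithin 0 (Ioi 0)) (nhds b) := by
      rw [← h0]; exact hcont.tendsto.comp hz
    have hM : Tendsto (fun s : ℝ => ψ (s ^ 2 * t ^ 2)) (nhdsWithin 0 (Ioi 0)) (nhds b) := by
      rw [← h0]; exact hcont.tendsto.comp hz'
    have hD : ∀ c : ℝ, HasDerivAt (fun x => ψ (x * c)) (-α * c) 0 := by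
      intro c
      have h1 : HasDerivAt (fun x : ℝ => x * c) c 0 := by
        simpa using (hasDerivAt_id (0:ℝ)).mul_const c
      have h2 : HasDerivAt ψ (-α) ((fun x : ℝ => x * c) 0) := by simpa using hs.hasDerivAt
      exact h2.comp (0:ℝ) h1
    have hQ : Tendsto (fun s : ℝ => (ψ (s ^ 2 * t ^ 2) - ψ (s ^ 2)) / s ^ 2)
        (nhdsWithin 0 (Ioi 0)) (nhds (α * (1 - t ^ 2))) := by
      have h1 := (hD (t ^ 2)).sub (hD 1)
      rw [hasDerivAt_iff_tendsto_slope] at h1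
      have hz2 : Tendsto (fun s : ℝ => s ^ 2) (nhdsWithin 0 (Ioi 0)) (nhdsWithin 0 {0}ᶜ) := by
        rw [tendsto_nhdsWithin_iff]
        refine ⟨hz, ?_⟩
        filter_upwards [hsm] with s hs
        have := hs.1
        simp [this.ne']
      have h2 := h1.comp hz2
      have e : -α * t ^ 2 - -α * 1 = α * (1 - t ^ 2) := by ring
      rw [e] at h2
      refine h2.congr fun s => ?_
      simp [slope_def_field]
    have hlim : Tendsto (fun s : ℝ => ψ (s ^ 2) / (ψ (s ^ 2 * t ^ 2) *
        Real.sqrt ((ψ (s ^ 2 * t ^ 2) - ψ (s ^ 2)) / s ^ 2 * (ψ (s ^ 2 * t ^ 2) + ψ (s ^ 2)))))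
        (nhdsWithin 0 (Ioi 0))
        (nhds (b / (b * Real.sqrt (α * (1 - t ^ 2) * (b + b))))) := by
      apply hN.div (hM.mul (hQ.mul (hM.add hN)).sqrt)
      have : 0 < Real.sqrt (α * (1 - t ^ 2) * (b + b)) := Real.sqrt_pos.2 (by positivity)
      positivity
    have e : b / (b * Real.sqrt (α * (1 - t ^ 2) * (b + b))) =
        1 / Real.sqrt (2 * α * b) * (1 / Real.sqrt (1 - t ^ 2)) := by
      rw [show α * (1 - t ^ 2) * (b + b) = (2 * α * b) * (1 - t ^ 2) by ring,
        Real.sqrt_mul (by positivity)]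
      field_simp
    rw [e] at hlim
    refine hlim.congr' ?_
    filter_upwards [hsm] with s ⟨hs0, _⟩
    rw [show (ψ (s ^ 2 * t ^ 2) - ψ (s ^ 2)) / s ^ 2 * (ψ (s ^ 2 * t ^ 2) + ψ (s ^ 2)) =
      (ψ (s ^ 2 * t ^ 2) ^ 2 - ψ (s ^ 2) ^ 2) / s ^ 2 by ring,
      Real.sqrt_div' _ (by positivity), Real.sqrt_sq hs0.le]
    rw [mul_div_assoc', div_div_eq_mul_div]
    ring

/-- The limit of the cut-locus angle function: `lim_{ν→b⁻} φ(ν) = π/√(2αb)`. -/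
theorem phi_limit
    (a b α : ℝ) (ha : 0 < a) (hb : 0 < b) (hα : 0 < α) (β : ℝ)
    (ψ : ℝ → ℝ) (δ : ℝ) (hδ : 0 < δ) (hψ : ContDiffOn ℝ (⊤ : ℕ∞) ψ (Ioo (-δ) δ))
    (hψ0 : ψ 0 = b) (hψ1 : deriv ψ 0 = -α) (hψ2 : deriv (deriv ψ) 0 = 2 * β)
    (m : ℝ → ℝ) (hm : ∀ r, m r = ψ ((a - r) ^ 2))
    (R : ℝ → ℝ)
    (hRlt : ∀ᶠ ν in nhdsWithin b (Iio b), R ν < a)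
    (hRm : ∀ᶠ ν in nhdsWithin b (Iio b), m (R ν) = ν)
    (hRtend : Tendsto R (nhdsWithin b (Iio b)) (nhds a))
    (φ : ℝ → ℝ)
    (hφ : ∀ ν, φ ν = 2 * ∫ r in R ν..a, ν / (m r * Real.sqrt (m r ^ 2 - ν ^ 2))) :
    Tendsto φ (nhdsWithin b (Iio b)) (nhds (π / Real.sqrt (2 * α * b))) := by
  have hnb : Ioo (-δ) δ ∈ nhds (0:ℝ) := Ioo_mem_nhds (by linarith) hδ
  have hstr : HasStrictDerivAt ψ (-α) 0 := by
    rw [← hψ1]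
    exact (hψ.contDiffAt hnb).hasStrictDerivAt (by simp)
  have hlim := aux_limit b α hb hα ψ δ hδ hψ.continuousOn hstr hψ0
  have hs : Tendsto (fun ν => a - R ν) (nhdsWithin b (Iio b)) (nhdsWithin 0 (Ioi 0)) := by
    rw [tendsto_nhdsWithin_iff]
    refine ⟨by simpa using hRtend.const_sub a, ?_⟩
    filter_upwards [hRlt] with ν h
    simpa using h
  have h := (hlim.comp hs).const_mul 2
  have e : 2 * (π / 2 / Real.sqrt (2 * α * b)) = π / Real.sqrt (2 * α * b) := by ring
  rw [e] at h
  refine h.congr' ?_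
  filter_upwards [hRlt, hRm] with ν h1 h2
  have hne : a - R ν ≠ 0 := by linarith
  have h3 : ψ ((a - R ν) ^ 2) = ν := by rw [← hm, h2]
  have := intervalIntegral.integral_comp_sub_mul
    (fun r => ν / (m r * Real.sqrt (m r ^ 2 - ν ^ 2))) hne a (a := 0) (b := 1)
  rw [hφ]
  simp only [Function.comp, h3]
  rw [intervalIntegral.integral_const_mul]
  have e2 : a - (a - R ν) * 1 = R ν := by ring
  rw [e2, mul_zero, sub_zero, smul_eq_mul, eq_inv_mul_iff_mul_eq₀ hne] at this
  rw [← this]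
  congr 3
  ext t
  simp only [hm]
  rw [show (a - (a - (a - R ν) * t)) ^ 2 = (a - R ν) ^ 2 * t ^ 2 by ring]
end

section
/- Let a, b, α > 0 and β ∈ ℝ, let ψ be a smooth real function on a neighborhood of 0 with ψ(0)=b, ψ'(0)=−α, ψ''(0)=2β. Define q(x,y) := (ψ(x²)−ψ(y²))/(y²−x²) for x² ≠ y² and q(x,y) := −ψ'(x²) for x² = y², and define f(x,y) := 2ψ(y²) / ( ψ(x²) · √(ψ(x²)+ψ(y²)) · √(q(x,y)) ). Then f is smooth in a neighborhood of (0,0) and f(x,y) = √2/√(bα) + ((5α² + 2bβ)/(2√2 (bα)^{3/2})) x² + ((2bβ − 3α²)/(2√2 (bα)^{3/2})) y² + O(x⁴ + y⁴) as (x,y) → (0,0). -/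
open Set Asymptotics Filter Real

theorem aux_param_integral (n : ℕ) : ∀ {F : Type} [NormedAddCommGroup F] [NormedSpace ℝ F] [CompleteSpace F]
    (H : (ℝ × ℝ) × ℝ → F), ContDiff ℝ (⊤ : ℕ∞) H →
    ContDiff ℝ n (fun p : ℝ × ℝ => ∫ u in (0:ℝ)..1, H (p, u)) := by
  induction n with
  | zero =>
    intro F _ _ _ H hH
    have hc := hH.continuous
    simp only [Nat.cast_zero, contDiff_zero]
    exact intervalIntegral.continuous_parametric_intervalIntegral_of_continuous' (f := fun p u => H (p, u)) hc 0 1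
  | succ n ih =>
    intro F _ _ _ H hH
    have hH' : ContDiff ℝ (⊤ : ℕ∞) (fun z : (ℝ × ℝ) × ℝ => (fderiv ℝ H z).comp (ContinuousLinearMap.inl ℝ (ℝ × ℝ) ℝ)) := by
      have : ContDiff ℝ (⊤ : ℕ∞) (fderiv ℝ H) := hH.fderiv_right (by exact_mod_cast le_rfl)
      exact this.clm_comp contDiff_const
    refine contDiff_succ_iff_hasFDerivAt.2 ⟨_, ih _ hH', fun p₀ => ?_⟩
    have hK : IsCompact ((Metric.closedBall p₀ 1) ×ˢ (Icc (0:ℝ) 1)) :=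
      (isCompact_closedBall _ _).prod isCompact_Icc
    obtain ⟨C, hC⟩ := hK.exists_bound_of_continuousOn hH'.continuous.continuousOn
    refine (intervalIntegral.hasFDerivAt_integral_of_dominated_of_fderiv_le
      (s := Metric.closedBall p₀ 1) (bound := fun _ => C) (F := fun p u => H (p, u))
      (F' := fun p u => (fderiv ℝ H (p, u)).comp (ContinuousLinearMap.inl ℝ (ℝ × ℝ) ℝ))
      (Metric.closedBall_mem_nhds _ one_pos) ?_ ?_ ?_ ?_ ?_ ?_)
    · refine Eventually.of_forall fun p => Continuous.aestronglyMeasurable ?_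
      exact hH.continuous.comp (by fun_prop)
    · exact (hH.continuous.comp (by fun_prop : Continuous fun u : ℝ => (p₀, u))).intervalIntegrable _ _
    · exact (hH'.continuous.comp (by fun_prop : Continuous fun u : ℝ => (p₀, u))).aestronglyMeasurable
    · refine Eventually.of_forall fun u hu p hp => hC (p, u) ⟨hp, ?_⟩
      rw [uIoc_of_le zero_le_one] at hu
      exact ⟨hu.1.le, hu.2⟩
    · exact intervalIntegrable_const
    · refine Eventually.of_forall fun u hu p hp => ?_
      have h1 : HasFDerivAt H (fderiv ℝ H (p, u)) (p, u) :=
        (hH.differentiable (by simp) _).hasFDerivAt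
      exact h1.comp p (hasFDerivAt_prodMk_left p u)

theorem aux_taylor_s9 (F : ℝ × ℝ → ℝ) (L : ℝ × ℝ →L[ℝ] ℝ) (hF : ContDiffAt ℝ 2 F 0)
    (hL : HasFDerivAt F L 0) :
    (fun p => F p - F 0 - L p) =O[nhds 0] (fun p : ℝ × ℝ => ‖p‖ ^ 2) := by
  have h1 : ContDiffAt ℝ 1 (fderiv ℝ F) 0 := hF.fderiv_right (by norm_num)
  obtain ⟨K, t, ht, hK⟩ := h1.exists_lipschitzOnWith
  have hd : ∀ᶠ p in nhds (0 : ℝ × ℝ), DifferentiableAt ℝ F p := by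
    filter_upwards [hF.eventually (by simp)] with p hp
    exact hp.differentiableAt (by simp)
  obtain ⟨r, hr, hrs⟩ := Metric.mem_nhds_iff.1 (Filter.inter_mem ht hd)
  refine IsBigO.of_bound K ?_
  filter_upwards [Metric.ball_mem_nhds (0 : ℝ × ℝ) hr] with p hp
  have hp' : ‖p‖ < r := by simpa using hp
  have hsub : Metric.closedBall (0 : ℝ × ℝ) ‖p‖ ⊆ Metric.ball 0 r :=
    Metric.closedBall_subset_ball hp'
  have := (convex_closedBall (0 : ℝ × ℝ) ‖p‖).norm_image_sub_le_of_norm_hasFDerivWithin_le'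
    (f := F) (f' := fderiv ℝ F) (φ := L) (C := K * ‖p‖) (x := 0) (y := p)
    (fun x hx => (hrs (hsub hx)).2.hasFDerivAt.hasFDerivWithinAt) ?_ (by simp) (by simp)
  · rw [sub_zero] at this
    rw [norm_pow, norm_norm]
    calc _ ≤ _ := this
      _ = _ := by ring
  · intro x hx
    rw [← hL.fderiv]
    have h2 := hK.dist_le_mul x (hrs (hsub hx)).1 0 (mem_of_mem_nhds ht)
    rw [dist_eq_norm, dist_zero_right] at h2
    refine h2.trans ?_
    have : ‖x‖ ≤ ‖p‖ := by simpa using hx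
    gcongr

theorem aux_extend (ψ : ℝ → ℝ) (δ : ℝ) (hδ : 0 < δ) (hψ : ContDiffOn ℝ (⊤ : ℕ∞) ψ (Ioo (-δ) δ)) :
    ∃ Ψ : ℝ → ℝ, ContDiff ℝ (⊤ : ℕ∞) Ψ ∧ Ψ =ᶠ[nhds 0] ψ := by
  let χ : ContDiffBump (0 : ℝ) := ⟨δ / 4, δ / 2, by linarith, by linarith⟩
  refine ⟨fun x => χ x * ψ x, ?_, ?_⟩
  · rw [contDiff_iff_contDiffAt]
    intro x
    by_cases hx : x ∈ Ioo (-δ) δ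
    · exact χ.contDiff.contDiffAt.mul (hψ.contDiffAt (Ioo_mem_nhds hx.1 hx.2))
    · have h0 : x ∉ tsupport χ := by
        rw [χ.tsupport_eq]
        intro h
        apply hx
        have h' : |x| ≤ δ / 2 := by simpa using h
        rw [abs_le] at h'
        constructor <;> linarith [h'.1, h'.2]
      rw [notMem_tsupport_iff_eventuallyEq] at h0
      refine (contDiffAt_const (c := (0 : ℝ))).congr_of_eventuallyEq ?_
      filter_upwards [h0] with y hy
      simp [hy]
  · filter_upwards [χ.eventuallyEq_one] with y hy
    simp [hy]

theorem aux_hadamard (Ψ : ℝ → ℝ) (hΨ : ContDiff ℝ (⊤ : ℕ∞) Ψ) :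
    ∃ Q : ℝ × ℝ → ℝ, ContDiff ℝ (⊤ : ℕ∞) Q ∧
      (∀ s t, s ≠ t → Q (s, t) = (Ψ s - Ψ t) / (t - s)) ∧ ∀ s, Q (s, s) = - deriv Ψ s := by
  have hd : ContDiff ℝ (⊤ : ℕ∞) (deriv Ψ) := (contDiff_infty_iff_deriv.1 hΨ).2
  refine ⟨fun p => - ∫ u in (0:ℝ)..1, deriv Ψ (p.2 + (p.1 - p.2) * u), ?_, ?_, ?_⟩
  · apply ContDiff.neg
    rw [contDiff_iff_forall_nat_le]
    intro m _
    exact aux_param_integral m (fun z : (ℝ × ℝ) × ℝ => deriv Ψ (z.1.2 + (z.1.1 - z.1.2) * z.2))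
      (hd.comp (by fun_prop))
  · intro s t hst
    have h1 := intervalIntegral.mul_integral_comp_add_mul (a := 0) (b := 1) (f := deriv Ψ) (s - t) t
    rw [intervalIntegral.integral_deriv_eq_sub
      (fun x _ => (hΨ.differentiable (by simp)) x) (hd.continuous.intervalIntegrable _ _)] at h1
    have h2 : t + (s - t) * 1 = s := by ring
    have h3 : t + (s - t) * 0 = t := by ring
    rw [h2, h3] at h1
    have h4 : t - s ≠ 0 := sub_ne_zero.2 hst.symm
    rw [eq_div_iff h4, ← h1]
    ring
  · intro s
    simp

theorem integrand_expansion
    (a b α : ℝ) (ha : 0 < a) (hb : 0 < b) (hα : 0 < α) (β : ℝ)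
    (ψ : ℝ → ℝ) (δ : ℝ) (hδ : 0 < δ) (hψ : ContDiffOn ℝ (⊤ : ℕ∞) ψ (Ioo (-δ) δ))
    (hψ0 : ψ 0 = b) (hψ1 : deriv ψ 0 = -α) (hψ2 : deriv (deriv ψ) 0 = 2 * β)
    (q : ℝ × ℝ → ℝ)
    (hq_off : ∀ x y : ℝ, x ^ 2 ≠ y ^ 2 → q (x, y) = (ψ (x ^ 2) - ψ (y ^ 2)) / (y ^ 2 - x ^ 2))
    (hq_diag : ∀ x y : ℝ, x ^ 2 = y ^ 2 → q (x, y) = -(deriv ψ (x ^ 2)))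
    (f : ℝ × ℝ → ℝ)
    (hf : ∀ x y : ℝ, f (x, y) =
      2 * ψ (y ^ 2) / (ψ (x ^ 2) * Real.sqrt (ψ (x ^ 2) + ψ (y ^ 2)) * Real.sqrt (q (x, y)))) :
    (∃ U ∈ nhds ((0 : ℝ), (0 : ℝ)), ContDiffOn ℝ (⊤ : ℕ∞) f U) ∧
      (fun p : ℝ × ℝ => f p -
          (Real.sqrt 2 / Real.sqrt (b * α) +
            (5 * α ^ 2 + 2 * b * β) / (2 * Real.sqrt 2 * (b * α) ^ ((3:ℝ)/2)) * p.1 ^ 2 +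
            (2 * b * β - 3 * α ^ 2) / (2 * Real.sqrt 2 * (b * α) ^ ((3:ℝ)/2)) * p.2 ^ 2))
        =O[nhds (0, 0)] (fun p : ℝ × ℝ => p.1 ^ 4 + p.2 ^ 4) := by
  obtain ⟨Ψ, hΨ, hΨψ⟩ := aux_extend ψ δ hδ hψ
  obtain ⟨Q, hQ, hQoff, hQdiag⟩ := aux_hadamard Ψ hΨ
  have hd : ContDiff ℝ (⊤ : ℕ∞) (deriv Ψ) := (contDiff_infty_iff_deriv.1 hΨ).2
  have hΨ0 : Ψ 0 = b := by rw [hΨψ.eq_of_nhds, hψ0]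
  have hΨ1 : HasDerivAt Ψ (-α) 0 := by
    rw [← hψ1, ← hΨψ.deriv_eq]
    exact (hΨ.differentiable (by simp) 0).hasDerivAt
  have hΨ2 : HasDerivAt (deriv Ψ) (2 * β) 0 := by
    rw [← hψ2, ← hΨψ.deriv.deriv_eq]
    exact (hd.differentiable (by simp) 0).hasDerivAt
  have hQ0 : Q (0, 0) = α := by rw [hQdiag, hΨ1.deriv, neg_neg]
  have hQsymm : ∀ s t, Q (s, t) = Q (t, s) := by
    intro s t
    rcases eq_or_ne s t with rfl | h
    · rfl
    · rw [hQoff s t h, hQoff t s h.symm, ← neg_sub (Ψ t), ← neg_sub s t, neg_div_neg_eq]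
  have line1 : HasDerivAt (fun s : ℝ => (s, (0:ℝ))) ((1:ℝ), (0:ℝ)) 0 :=
    (hasDerivAt_id 0).prodMk (hasDerivAt_const 0 0)
  have line2 : HasDerivAt (fun s : ℝ => ((0:ℝ), s)) ((0:ℝ), (1:ℝ)) 0 :=
    (hasDerivAt_const 0 0).prodMk (hasDerivAt_id 0)
  have line3 : HasDerivAt (fun s : ℝ => (s, s)) ((1:ℝ), (1:ℝ)) 0 :=
    (hasDerivAt_id 0).prodMk (hasDerivAt_id 0)
  have hQd : HasFDerivAt Q (fderiv ℝ Q (0, 0)) (0, 0) :=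
    (hQ.differentiable (by simp) _).hasFDerivAt
  have hQ1' := hQd.comp_hasDerivAt_of_eq (0:ℝ) line1 rfl
  have hQ2' := hQd.comp_hasDerivAt_of_eq (0:ℝ) line2 rfl
  have hQ3' := hQd.comp_hasDerivAt_of_eq (0:ℝ) line3 rfl
  have e12 : fderiv ℝ Q (0, 0) (1, 0) = fderiv ℝ Q (0, 0) (0, 1) := by
    refine hQ1'.unique ?_
    convert hQ2' using 1
    funext s
    exact hQsymm s 0
  have e3 : fderiv ℝ Q (0, 0) (1, 1) = -(2 * β) := by
    refine hQ3'.unique ?_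
    convert hΨ2.neg using 1
    funext s
    exact hQdiag s
  have e4 : fderiv ℝ Q (0, 0) (1, 1) = fderiv ℝ Q (0, 0) (1, 0) + fderiv ℝ Q (0, 0) (0, 1) := by
    rw [← map_add]; simp
  have hQ1 : HasDerivAt (fun s => Q (s, 0)) (-β) 0 := by
    have : fderiv ℝ Q (0, 0) (1, 0) = -β := by linarith
    rw [this] at hQ1'
    exact hQ1'
  have hQ2 : HasDerivAt (fun s => Q (0, s)) (-β) 0 := by
    have : fderiv ℝ Q (0, 0) (0, 1) = -β := by linarith
    rw [this] at hQ2'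
    exact hQ2'
  let F : ℝ × ℝ → ℝ := fun z =>
    2 * Ψ z.2 / (Ψ z.1 * Real.sqrt (Ψ z.1 + Ψ z.2) * Real.sqrt (Q z))
  have hFz : ∀ z : ℝ × ℝ, 0 < Ψ z.1 → 0 < Ψ z.2 → 0 < Q z → ContDiffAt ℝ (⊤ : ℕ∞) F z := by
    intro z z1 z2 z3
    have h1 : ContDiffAt ℝ (⊤ : ℕ∞) (fun z : ℝ × ℝ => Ψ z.1) z :=
      (hΨ.comp contDiff_fst).contDiffAt
    have h2 : ContDiffAt ℝ (⊤ : ℕ∞) (fun z : ℝ × ℝ => Ψ z.2) z :=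
      (hΨ.comp contDiff_snd).contDiffAt
    refine (contDiffAt_const.mul h2).div ((h1.mul ((h1.add h2).sqrt ?_)).mul
      (hQ.contDiffAt.sqrt ?_)) ?_ <;> positivity
  have hFs : ContDiffAt ℝ (⊤ : ℕ∞) F (0, 0) :=
    hFz _ (by simpa only [hΨ0] using hb) (by simpa only [hΨ0] using hb) (by rwa [hQ0])
  have hfF : ∀ᶠ p in nhds ((0:ℝ), (0:ℝ)), f p = F (p.1 ^ 2, p.2 ^ 2) := by
    have hev : ∀ᶠ s in nhds (0:ℝ), Ψ s = ψ s ∧ deriv Ψ s = deriv ψ s := hΨψ.and hΨψ.deriv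
    have t1 : Tendsto (fun p : ℝ × ℝ => p.1 ^ 2) (nhds (0, 0)) (nhds 0) := by
      have : Continuous (fun p : ℝ × ℝ => p.1 ^ 2) := by fun_prop
      simpa using this.tendsto (0, 0)
    have t2 : Tendsto (fun p : ℝ × ℝ => p.2 ^ 2) (nhds (0, 0)) (nhds 0) := by
      have : Continuous (fun p : ℝ × ℝ => p.2 ^ 2) := by fun_prop
      simpa using this.tendsto (0, 0)
    filter_upwards [t1.eventually hev, t2.eventually hev] with p h1 h2
    obtain ⟨x, y⟩ := p
    simp only at h1 h2
    have hqQ : q (x, y) = Q (x ^ 2, y ^ 2) := by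
      by_cases h : x ^ 2 = y ^ 2
      · rw [hq_diag x y h, ← h, hQdiag, h1.2]
      · rw [hq_off x y h, hQoff _ _ h, h1.1, h2.1]
    simp only [F]
    rw [hf, hqQ, h1.1, h2.1]
  have hsq : ContDiff ℝ (⊤ : ℕ∞) (fun p : ℝ × ℝ => (p.1 ^ 2, p.2 ^ 2)) := by fun_prop
  constructor
  · skip
    have c1 : Continuous (fun p : ℝ × ℝ => Ψ (p.1 ^ 2)) := hΨ.continuous.comp (by fun_prop)
    have c2 : Continuous (fun p : ℝ × ℝ => Ψ (p.2 ^ 2)) := hΨ.continuous.comp (by fun_prop)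
    have c3 : Continuous (fun p : ℝ × ℝ => Q (p.1 ^ 2, p.2 ^ 2)) :=
      hQ.continuous.comp (by fun_prop)
    have hev : ∀ᶠ p in nhds ((0:ℝ), (0:ℝ)), ContDiffAt ℝ (⊤ : ℕ∞) f p := by
      filter_upwards [hfF.eventually_nhds,
        c1.continuousAt.eventually (lt_mem_nhds (by simpa [hΨ0] using hb)),
        c2.continuousAt.eventually (lt_mem_nhds (by simpa [hΨ0] using hb)),
        c3.continuousAt.eventually (lt_mem_nhds (by simpa [hQ0] using hα))] with p h0 h1 h2 h3
      have h4 : ContDiffAt ℝ (⊤ : ℕ∞) (fun p : ℝ × ℝ => F (p.1 ^ 2, p.2 ^ 2)) p :=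
        ContDiffAt.comp (g := F) _ (hFz _ h1 h2 h3) hsq.contDiffAt
      exact h4.congr_of_eventuallyEq h0
    exact ⟨{p | ContDiffAt ℝ (⊤ : ℕ∞) f p}, hev, fun p hp => (show ContDiffAt ℝ (⊤ : ℕ∞) f p from hp).contDiffWithinAt⟩
  have hFd : HasFDerivAt F (fderiv ℝ F (0, 0)) (0, 0) :=
    (hFs.differentiableAt (by simp)).hasFDerivAt
  have hS : HasDerivAt Ψ (-α) 0 := hΨ1
  set r := Real.sqrt (b * α) with hr
  have hba : 0 < b * α := by positivity
  have hrpos : 0 < r := Real.sqrt_pos.2 hba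
  have hr2 : r ^ 2 = b * α := Real.sq_sqrt hba.le
  have h2p : 0 < Real.sqrt 2 := by positivity
  have h22 : Real.sqrt 2 ^ 2 = 2 := Real.sq_sqrt (by norm_num)
  have hr3 : (b * α) ^ ((3:ℝ)/2) = r ^ 3 := by
    rw [hr, Real.sqrt_eq_rpow, ← Real.rpow_natCast, ← Real.rpow_mul hba.le]
    norm_num
  have hsb : Real.sqrt (b + b) = Real.sqrt 2 * Real.sqrt b := by
    rw [← Real.sqrt_mul (by norm_num), two_mul]
  have hrr : r = Real.sqrt b * Real.sqrt α := Real.sqrt_mul hb.le _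
  have hBp : 0 < Real.sqrt b := Real.sqrt_pos.2 hb
  have hAp : 0 < Real.sqrt α := Real.sqrt_pos.2 hα
  have hB2 : Real.sqrt b ^ 2 = b := Real.sq_sqrt hb.le
  have hA2 : Real.sqrt α ^ 2 = α := Real.sq_sqrt hα.le
  have hF0 : F (0, 0) = Real.sqrt 2 / r := by
    simp only [F, hΨ0, hQ0, hsb, hrr]
    field_simp
    rw [h22]
  have hL1 : fderiv ℝ F (0, 0) (1, 0) = (5 * α ^ 2 + 2 * b * β) / (2 * Real.sqrt 2 * r ^ 3) := by
    refine (hFd.comp_hasDerivAt_of_eq (0:ℝ) line1 rfl).unique ?_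
    have hs := (hΨ1.add (hasDerivAt_const 0 b)).sqrt (by simp only [Pi.add_apply, hΨ0]; positivity)
    have hq := hQ1.sqrt (by rw [hQ0]; positivity)
    have := (hasDerivAt_const (0:ℝ) (2 * b)).div ((hΨ1.mul hs).mul hq)
      (by simp only [Pi.mul_apply, Pi.add_apply, hΨ0, hQ0]; positivity)
    refine (this.congr_of_eventuallyEq (Eventually.of_forall ?_)).congr_deriv ?_
    · intro s
      simp [F, hΨ0]
    · simp only [Pi.mul_apply, Pi.add_apply, hΨ0, hQ0, hsb, hrr]
      have e2 := hB2
      have e3 := hA2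
      generalize Real.sqrt b = B at *
      generalize Real.sqrt α = A at *
      generalize Real.sqrt 2 = T at *
      subst e2 e3
      field_simp
      grind
  have hL2 : fderiv ℝ F (0, 0) (0, 1) = (2 * b * β - 3 * α ^ 2) / (2 * Real.sqrt 2 * r ^ 3) := by
    refine (hFd.comp_hasDerivAt_of_eq (0:ℝ) line2 rfl).unique ?_
    have hs := ((hasDerivAt_const 0 b).add hΨ1).sqrt (by simp only [Pi.add_apply, hΨ0]; positivity)
    have hq := hQ2.sqrt (by rw [hQ0]; positivity)
    have := (hΨ1.const_mul 2).div (((hasDerivAt_const (0:ℝ) b).mul hs).mul hq)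
      (by simp only [Pi.mul_apply, Pi.add_apply, hΨ0, hQ0]; positivity)
    refine (this.congr_of_eventuallyEq (Eventually.of_forall ?_)).congr_deriv ?_
    · intro s
      simp [F, hΨ0]
    · simp only [Pi.mul_apply, Pi.add_apply, hΨ0, hQ0, hsb, hrr]
      have e2 := hB2
      have e3 := hA2
      generalize Real.sqrt b = B at *
      generalize Real.sqrt α = A at *
      generalize Real.sqrt 2 = T at *
      subst e2 e3
      field_simp
      grind
  have hT := aux_taylor_s9 F _ (contDiffAt_infty.1 hFs 2) hFd
  have ht : Tendsto (fun p : ℝ × ℝ => (p.1 ^ 2, p.2 ^ 2)) (nhds (0, 0)) (nhds 0) := by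
    have := hsq.continuous.tendsto (0, 0)
    simp only [ne_eq, OfNat.ofNat_ne_zero, not_false_eq_true, zero_pow] at this
    exact this
  have hT2 := hT.comp_tendsto ht
  have hB : (fun p : ℝ × ℝ => ‖((p.1 ^ 2, p.2 ^ 2) : ℝ × ℝ)‖ ^ 2) =O[nhds (0, 0)]
      (fun p : ℝ × ℝ => p.1 ^ 4 + p.2 ^ 4) := by
    refine IsBigO.of_bound 1 (Eventually.of_forall fun p => ?_)
    have h1 : 0 ≤ p.1 ^ 4 := by positivity
    have h2 : 0 ≤ p.2 ^ 4 := by positivity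
    rw [norm_pow, norm_norm, Prod.norm_mk, Real.norm_eq_abs, Real.norm_eq_abs, Real.norm_eq_abs,
      abs_of_nonneg (sq_nonneg p.1), abs_of_nonneg (sq_nonneg p.2), abs_of_nonneg (by positivity)]
    rcases max_choice (p.1 ^ 2) (p.2 ^ 2) with h | h <;> rw [h] <;> nlinarith
  refine IsBigO.congr' (hT2.trans hB) ?_ EventuallyEq.rfl
  filter_upwards [hfF] with p hp
  have hlin : fderiv ℝ F (0, 0) (p.1 ^ 2, p.2 ^ 2)
      = p.1 ^ 2 * fderiv ℝ F (0, 0) (1, 0) + p.2 ^ 2 * fderiv ℝ F (0, 0) (0, 1) := by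
    rw [← smul_eq_mul, ← smul_eq_mul, ← map_smul, ← map_smul, ← map_add]
    simp
  have hF0' : F 0 = Real.sqrt 2 / r := hF0
  simp only [Function.comp]
  rw [hp, hlin, hF0', hL1, hL2, hr3]
  ring
end

section
/- Let 0 < c ≤ b and define F(ν) := ∫_ν^b √( (b²−c²)/b² + c²/(b²−t²) ) dt for ν ∈ (0,b) (the integral converges since the integrand is O(1/√(b−t)) as t → b⁻). Then, as ν → b⁻, setting Z := √(b−ν), one has F(ν) = (√2·c/√b)·Z + ((4b² − 3c²)/(6√2 · b^{3/2} · c))·Z³ + O(Z⁵). -/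
open Set Asymptotics Filter Real

lemma aux_bound (b c A B s : ℝ) (hc : 0 < c) (hcb : c ≤ b) (hA : 0 < A) (hB : 0 ≤ B)
    (hA2 : A ^ 2 = c ^ 2 / (2 * b))
    (hAB : 2 * A * B = (b ^ 2 - c ^ 2) / b ^ 2 + c ^ 2 / (4 * b ^ 2))
    (hs : 0 ≤ s) (hsb : s ≤ b) :
    |√((b ^ 2 - c ^ 2) / b ^ 2 * s + c ^ 2 / (2 * b - s)) - (A + B * s)| ≤
      (c ^ 2 / (4 * b ^ 3) + B ^ 2) / A * s ^ 2 := by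
  have hb : 0 < b := hc.trans_le hcb
  have h2 : 0 < 2 * b - s := by linarith
  have he : 0 ≤ (b ^ 2 - c ^ 2) / b ^ 2 := div_nonneg (by nlinarith) (by positivity)
  set g := (b ^ 2 - c ^ 2) / b ^ 2 * s + c ^ 2 / (2 * b - s) with hg
  have hg0 : 0 ≤ g := by positivity
  have hsq := Real.sq_sqrt hg0
  have hh0 := Real.sqrt_nonneg g
  have hL : A ≤ A + B * s := by nlinarith [mul_nonneg hB hs]
  have key : g - (A + B * s) ^ 2 = s ^ 2 * (c ^ 2 / (4 * b ^ 2 * (2 * b - s)) - B ^ 2) := by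
    have : (A + B * s) ^ 2 = A ^ 2 + (2 * A * B) * s + B ^ 2 * s ^ 2 := by ring
    have h2n := h2.ne'
    have hw : (2 * b - s) * (2 * b - s)⁻¹ = 1 := mul_inv_cancel₀ h2n
    rw [this, hA2, hAB, hg]
    field_simp
    linear_combination 2 * c ^ 2 * (2 * b + s) * hw
  have hfrac : c ^ 2 / (4 * b ^ 2 * (2 * b - s)) ≤ c ^ 2 / (4 * b ^ 3) := by
    apply div_le_div_of_nonneg_left (by positivity) (by positivity)
    nlinarith [mul_nonneg (sq_nonneg b) (sub_nonneg.2 hsb)]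
  have hfrac0 : 0 ≤ c ^ 2 / (4 * b ^ 2 * (2 * b - s)) := by positivity
  have hprod : |√g - (A + B * s)| * (√g + (A + B * s)) =
      s ^ 2 * |c ^ 2 / (4 * b ^ 2 * (2 * b - s)) - B ^ 2| := by
    rw [← abs_of_nonneg (sq_nonneg s), ← abs_mul, ← key,
      ← abs_of_nonneg (show 0 ≤ √g + (A + B * s) by linarith), ← abs_mul]
    congr 1
    linear_combination hsq
  have habs : |c ^ 2 / (4 * b ^ 2 * (2 * b - s)) - B ^ 2| ≤ c ^ 2 / (4 * b ^ 3) + B ^ 2 := by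
    rw [abs_le]; constructor <;> nlinarith [sq_nonneg B]
  rw [div_mul_eq_mul_div, le_div_iff₀ hA]
  calc |√g - (A + B * s)| * A ≤ |√g - (A + B * s)| * (√g + (A + B * s)) := by
        gcongr; linarith
    _ = _ := hprod
    _ ≤ s ^ 2 * (c ^ 2 / (4 * b ^ 3) + B ^ 2) := by gcongr
    _ = _ := by ring

lemma aux_integral (b c A B ν : ℝ) (hc : 0 < c) (hcb : c ≤ b) (hA : 0 < A) (hB : 0 ≤ B)
    (hA2 : A ^ 2 = c ^ 2 / (2 * b))
    (hAB : 2 * A * B = (b ^ 2 - c ^ 2) / b ^ 2 + c ^ 2 / (4 * b ^ 2))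
    (hν : ν ∈ Ioo 0 b) :
    |(∫ t in ν..b, √((b ^ 2 - c ^ 2) / b ^ 2 + c ^ 2 / (b ^ 2 - t ^ 2))) -
      (2 * A * √(b - ν) + 2 / 3 * B * √(b - ν) ^ 3)| ≤
      (c ^ 2 / (4 * b ^ 3) + B ^ 2) / A * √(b - ν) ^ 5 := by
  have hb : 0 < b := hc.trans_le hcb
  obtain ⟨hν0, hνb⟩ := hν
  set d := b - ν with hd
  have hd0 : 0 < d := by linarith
  set h : ℝ → ℝ := fun s => √((b ^ 2 - c ^ 2) / b ^ 2 * s + c ^ 2 / (2 * b - s)) with hh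
  have e1 : (∫ t in ν..b, √((b ^ 2 - c ^ 2) / b ^ 2 + c ^ 2 / (b ^ 2 - t ^ 2))) =
      ∫ s in (0:ℝ)..d, s ^ (-(1/2) : ℝ) * h s := by
    have := intervalIntegral.integral_comp_sub_left (a := 0) (b := d)
      (fun t => √((b ^ 2 - c ^ 2) / b ^ 2 + c ^ 2 / (b ^ 2 - t ^ 2))) b
    rw [sub_zero, show b - d = ν by rw [hd]; ring] at this
    rw [← this, intervalIntegral.integral_of_le hd0.le, intervalIntegral.integral_of_le hd0.le]
    apply MeasureTheory.setIntegral_congr_fun measurableSet_Ioc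
    intro s hs
    have hs0 : 0 < s := hs.1
    have hs2 : 0 < 2 * b - s := by linarith [hs.2]
    simp only [hh]
    rw [Real.rpow_neg hs0.le, ← Real.sqrt_eq_rpow, ← Real.sqrt_inv,
      ← Real.sqrt_mul (by positivity)]
    congr 1
    rw [show b ^ 2 - (b - s) ^ 2 = s * (2 * b - s) by ring]
    field_simp
  have hi1 : IntervalIntegrable (fun s : ℝ => s ^ (-(1/2) : ℝ)) MeasureTheory.volume 0 d :=
    intervalIntegral.intervalIntegrable_rpow' (by norm_num)
  have hcont : ContinuousOn h (uIcc 0 d) := by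
    rw [uIcc_of_le hd0.le]
    intro s hs
    have hs2 : 2 * b - s ≠ 0 := by linarith [hs.2]
    apply ContinuousAt.continuousWithinAt
    simp only [hh]
    fun_prop (disch := assumption)
  have hcL : ContinuousOn (fun s : ℝ => A + B * s) (uIcc 0 d) := by fun_prop
  have i1 := hi1.mul_continuousOn hcont
  have i2 := hi1.mul_continuousOn hcL
  have hZ : √d = d ^ (1/2 : ℝ) := Real.sqrt_eq_rpow d
  have hZ3 : √d ^ 3 = d ^ (3/2 : ℝ) := by
    rw [hZ, ← Real.rpow_natCast, ← Real.rpow_mul hd0.le]; norm_num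
  have e2 : (∫ s in (0:ℝ)..d, s ^ (-(1/2) : ℝ) * (A + B * s)) =
      2 * A * √d + 2 / 3 * B * √d ^ 3 := by
    have : (∫ s in (0:ℝ)..d, s ^ (-(1/2) : ℝ) * (A + B * s)) =
        ∫ s in (0:ℝ)..d, (A * s ^ (-(1/2) : ℝ) + B * s ^ (1/2 : ℝ)) := by
      rw [intervalIntegral.integral_of_le hd0.le, intervalIntegral.integral_of_le hd0.le]
      apply MeasureTheory.setIntegral_congr_fun measurableSet_Ioc
      intro s hs
      have hs0 : 0 < s := hs.1
      have : s ^ (1/2 : ℝ) = s ^ (-(1/2) : ℝ) * s := by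
        rw [← Real.rpow_add_one hs0.ne']; norm_num
      simp only
      rw [this]; ring
    rw [this, intervalIntegral.integral_add (hi1.const_mul A)
      ((intervalIntegral.intervalIntegrable_rpow' (by norm_num)).const_mul B),
      intervalIntegral.integral_const_mul, intervalIntegral.integral_const_mul,
      integral_rpow (Or.inl (by norm_num)), integral_rpow (Or.inl (by norm_num)), hZ3, hZ]
    norm_num
    ring
  rw [e1, ← e2, ← intervalIntegral.integral_sub i1 i2, ← Real.norm_eq_abs]
  set K := (c ^ 2 / (4 * b ^ 3) + B ^ 2) / A with hK
  have hK0 : 0 ≤ K := by positivity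
  have := intervalIntegral.norm_integral_le_of_norm_le_const (a := 0) (b := d) (C := K * √d ^ 3)
    (f := fun s => s ^ (-(1/2) : ℝ) * h s - s ^ (-(1/2) : ℝ) * (A + B * s)) (by
      intro s hs
      rw [uIoc_of_le hd0.le] at hs
      have hs0 : 0 < s := hs.1
      rw [← mul_sub, norm_mul, Real.norm_eq_abs, Real.norm_eq_abs, abs_of_pos (by positivity)]
      have hb := aux_bound b c A B s hc hcb hA hB hA2 hAB hs0.le (by linarith [hs.2])
      have hp : s ^ (-(1/2) : ℝ) * s ^ 2 = s ^ (3/2 : ℝ) := by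
        rw [← Real.rpow_natCast, ← Real.rpow_add hs0]; norm_num
      calc _ ≤ s ^ (-(1/2) : ℝ) * (K * s ^ 2) := by gcongr
        _ = K * s ^ (3/2 : ℝ) := by rw [← hp]; ring
        _ ≤ K * √d ^ 3 := by
          rw [hZ3]; gcongr; exact hs.2)
  refine this.trans (le_of_eq ?_)
  rw [sub_zero, abs_of_pos hd0]
  nth_rewrite 2 [← Real.sq_sqrt hd0.le]
  ring

/-- Meridian arclength on an oblate ellipsoid with semi-axes `b, b, c`: with
`Z = √(b−ν)`, one has
`F(ν) = (√2 c/√b) Z + ((4b²−3c²)/(6√2 b^{3/2} c)) Z³ + O(Z⁵)` as `ν → b⁻`. -/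
theorem ellipsoid_arclength_expansion
    (b c : ℝ) (hc : 0 < c) (hcb : c ≤ b)
    (F : ℝ → ℝ)
    (hF : ∀ ν ∈ Ioo (0 : ℝ) b,
      F ν = ∫ t in ν..b, Real.sqrt ((b ^ 2 - c ^ 2) / b ^ 2 + c ^ 2 / (b ^ 2 - t ^ 2))) :
    (fun ν => F ν -
        (Real.sqrt 2 * c / Real.sqrt b * Real.sqrt (b - ν) +
          (4 * b ^ 2 - 3 * c ^ 2) / (6 * Real.sqrt 2 * b ^ ((3:ℝ)/2) * c)
            * Real.sqrt (b - ν) ^ 3))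
      =O[nhdsWithin b (Iio b)] (fun ν => Real.sqrt (b - ν) ^ 5) := by
  have hb : 0 < b := hc.trans_le hcb
  have h32 : b ^ ((3:ℝ)/2) = √b ^ 3 := by
    rw [Real.sqrt_eq_rpow, ← Real.rpow_natCast, ← Real.rpow_mul hb.le]; norm_num
  rw [h32]
  have hq : 0 < √b := Real.sqrt_pos.2 hb
  have hr : 0 < √(2:ℝ) := by positivity
  have hq2 : √b ^ 2 = b := Real.sq_sqrt hb.le
  have hr2 : √(2:ℝ) ^ 2 = 2 := Real.sq_sqrt (by norm_num)
  set q := √b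
  set r := √(2:ℝ)
  have hB0 : 0 ≤ 4 * b ^ 2 - 3 * c ^ 2 := by nlinarith
  have main := fun ν hν => aux_integral b c (r * c / q / 2)
    (3 / 2 * ((4 * b ^ 2 - 3 * c ^ 2) / (6 * r * q ^ 3 * c))) ν hc hcb (by positivity)
    (by positivity)
    (by rw [div_pow, div_pow, mul_pow, hr2, hq2]; field_simp)
    (by
      have hq4 : q ^ 4 = b ^ 2 := by rw [← hq2]; ring
      have : 2 * (r * c / q / 2) * (3 / 2 * ((4 * b ^ 2 - 3 * c ^ 2) / (6 * r * q ^ 3 * c)))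
        = (4 * b ^ 2 - 3 * c ^ 2) / (4 * q ^ 4) := by field_simp; ring
      rw [this, hq4]; field_simp; ring) hν
  apply IsBigO.of_bound
  filter_upwards [Ioo_mem_nhdsLT hb] with ν hν
  rw [hF ν hν, Real.norm_eq_abs, Real.norm_eq_abs, abs_of_nonneg (by positivity : 0 ≤ √(b - ν) ^ 5)]
  have := main ν hν
  convert this using 3
  ring
end

section
/- Let 0 < c ≤ b and define F(ν) := ∫_ν^b √( (b²−c²)/b² + c²/(b²−t²) ) dt for ν ∈ (0,b). Then, as ν → b⁻, ν = b − (b/(2c²))·F(ν)² + (b(4b² − 3c²)/(24c⁶))·F(ν)⁴ + O(F(ν)⁶). In particular, for the profile function m of the oblate ellipsoid of revolution with semi-axes b, b, c, defined by m(R) = ν where a − R = F(ν) and a := F(0⁺) is the quarter-meridian length, one has m(r) = b − α(a−r)² + β(a−r)⁴ + O((a−r)⁶) with α = b/(2c²) and β = b(4b²−3c²)/(24c⁶). -/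
open Set Asymptotics Filter Real

/-- meridian speed in the parametrization by the angle -/
noncomputable def spd (b c θ : ℝ) : ℝ := Real.sqrt (c ^ 2 + (b ^ 2 - c ^ 2) * Real.sin θ ^ 2)

/-- meridian arclength as a function of the angle -/
noncomputable def arcG (b c φ : ℝ) : ℝ := ∫ θ in (0 : ℝ)..φ, spd b c θ

lemma spd_cont (b c : ℝ) : Continuous (spd b c) := by
  unfold spd; fun_prop

lemma spd_ge (b c : ℝ) (hc : 0 < c) (hcb : c ≤ b) (θ : ℝ) : c ≤ spd b c θ := by
  apply Real.le_sqrt_of_sq_le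
  have : 0 ≤ (b ^ 2 - c ^ 2) * Real.sin θ ^ 2 := mul_nonneg (by nlinarith) (sq_nonneg _)
  linarith

lemma spd_bound (b c : ℝ) (hc : 0 < c) (hcb : c ≤ b) (θ : ℝ) (h0 : 0 ≤ θ) (h1 : θ ≤ 1) :
    |spd b c θ - (c + (b ^ 2 - c ^ 2) / (2 * c) * θ ^ 2)| ≤
      (((b ^ 2 - c ^ 2) + (b ^ 2 - c ^ 2) ^ 2 / (4 * c ^ 2)) / c) * θ ^ 4 := by
  have hk : 0 ≤ b ^ 2 - c ^ 2 := by nlinarith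
  have hg := spd_ge b c hc hcb θ
  have hsq : spd b c θ ^ 2 = c ^ 2 + (b ^ 2 - c ^ 2) * Real.sin θ ^ 2 :=
    Real.sq_sqrt (by positivity)
  generalize spd b c θ = g at *
  generalize b ^ 2 - c ^ 2 = k at *
  have hs1 : Real.sin θ ^ 2 ≤ θ ^ 2 := sq_le_sq' (by
    have := Real.sin_nonneg_of_nonneg_of_le_pi h0 (by linarith [Real.pi_gt_three]); linarith) (Real.sin_le h0)
  have hs2 : θ ^ 2 - θ ^ 4 ≤ Real.sin θ ^ 2 := by
    rcases h0.eq_or_lt with h | h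
    · subst h; simp
    · have h3 := Real.sin_gt_sub_cube h
      have h4 : 0 ≤ θ - θ ^ 3 / 6 := by nlinarith [pow_le_one₀ h0 h1 (n := 2), pow_pos h 3]
      have h5 : (θ - θ ^ 3 / 6) ^ 2 ≤ Real.sin θ ^ 2 := by gcongr
      nlinarith [pow_pos h 4, pow_pos h 6]
  set u := c + k / (2 * c) * θ ^ 2 with hu
  have huc : 0 ≤ u := by positivity
  have hu2 : u ^ 2 = c ^ 2 + k * θ ^ 2 + k ^ 2 / (4 * c ^ 2) * θ ^ 4 := by
    rw [hu]; field_simp; ring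
  have hprod : |g - u| * (g + u) ≤ (k + k ^ 2 / (4 * c ^ 2)) * θ ^ 4 := by
    have : |g - u| * (g + u) = |g ^ 2 - u ^ 2| := by
      rw [show g ^ 2 - u ^ 2 = (g - u) * (g + u) by ring, abs_mul,
        abs_of_nonneg (show 0 ≤ g + u by linarith)]
    rw [this, hsq, hu2, abs_le]
    have e1 := mul_le_mul_of_nonneg_left hs1 hk
    have e2 := mul_le_mul_of_nonneg_left hs2 hk
    have e3 : 0 ≤ k ^ 2 / (4 * c ^ 2) * θ ^ 4 := by positivity
    have e4 : 0 ≤ k * θ ^ 4 := by positivity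
    constructor <;> nlinarith
  rw [div_mul_eq_mul_div, le_div_iff₀ hc]
  refine le_trans ?_ hprod
  gcongr
  linarith

lemma arcG_bound (b c : ℝ) (hc : 0 < c) (hcb : c ≤ b) : ∃ C, ∀ φ, 0 ≤ φ → φ ≤ 1 →
    |arcG b c φ - (c * φ + (b ^ 2 - c ^ 2) / (6 * c) * φ ^ 3)| ≤ C * φ ^ 5 := by
  refine ⟨(((b ^ 2 - c ^ 2) + (b ^ 2 - c ^ 2) ^ 2 / (4 * c ^ 2)) / c) / 5, fun φ h0 h1 => ?_⟩
  have hi : ∫ θ in (0 : ℝ)..φ, (c + (b ^ 2 - c ^ 2) / (2 * c) * θ ^ 2) =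
      c * φ + (b ^ 2 - c ^ 2) / (6 * c) * φ ^ 3 := by
    rw [intervalIntegral.integral_add (by simp) (Continuous.intervalIntegrable (by fun_prop) _ _),
      intervalIntegral.integral_const_mul, integral_pow]
    simp
    field_simp
    ring
  rw [arcG, ← hi, ← intervalIntegral.integral_sub ((spd_cont b c).intervalIntegrable _ _)
    (Continuous.intervalIntegrable (by fun_prop) _ _)]
  have hb := intervalIntegral.norm_integral_le_of_norm_le (μ := MeasureTheory.volume) (a := 0) (b := φ) h0
    (f := fun θ => spd b c θ - (c + (b ^ 2 - c ^ 2) / (2 * c) * θ ^ 2))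
    (g := fun θ => (((b ^ 2 - c ^ 2) + (b ^ 2 - c ^ 2) ^ 2 / (4 * c ^ 2)) / c) * θ ^ 4)
    (Eventually.of_forall fun θ hθ => spd_bound b c hc hcb θ hθ.1.le (hθ.2.trans h1))
    (Continuous.intervalIntegrable (by fun_prop) _ _)
  rw [intervalIntegral.integral_const_mul, integral_pow] at hb
  rw [Real.norm_eq_abs] at hb
  refine hb.trans (le_of_eq ?_)
  norm_num
  ring

lemma arcG_ge (b c : ℝ) (hc : 0 < c) (hcb : c ≤ b) (φ : ℝ) (h0 : 0 ≤ φ) :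
    c * φ ≤ arcG b c φ := by
  have := intervalIntegral.integral_mono_on (μ := MeasureTheory.volume) h0
    (f := fun _ => c) (g := spd b c) (by simp)
    ((spd_cont b c).intervalIntegrable _ _) (fun x _ => spd_ge b c hc hcb x)
  simpa [mul_comm, arcG] using this

lemma cos_bound6 : ∃ C, ∀ φ : ℝ, 0 ≤ φ → φ ≤ 1 →
    |Real.cos φ - (1 - φ ^ 2 / 2 + φ ^ 4 / 24)| ≤ C * φ ^ 6 := by
  refine ⟨((Nat.succ 6 : ℝ) * ((Nat.factorial 6 : ℝ) * ((6 : ℕ) : ℝ))⁻¹), fun φ h0 h1 => ?_⟩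
  · have hn : ‖(φ : ℂ) * Complex.I‖ = φ := by simp [abs_of_nonneg h0]
    have h := Complex.exp_bound (x := φ * Complex.I) (by rw [hn]; exact h1) (n := 6) (by norm_num)
    rw [hn] at h
    have h2 := (Complex.abs_re_le_norm _).trans h
    have e : ∑ m ∈ Finset.range 6, ((φ : ℂ) * Complex.I) ^ m / (m.factorial : ℂ) =
        ((1 - φ ^ 2 / 2 + φ ^ 4 / 24 : ℝ) : ℂ) +
        ((φ - φ ^ 3 / 6 + φ ^ 5 / 120 : ℝ) : ℂ) * Complex.I := by
      have i2 := Complex.I_sq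
      have i3 : Complex.I ^ 3 = - Complex.I := Complex.I_pow_three
      have i4 : Complex.I ^ 4 = 1 := Complex.I_pow_four
      have i5 : Complex.I ^ 5 = Complex.I := by rw [pow_succ, i4, one_mul]
      simp only [Finset.sum_range_succ, Finset.sum_range_zero, Nat.factorial, mul_pow, i2, i3, i4, i5]
      push_cast
      ring
    rw [e, Complex.sub_re, Complex.exp_ofReal_mul_I_re, Complex.add_re, Complex.ofReal_re,
      Complex.re_ofReal_mul, Complex.I_re, mul_zero, add_zero] at h2
    exact h2.trans (le_of_eq (mul_comm _ _))

lemma err_bound (b c : ℝ) (hc : 0 < c) (hcb : c ≤ b) : ∃ K, ∀ φ, 0 < φ → φ ≤ 1 →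
    |b * Real.cos φ - (b - b / (2 * c ^ 2) * arcG b c φ ^ 2 +
          b * (4 * b ^ 2 - 3 * c ^ 2) / (24 * c ^ 6) * arcG b c φ ^ 4)| ≤ K * |arcG b c φ ^ 6| := by
  obtain ⟨C1, hC1⟩ := arcG_bound b c hc hcb
  obtain ⟨C2, hC2⟩ := cos_bound6
  let d := (b ^ 2 - c ^ 2) / (6 * c)
  let q : ℝ × ℝ × ℝ → ℝ := fun p =>
    d ^ 2 + 2 * c * p.2.1 + 2 * d * p.2.1 * p.1 ^ 2 + p.2.1 ^ 2 * p.1 ^ 4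
  let y : ℝ × ℝ × ℝ → ℝ := fun p => 2 * c * d + p.1 ^ 2 * q p
  let P : ℝ × ℝ × ℝ → ℝ := fun p => b * p.2.2 + b / (2 * c ^ 2) * q p
    - b * (4 * b ^ 2 - 3 * c ^ 2) / (24 * c ^ 6) * (2 * c ^ 2 * y p + p.1 ^ 2 * y p ^ 2)
  have hP : Continuous P := by fun_prop
  obtain ⟨K, hK⟩ := ((isCompact_Icc (a := (0 : ℝ)) (b := 1)).prod
    ((isCompact_Icc (a := -C1) (b := C1)).prod (isCompact_Icc (a := -C2) (b := C2)))).exists_bound_of_continuousOn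
    hP.continuousOn
  refine ⟨K / c ^ 6, fun φ h0 h1 => ?_⟩
  have hG := hC1 φ h0.le h1
  have hcos := hC2 φ h0.le h1
  have hge := arcG_ge b c hc hcb φ h0.le
  generalize arcG b c φ = G at *
  generalize Real.cos φ = z at *
  obtain ⟨ρ, hρ⟩ : ∃ ρ, G - (c * φ + (b ^ 2 - c ^ 2) / (6 * c) * φ ^ 3) = ρ * φ ^ 5 :=
    ⟨_, (div_mul_cancel₀ _ (by positivity)).symm⟩
  obtain ⟨σ, hσ⟩ : ∃ σ, z - (1 - φ ^ 2 / 2 + φ ^ 4 / 24) = σ * φ ^ 6 :=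
    ⟨_, (div_mul_cancel₀ _ (by positivity)).symm⟩
  rw [hρ, abs_mul, abs_of_pos (pow_pos h0 5), mul_le_mul_iff_left₀ (by positivity)] at hG
  rw [hσ, abs_mul, abs_of_pos (pow_pos h0 6), mul_le_mul_iff_left₀ (by positivity)] at hcos
  have hb := hK (φ, ρ, σ) ⟨⟨h0.le, h1⟩, abs_le.1 hG, abs_le.1 hcos⟩
  have hE : b * z - (b - b / (2 * c ^ 2) * G ^ 2 +
          b * (4 * b ^ 2 - 3 * c ^ 2) / (24 * c ^ 6) * G ^ 4) = φ ^ 6 * P (φ, ρ, σ) := by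
    have hG' : G = c * φ + (b ^ 2 - c ^ 2) / (6 * c) * φ ^ 3 + ρ * φ ^ 5 := by linarith
    have hz' : z = (1 - φ ^ 2 / 2 + φ ^ 4 / 24) + σ * φ ^ 6 := by linarith
    rw [hG', hz']
    simp only [P, y, q, d]
    field_simp
    ring
  rw [Real.norm_eq_abs] at hb
  rw [hE, abs_mul, abs_of_pos (pow_pos h0 6)]
  have hK0 : 0 ≤ K := (abs_nonneg _).trans hb
  have h6 : (c * φ) ^ 6 ≤ G ^ 6 := by gcongr
  calc φ ^ 6 * |P (φ, ρ, σ)| ≤ φ ^ 6 * K := by gcongr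
    _ = K / c ^ 6 * (c * φ) ^ 6 := by field_simp
    _ ≤ K / c ^ 6 * |G ^ 6| := by
      gcongr
      exact h6.trans (le_abs_self _)

lemma F_eq (b c : ℝ) (hc : 0 < c) (hcb : c ≤ b) (φ : ℝ) (h0 : 0 < φ) (h1 : φ ≤ 1) :
    (∫ t in (b * Real.cos φ)..b, Real.sqrt ((b ^ 2 - c ^ 2) / b ^ 2 + c ^ 2 / (b ^ 2 - t ^ 2)))
      = arcG b c φ := by
  have hb : 0 < b := hc.trans_le hcb
  have hpi := Real.pi_gt_three
  have hcos1 : Real.cos φ < 1 := by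
    have := Real.cos_lt_cos_of_nonneg_of_le_pi le_rfl (by linarith) h0
    simpa using this
  have himg : (fun θ => b * Real.cos θ) '' Ioo 0 φ = Ioo (b * Real.cos φ) b := by
    ext t
    constructor
    · rintro ⟨θ, ⟨ha, hb'⟩, rfl⟩
      have e1 := Real.cos_lt_cos_of_nonneg_of_le_pi le_rfl (by linarith) ha
      have e2 := Real.cos_lt_cos_of_nonneg_of_le_pi ha.le (by linarith) hb'
      rw [Real.cos_zero] at e1
      constructor
      · show b * Real.cos φ < b * Real.cos θ
        gcongr
      · show b * Real.cos θ < b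
        nlinarith
    · rintro ⟨ha, hb'⟩
      have hcont : ContinuousOn (fun θ => b * Real.cos θ) (Icc 0 φ) := by fun_prop
      have := intermediate_value_Ioo' h0.le hcont
      apply this
      simpa using ⟨ha, hb'⟩
  have hinj : InjOn (fun θ => b * Real.cos θ) (Ioo 0 φ) := by
    intro x hx y hy hxy
    have : Real.cos x = Real.cos y := mul_left_cancel₀ hb.ne' hxy
    exact Real.injOn_cos ⟨hx.1.le, by linarith [hx.2]⟩ ⟨hy.1.le, by linarith [hy.2]⟩ this
  have key := MeasureTheory.integral_image_eq_integral_abs_deriv_smul (s := Ioo 0 φ)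
    (f := fun θ => b * Real.cos θ) (f' := fun θ => b * (-Real.sin θ)) measurableSet_Ioo
    (fun x _ => ((Real.hasDerivAt_cos x).const_mul b).hasDerivWithinAt) hinj
    (fun t => Real.sqrt ((b ^ 2 - c ^ 2) / b ^ 2 + c ^ 2 / (b ^ 2 - t ^ 2)))
  rw [himg] at key
  rw [arcG, intervalIntegral.integral_of_le (by nlinarith), intervalIntegral.integral_of_le h0.le,
    MeasureTheory.integral_Ioc_eq_integral_Ioo, MeasureTheory.integral_Ioc_eq_integral_Ioo, key]
  apply MeasureTheory.setIntegral_congr_fun measurableSet_Ioo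
  intro θ hθ
  have hs : 0 < Real.sin θ := Real.sin_pos_of_pos_of_lt_pi hθ.1 (by linarith [hθ.2])
  have hbs : 0 < b * Real.sin θ := by positivity
  simp only [smul_eq_mul, spd, mul_neg, abs_neg, abs_of_pos hbs]
  rw [← Real.sqrt_sq hbs.le, ← Real.sqrt_mul (by positivity)]
  congr 1
  have : b ^ 2 - (b * Real.cos θ) ^ 2 = (b * Real.sin θ) ^ 2 := by
    rw [mul_pow, mul_pow, Real.sin_sq]; ring
  rw [this]
  field_simp
  ring

/-- Inverting the meridian arclength on an oblate ellipsoid with semi-axes `b, b, c`: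
`ν = b − (b/(2c²)) F(ν)² + (b(4b²−3c²)/(24c⁶)) F(ν)⁴ + O(F(ν)⁶)` as `ν → b⁻`; in
particular the profile function `m` (with `m(a − F(ν)) = ν`, `a` the quarter-meridian
length) satisfies `m(r) = b − α(a−r)² + β(a−r)⁴ + O((a−r)⁶)` with `α = b/(2c²)` and
`β = b(4b²−3c²)/(24c⁶)`. -/
theorem ellipsoid_profile_expansion
    (b c : ℝ) (hc : 0 < c) (hcb : c ≤ b)
    (F : ℝ → ℝ)
    (hF : ∀ ν ∈ Ioo (0 : ℝ) b,
      F ν = ∫ t in ν..b, Real.sqrt ((b ^ 2 - c ^ 2) / b ^ 2 + c ^ 2 / (b ^ 2 - t ^ 2)))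
    (a : ℝ) (haF : Tendsto F (nhdsWithin 0 (Ioi 0)) (nhds a))
    (m : ℝ → ℝ) (hmF : ∀ ν ∈ Ioo (0 : ℝ) b, m (a - F ν) = ν) :
    ((fun ν => ν -
        (b - b / (2 * c ^ 2) * F ν ^ 2 +
          b * (4 * b ^ 2 - 3 * c ^ 2) / (24 * c ^ 6) * F ν ^ 4))
      =O[nhdsWithin b (Iio b)] (fun ν => F ν ^ 6)) ∧
    ((fun r => m r -
        (b - b / (2 * c ^ 2) * (a - r) ^ 2 +
          b * (4 * b ^ 2 - 3 * c ^ 2) / (24 * c ^ 6) * (a - r) ^ 4))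
      =O[nhdsWithin a (Iio a)] (fun r => (a - r) ^ 6)) := by
  obtain ⟨K, hK⟩ := err_bound b c hc hcb
  have hb : 0 < b := hc.trans_le hcb
  have hpi := Real.pi_gt_three
  have hmem : ∀ φ, 0 < φ → φ ≤ 1 → b * Real.cos φ ∈ Ioo (0 : ℝ) b := by
    intro φ h0 h1
    have e1 := Real.cos_lt_cos_of_nonneg_of_le_pi le_rfl (by linarith) h0
    rw [Real.cos_zero] at e1
    have e2 : 0 < Real.cos φ := Real.cos_pos_of_mem_Ioo ⟨by linarith, by linarith⟩
    exact ⟨by positivity, by nlinarith⟩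
  have hFG : ∀ φ, 0 < φ → φ ≤ 1 → F (b * Real.cos φ) = arcG b c φ := fun φ h0 h1 => by
    rw [hF _ (hmem φ h0 h1), F_eq b c hc hcb φ h0 h1]
  constructor
  · apply IsBigO.of_bound K
    have hlt : b * Real.cos 1 < b := (hmem 1 one_pos le_rfl).2
    filter_upwards [Ioo_mem_nhdsLT hlt] with ν hν
    have hcont : ContinuousOn (fun θ => b * Real.cos θ) (Icc 0 1) := by fun_prop
    obtain ⟨φ, hφ, rfl⟩ := intermediate_value_Ioo' zero_le_one hcont
      (show ν ∈ Ioo (b * Real.cos 1) (b * Real.cos 0) by simpa using hν)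
    simp only
    rw [hFG φ hφ.1 hφ.2.le]
    exact hK φ hφ.1 hφ.2.le
  · apply IsBigO.of_bound K
    have h1 := arcG_ge b c hc hcb 1 zero_le_one
    have hlt : a - arcG b c 1 < a := by linarith
    filter_upwards [Ioo_mem_nhdsLT hlt] with r hr
    have hcont : ContinuousOn (arcG b c) (Icc 0 1) :=
      (intervalIntegral.continuous_primitive
        (fun x y => (spd_cont b c).intervalIntegrable x y) 0).continuousOn
    obtain ⟨φ, hφ, hφr⟩ := intermediate_value_Ioo zero_le_one hcont
      (show a - r ∈ Ioo (arcG b c 0) (arcG b c 1) from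
        ⟨by simp only [arcG, intervalIntegral.integral_same]; linarith [hr.2], by linarith [hr.1]⟩)
    have hm := hmF _ (hmem φ hφ.1 hφ.2.le)
    rw [hFG φ hφ.1 hφ.2.le, hφr, sub_sub_cancel] at hm
    rw [hm, ← hφr]
    exact hK φ hφ.1 hφ.2.le
end
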